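/- Let Ω ⊂ ℝⁿ be a domain satisfying condition (A_α), let p ∈ (n,∞) and α = (p−n)/(p−1). Fix constants ε > 0, θ > 1, η ≥ 22θ², and a covering 𝒬 of Ω by non-overlapping cubes Q ⊂ Ω each satisfying (1/θ)·diam Q ≤ dist(Q,∂Ω) ≤ θ·diam Q; for each Q ∈ 𝒬 let a_Q ∈ ∂Ω be a point of ∂Ω nearest to Q, and let T_𝒬 : Ω → ∂Ω be the almost-everywhere defined map equal to a_Q on each Q ∈ 𝒬. A function f : ∂_αΩ → ℝ is the trace tr F of some continuous F ∈ W¹_p(Ω) if and only if f is continuous with respect to d̄_{α,clΩ}, f∘T_𝒬 ∈ L_p(O_ε(∂Ω)), and there exists λ > 0 such that for every finite family {Q_i : i = 1,…,m} of pairwise disjoint cubes contained in O_ε(∂Ω) and every choice of Q_i-visible points x_i, y_i ∈ (ηQ_i) ∩ ∂_αΩ, one has Σ_{i=1}^m |f(x_i) − f(y_i)|^p/(diam Q_i)^{p−n} ≤ λ. Moreover, inf{‖F‖_{W¹_p(Ω)} : F ∈ W¹_p(Ω) continuous, tr F = f} is equivalent to ‖f∘T_𝒬‖_{L_p(O_ε(∂Ω))}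 + inf λ^{1/p}, with constants of equivalence depending only on n, p, ε, θ and η. -/

import Mathlib

/-!
Throughout, `α = (p - n) / (p - 1)`, and `n < q < p` is the exponent `q = (n + p) / 2`.

**Necessity.** A function of `L¹_p` satisfies Morrey's estimate on cubes and on the cones
`conv(x ∪ Q)` over a cube `Q` seen from a visible boundary point `x ∈ ηQ`, with the `L_q` norm of the
gradient over `ηQ ∩ Ω` on the right (`morrey_cube`, `morrey_trace`). The dilations `ηQ_i` of
disjoint cubes overlap, so the averages of `‖∇F‖^q` over them are summed by a discrete form of the
maximal inequality on `L_{p/q}`, proved with Vitali's covering lemma (`weak_type`, `maximal`); this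
gives the variational condition (`varCond_of_trace`). The same Morrey estimate,
summed over the Whitney cubes which meet `O_ε(∂Ω)`, gives the `L_p` bound for `f ∘ T` (`lp_trace`).
Continuity with respect to `d̄` rests on a chain argument: a curve visits a sequence of Whitney
cubes, Morrey's estimate bounds the oscillation of `F` across each of them, and Hölder's inequality
bounds the sum by `‖∇F‖_p` times a power of the subhyperbolic length (`Whit.chain`,
`Whit.contWrtDBar`).

**Sufficiency.** Let `v_j = f (a_j)` for the cubes small enough to lie in `O_ε(∂Ω)`, and `v_j = 0` for
the other ones. The Whitney extension `F = Σ v_j φ_j / Σ φ_j` (`wext`) is smooth, and on `Q_i` its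
gradient is at most a multiple of `(diam Q_i)⁻¹ Σ |v_j - v_i|` over the neighbours of `Q_i`
(`wext_grad`). In the resulting sum, two neighbouring small cubes are handled by the variational
condition, applied to a subcube of the larger cube which sees both `a_i` and `a_j` (`Whit.pair`;
this is where `22θ² ≤ η` enters). If one of the cubes is not small, both sizes are bounded below by
a multiple of `ε`, and the `L_p` norm of `f ∘ T` dominates (`energy_select`). The trace of `F` is `f`
since near an accessible point `x` the extension averages values `f (a_j)` with `d̄(x, a_j)` small
(`wext_trace`).
-/

open MeasureTheory Set Filter ENNReal NNReal

noncomputable section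

/-- `ℝⁿ` equipped with the uniform norm `‖x‖ = max_i |x i|`. -/
abbrev Eu (n : ℕ) : Type := Fin n → ℝ

variable {n : ℕ}

/-- The closed cube `Q(x,r)` with center `x` and `diam Q = 2r`
(the closed ball of radius `r` in the uniform norm). -/
def cube (x : Eu n) (r : ℝ) : Set (Eu n) := Metric.closedBall x r

/-- `dist(z, ∂Ω)`, the distance from `z` to the boundary of `Ω`. -/
def bdist (Ω : Set (Eu n)) (z : Eu n) : ℝ := Metric.infDist z (frontier Ω)

/-- The distance between two sets. -/
def setDistS (A B : Set (Eu n)) : ℝ := sInf {d : ℝ | ∃ a ∈ A, ∃ b ∈ B, d = dist a b}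

/-- The line integral `∫_{[x,y]} ρ(z) ds(z)` of `ρ` over the segment `[x,y]`
with respect to arc length. -/
def segInt (ρ : Eu n → ℝ) (x y : Eu n) : ℝ :=
  ∫ t in (0:ℝ)..1, ρ (x + t • (y - x)) * ‖y - x‖

/-- The set of subhyperbolic lengths `∫_γ dist(z,∂Ω)^{α-1} ds(z)` of rectifiable curves in `Ω`
joining `x` to `y`; rectifiable curves are encoded by their arc-length parametrizations,
i.e. `1`-Lipschitz maps `γ : [0,L] → Ω`. -/
def subLenSet (Ω : Set (Eu n)) (α : ℝ) (x y : Eu n) : Set ℝ :=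
  {d : ℝ | ∃ (L : ℝ) (γ : ℝ → Eu n), 0 ≤ L ∧
    LipschitzOnWith 1 γ (Icc 0 L) ∧ γ 0 = x ∧ γ L = y ∧
    (∀ s ∈ Icc (0:ℝ) L, γ s ∈ Ω) ∧
    IntervalIntegrable (fun s => bdist Ω (γ s) ^ (α - 1)) volume 0 L ∧
    d = ∫ s in (0:ℝ)..L, bdist Ω (γ s) ^ (α - 1)}

/-- The subhyperbolic metric `d_{α,Ω}(x,y)`. -/
def dSub (Ω : Set (Eu n)) (α : ℝ) (x y : Eu n) : ℝ := sInf (subLenSet Ω α x y)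

/-- The metric `d̃_{α,Ω}(x,y) = d_{α,Ω}(x,y) + ‖x-y‖^α`. -/
def dTil (Ω : Set (Eu n)) (α : ℝ) (x y : Eu n) : ℝ := dSub Ω α x y + ‖x - y‖ ^ α

/-- The half-open segment `(x,a]`. -/
def segOC (x a : Eu n) : Set (Eu n) := {z | ∃ t ∈ Set.Ioc (0:ℝ) 1, z = x + t • (a - x)}

/-- `x` is `Q`-visible in `Ω`: for each `y ∈ Q` the half-open segment `(x,y]` lies in `Ω`. -/
def QVisible (Ω Q : Set (Eu n)) (x : Eu n) : Prop :=
  ∀ y ∈ Q, ∀ t ∈ Set.Ioc (0:ℝ) 1, x + t • (y - x) ∈ Ω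

/-- `O_ε(∂Ω)`, the ε-neighborhood of `∂Ω` in `Ω`. -/
def Oeps (Ω : Set (Eu n)) (ε : ℝ) : Set (Eu n) := {x ∈ Ω | bdist Ω x < ε}

/-- `g` is the (first-order distributional) weak gradient of `F` on the open set `Ω`. -/
def HasWeakGradOn (F : Eu n → ℝ) (g : Eu n → Eu n) (Ω : Set (Eu n)) : Prop :=
  LocallyIntegrableOn F Ω volume ∧ LocallyIntegrableOn g Ω volume ∧
  ∀ φ : Eu n → ℝ, ContDiff ℝ (⊤ : ℕ∞) φ → HasCompactSupport φ → tsupport φ ⊆ Ω →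
    ∀ i : Fin n, ∫ x in Ω, F x * fderiv ℝ φ x (Pi.single i 1) =
      - ∫ x in Ω, g x i * φ x

/-- `F` is the continuous representative of an element of the homogeneous Sobolev space
`L¹_p(Ω)`, with weak gradient `g` and `‖∇F‖ ∈ L_p(Ω)`. -/
def ContL1pRep (Ω : Set (Eu n)) (p : ℝ) (F : Eu n → ℝ) (g : Eu n → Eu n) : Prop :=
  ContinuousOn F Ω ∧ HasWeakGradOn F g Ω ∧ IntegrableOn (fun z => ‖g z‖ ^ p) Ω volume

/-- `F` is the continuous representative of an element of `W¹_p(Ω) = L_p(Ω) ∩ L¹_p(Ω)`. -/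
def ContW1pRep (Ω : Set (Eu n)) (p : ℝ) (F : Eu n → ℝ) (g : Eu n → Eu n) : Prop :=
  ContL1pRep Ω p F g ∧ IntegrableOn (fun z => |F z| ^ p) Ω volume

/-- The norm `‖F‖_{W¹_p(Ω)} = ‖F‖_{L_p(Ω)} + ‖∇F‖_{L_p(Ω)}`. -/
def W1pNorm (Ω : Set (Eu n)) (p : ℝ) (F : Eu n → ℝ) (g : Eu n → Eu n) : ℝ :=
  (∫ z in Ω, |F z| ^ p) ^ (1/p) + (∫ z in Ω, ‖g z‖ ^ p) ^ (1/p)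

/-- `u` is a Cauchy sequence with respect to the metric `d̃_{α,Ω}`. -/
def DCauchy (Ω : Set (Eu n)) (α : ℝ) (u : ℕ → Eu n) : Prop :=
  ∀ ε > (0:ℝ), ∃ N : ℕ, ∀ i ≥ N, ∀ j ≥ N, dTil Ω α (u i) (u j) < ε

/-- `u` is a sequence in `Ω` converging to `x` in norm which is Cauchy w.r.t. `d̃_{α,Ω}`. -/
def AccessSeq (Ω : Set (Eu n)) (α : ℝ) (x : Eu n) (u : ℕ → Eu n) : Prop :=
  (∀ i, u i ∈ Ω) ∧ Tendsto u atTop (nhds x) ∧ DCauchy Ω α u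

/-- `x` is an α-accessible point of `∂Ω`.  (For a domain satisfying condition `(A_α)` the
α-boundary `∂_αΩ` is identified with the set of α-accessible points of `∂Ω`.) -/
def Accessible (Ω : Set (Eu n)) (α : ℝ) (x : Eu n) : Prop :=
  x ∈ frontier Ω ∧ ∃ u, AccessSeq Ω α x u

/-- Condition `(A_α)`: for every α-accessible point `x ∈ ∂Ω`, any two sequences in `Ω`
converging to `x` in norm and Cauchy w.r.t. `d̃_{α,Ω}` satisfy `d̃_{α,Ω}(x_i,y_i) → 0`. -/
def CondA (Ω : Set (Eu n)) (α : ℝ) : Prop :=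
  ∀ x, Accessible Ω α x → ∀ u v, AccessSeq Ω α x u → AccessSeq Ω α x v →
    Tendsto (fun i => dTil Ω α (u i) (v i)) atTop (nhds 0)

/-- The metric `d̄_{α,clΩ}(x,y) = liminf { d_{α,Ω}(x̃,ỹ) : x̃,ỹ ∈ Ω, x̃ → x, ỹ → y in norm }`. -/
def dBar (Ω : Set (Eu n)) (α : ℝ) (x y : Eu n) : ℝ :=
  Filter.liminf (fun q : Eu n × Eu n => dSub Ω α q.1 q.2)
    (((nhds x) ⊓ Filter.principal Ω) ×ˢ ((nhds y) ⊓ Filter.principal Ω))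

/-- `f` is the trace of `F` on the α-boundary `∂_αΩ` (identified with the α-accessible
points of `∂Ω`):  `f x = lim_i F(x_i)` along every sequence `(x_i)` in `Ω` converging
to `x` in norm and Cauchy with respect to `d̃_{α,Ω}`. -/
def TraceEq (Ω : Set (Eu n)) (α : ℝ) (F : Eu n → ℝ) (f : Eu n → ℝ) : Prop :=
  ∀ x, Accessible Ω α x → ∀ u, AccessSeq Ω α x u →
    Tendsto (fun i => F (u i)) atTop (nhds (f x))

/-- `f` is continuous on `∂_αΩ` with respect to the metric `d̄_{α,clΩ}`. -/
def ContWrtDBar (Ω : Set (Eu n)) (α : ℝ) (f : Eu n → ℝ) : Prop :=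
  ∀ x, Accessible Ω α x → ∀ ε > (0:ℝ), ∃ δ > (0:ℝ), ∀ y, Accessible Ω α y →
    dBar Ω α x y < δ → |f y - f x| < ε

/-- The variational condition: for every finite family of pairwise disjoint cubes
`Q_i ⊆ S` and every choice of `Q_i`-visible points `x_i, y_i ∈ (ηQ_i) ∩ ∂_αΩ` one has
`Σ_i |f(x_i) - f(y_i)|^p / (diam Q_i)^{p-n} ≤ lam`. -/
def VarCondOn (Ω S : Set (Eu n)) (α p η lam : ℝ) (f : Eu n → ℝ) : Prop :=
  ∀ (m : ℕ) (c : Fin m → Eu n) (r : Fin m → ℝ),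
    (∀ i, 0 < r i) → (∀ i, cube (c i) (r i) ⊆ S) →
    (∀ i j, i ≠ j → Disjoint (cube (c i) (r i)) (cube (c j) (r j))) →
    ∀ x y : Fin m → Eu n,
      (∀ i, Accessible Ω α (x i) ∧ x i ∈ cube (c i) (η * r i) ∧
        QVisible Ω (cube (c i) (r i)) (x i)) →
      (∀ i, Accessible Ω α (y i) ∧ y i ∈ cube (c i) (η * r i) ∧
        QVisible Ω (cube (c i) (r i)) (y i)) →
      ∑ i, |f (x i) - f (y i)| ^ p / (2 * r i) ^ (p - (n:ℝ)) ≤ lam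


/-! ### The subhyperbolic metric -/

theorem bdist_nonneg (Ω : Set (Eu n)) (z : Eu n) : 0 ≤ bdist Ω z := Metric.infDist_nonneg

theorem bdist_le_add (Ω : Set (Eu n)) (x y : Eu n) : bdist Ω x ≤ bdist Ω y + dist x y :=
  Metric.infDist_le_infDist_add_dist

theorem bdist_continuous (Ω : Set (Eu n)) : Continuous (bdist Ω) :=
  Metric.continuous_infDist_pt _

theorem bdist_pos {Ω : Set (Eu n)} (hΩ : IsOpen Ω) (hf : (frontier Ω).Nonempty) {x : Eu n}
    (hx : x ∈ Ω) : 0 < bdist Ω x := by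
  refine (isClosed_frontier.notMem_iff_infDist_pos hf).1 fun h => ?_
  rw [hΩ.frontier_eq] at h
  exact h.2 hx

/-- A preconnected set that meets `Ω` and misses `∂Ω` lies in `Ω`. -/
theorem subset_of_frontier_free {Ω U : Set (Eu n)} (hU : IsPreconnected U)
    (hne : (U ∩ Ω).Nonempty) (hfr : ∀ x ∈ U, x ∉ frontier Ω) : U ⊆ Ω := by
  obtain ⟨x, hxU, hx⟩ := hne
  have hsub : U ⊆ interior Ω ∪ (closure Ω)ᶜ := fun y hy => by
    by_cases h : y ∈ closure Ω
    · exact Or.inl (by_contra fun h' => hfr y hy ⟨h, h'⟩)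
    · exact Or.inr h
  have hdis : Disjoint (interior Ω) (closure Ω)ᶜ :=
    (disjoint_compl_right).mono_left (interior_subset.trans subset_closure)
  refine (hU.subset_left_of_subset_union isOpen_interior isClosed_closure.isOpen_compl hdis hsub
    ⟨x, hxU, by_contra fun h' => hfr x hxU ⟨subset_closure hx, h'⟩⟩).trans interior_subset

theorem ball_bdist_subset {Ω : Set (Eu n)} {x : Eu n} (hx : x ∈ Ω) :
    Metric.ball x (bdist Ω x) ⊆ Ω := by
  by_cases h0 : 0 < bdist Ω x
  · refine subset_of_frontier_free (convex_ball _ _).isPreconnected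
      ⟨x, Metric.mem_ball_self h0, hx⟩ fun y hy hfr => ?_
    have := Metric.infDist_le_dist_of_mem (x := x) hfr
    rw [Metric.mem_ball, dist_comm] at hy
    exact absurd hy (not_lt.2 this)
  · rw [Metric.ball_eq_empty.2 (not_lt.1 h0)]; exact empty_subset _

theorem le_bdist_of_ball {Ω : Set (Eu n)} (hΩ : IsOpen Ω) (hf : (frontier Ω).Nonempty)
    {x : Eu n} {ρ : ℝ} (h : Metric.ball x ρ ⊆ Ω) : ρ ≤ bdist Ω x := by
  refine (Metric.le_infDist hf).2 fun y hy => ?_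
  by_contra hlt
  have : y ∈ Ω := h (by rw [Metric.mem_ball, dist_comm]; exact not_le.1 hlt)
  rw [hΩ.frontier_eq] at hy
  exact hy.2 this

theorem subLen_nonneg {Ω : Set (Eu n)} {α : ℝ} {x y : Eu n} {d : ℝ}
    (h : d ∈ subLenSet Ω α x y) : 0 ≤ d := by
  obtain ⟨L, γ, hL, -, -, -, -, -, rfl⟩ := h
  exact intervalIntegral.integral_nonneg hL fun s _ => Real.rpow_nonneg (bdist_nonneg _ _) _

theorem dSub_nonneg (Ω : Set (Eu n)) (α : ℝ) (x y : Eu n) : 0 ≤ dSub Ω α x y :=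
  Real.sInf_nonneg fun _ h => subLen_nonneg h

theorem dSub_le {Ω : Set (Eu n)} {α : ℝ} {x y : Eu n} {d : ℝ}
    (h : d ∈ subLenSet Ω α x y) : dSub Ω α x y ≤ d :=
  csInf_le ⟨0, fun _ h => subLen_nonneg h⟩ h

theorem subLen_symm {Ω : Set (Eu n)} {α : ℝ} {x y : Eu n} {d : ℝ}
    (h : d ∈ subLenSet Ω α x y) : d ∈ subLenSet Ω α y x := by
  obtain ⟨L, γ, hL, hlip, h0, h1, hmem, hintg, rfl⟩ := h
  have hmaps : ∀ s ∈ Icc (0:ℝ) L, L - s ∈ Icc (0:ℝ) L := fun s hs =>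
    ⟨by linarith [hs.2], by linarith [hs.1]⟩
  refine ⟨L, fun s => γ (L - s), hL, ?_, by simpa using h1, by simpa using h0,
    fun s hs => hmem _ (hmaps s hs), ?_, ?_⟩
  · refine LipschitzOnWith.of_dist_le_mul fun s hs t ht => ?_
    refine (hlip.dist_le_mul _ (hmaps s hs) _ (hmaps t ht)).trans_eq ?_
    rw [Real.dist_eq, Real.dist_eq, abs_sub_comm]
    ring_nf
  · have := hintg.comp_sub_left L
    simpa using this.symm
  · rw [intervalIntegral.integral_comp_sub_left (fun s => bdist Ω (γ s) ^ (α - 1)) L]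
    simp

theorem dSub_comm (Ω : Set (Eu n)) (α : ℝ) (x y : Eu n) : dSub Ω α x y = dSub Ω α y x := by
  unfold dSub
  congr 1
  ext d
  exact ⟨subLen_symm, subLen_symm⟩

theorem subLen_add {Ω : Set (Eu n)} {α : ℝ} {x y z : Eu n} {d e : ℝ}
    (h : d ∈ subLenSet Ω α x y) (h' : e ∈ subLenSet Ω α y z) : d + e ∈ subLenSet Ω α x z := by
  obtain ⟨L, γ, hL, hlip, h0, h1, hmem, hintg, rfl⟩ := h
  obtain ⟨M, σ, hM, hlip', h0', h1', hmem', hintg', rfl⟩ := h'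
  let τ : ℝ → Eu n := fun s => if s ≤ L then γ s else σ (s - L)
  have τ1 : ∀ s, s ≤ L → τ s = γ s := fun s hs => by simp [τ, hs]
  have τ2 : ∀ s, L ≤ s → τ s = σ (s - L) := fun s hs => by
    rcases hs.eq_or_lt with rfl | hs
    · simp [τ, h1, h0']
    · simp [τ, not_le.2 hs]
  have e1 : ∀ s ∈ Set.uIcc 0 L, bdist Ω (τ s) ^ (α - 1) = bdist Ω (γ s) ^ (α - 1) := by
    intro s hs
    rw [uIcc_of_le hL] at hs
    rw [τ1 s hs.2]
  have e2 : ∀ s ∈ Set.uIcc L (L + M),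
      bdist Ω (τ s) ^ (α - 1) = bdist Ω (σ (s - L)) ^ (α - 1) := by
    intro s hs
    rw [uIcc_of_le (by linarith)] at hs
    rw [τ2 s hs.1]
  have i1 : IntervalIntegrable (fun s => bdist Ω (τ s) ^ (α - 1)) volume 0 L :=
    hintg.congr fun s hs => (e1 s (uIoc_subset_uIcc hs)).symm
  have i2 : IntervalIntegrable (fun s => bdist Ω (τ s) ^ (α - 1)) volume L (L + M) := by
    have := hintg'.comp_sub_right L
    rw [zero_add, add_comm M L] at this
    exact this.congr fun s hs => (e2 s (uIoc_subset_uIcc hs)).symm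
  refine ⟨L + M, τ, by positivity, ?_, by rw [τ1 0 hL, h0], ?_, ?_, i1.trans i2, ?_⟩
  · have key : ∀ s ∈ Icc (0:ℝ) (L + M), ∀ t ∈ Icc (0:ℝ) (L + M), s ≤ t →
        dist (τ s) (τ t) ≤ t - s := by
      intro s hs t ht hst
      rcases le_total t L with htL | htL
      · rw [τ1 t htL, τ1 s (hst.trans htL)]
        have := hlip.dist_le_mul s ⟨hs.1, hst.trans htL⟩ t ⟨ht.1, htL⟩
        rw [Real.dist_eq, abs_sub_comm, abs_of_nonneg (sub_nonneg.2 hst)] at this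
        simpa using this
      rcases le_total s L with hsL | hsL
      · have a1 := hlip.dist_le_mul s ⟨hs.1, hsL⟩ L ⟨hL, le_rfl⟩
        have a2 := hlip'.dist_le_mul 0 ⟨le_rfl, hM⟩ (t - L) ⟨by linarith, by linarith [ht.2]⟩
        rw [Real.dist_eq, abs_sub_comm, abs_of_nonneg (sub_nonneg.2 hsL)] at a1
        rw [Real.dist_eq, abs_sub_comm, abs_of_nonneg (by linarith)] at a2
        rw [τ1 s hsL, τ2 t htL]
        have := dist_triangle (γ s) y (σ (t - L))
        rw [h1] at a1
        rw [h0'] at a2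
        simp only [NNReal.coe_one, one_mul] at a1 a2
        linarith
      · have a2 := hlip'.dist_le_mul (s - L) ⟨by linarith, by linarith [hs.2]⟩ (t - L)
          ⟨by linarith, by linarith [ht.2]⟩
        rw [Real.dist_eq, abs_sub_comm, abs_of_nonneg (by linarith)] at a2
        rw [τ2 s hsL, τ2 t htL]
        simp only [NNReal.coe_one, one_mul] at a2
        linarith
    refine LipschitzOnWith.of_dist_le_mul fun s hs t ht => ?_
    rw [NNReal.coe_one, one_mul, Real.dist_eq]
    rcases le_total s t with hst | hst
    · rw [abs_sub_comm, abs_of_nonneg (sub_nonneg.2 hst)]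
      exact key s hs t ht hst
    · rw [abs_of_nonneg (sub_nonneg.2 hst), dist_comm]
      exact key t ht s hs hst
  · rw [τ2 _ (by linarith)]
    simpa using h1'
  · intro s hs
    rcases le_total s L with h | h
    · rw [τ1 s h]; exact hmem s ⟨hs.1, h⟩
    · rw [τ2 s h]; exact hmem' _ ⟨by linarith, by linarith [hs.2]⟩
  · rw [← intervalIntegral.integral_add_adjacent_intervals i1 i2,
      intervalIntegral.integral_congr e1, intervalIntegral.integral_congr e2,
      intervalIntegral.integral_comp_sub_right (fun s => bdist Ω (σ s) ^ (α - 1)) L]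
    simp

/-- Part of a curve, with its length, between two parameters. -/
theorem subLen_restrict {Ω : Set (Eu n)} {α : ℝ} {L : ℝ} {γ : ℝ → Eu n}
    (hlip : LipschitzOnWith 1 γ (Icc 0 L))
    (hmem : ∀ s ∈ Icc (0:ℝ) L, γ s ∈ Ω)
    (hintg : IntervalIntegrable (fun s => bdist Ω (γ s) ^ (α - 1)) volume 0 L)
    {s t : ℝ} (hs : 0 ≤ s) (hst : s ≤ t) (ht : t ≤ L) :
    (∫ u in s..t, bdist Ω (γ u) ^ (α - 1)) ∈ subLenSet Ω α (γ s) (γ t) := by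
  have hmaps : ∀ u ∈ Icc (0:ℝ) (t - s), u + s ∈ Icc (0:ℝ) L := fun u hu =>
    ⟨by linarith [hu.1], by linarith [hu.2]⟩
  refine ⟨t - s, fun u => γ (u + s), by linarith, ?_, by simp, by simp,
    fun u hu => hmem _ (hmaps u hu), ?_, ?_⟩
  · refine LipschitzOnWith.of_dist_le_mul fun u hu v hv => ?_
    refine (hlip.dist_le_mul _ (hmaps u hu) _ (hmaps v hv)).trans_eq ?_
    simp [Real.dist_eq]
  · have h1 : IntervalIntegrable (fun s => bdist Ω (γ s) ^ (α - 1)) volume s t := by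
      refine hintg.mono_set ?_
      rw [uIcc_of_le hst, uIcc_of_le (by linarith)]
      exact Icc_subset_Icc hs ht
    simpa using h1.comp_add_right s
  · rw [intervalIntegral.integral_comp_add_right (fun s => bdist Ω (γ s) ^ (α - 1)) s]
    simp

/-- Length of a straight segment with a majorant of the density. -/
theorem dSub_segment {Ω : Set (Eu n)} (hΩ : IsOpen Ω) (hf : (frontier Ω).Nonempty) {α : ℝ}
    {x e : Eu n} (he : ‖e‖ ≤ 1) {L : ℝ} (hL : 0 ≤ L) (hmem : ∀ s ∈ Icc (0:ℝ) L, x + s • e ∈ Ω)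
    {b : ℝ → ℝ} (hb : IntervalIntegrable b volume 0 L)
    (hle : ∀ s ∈ Icc (0:ℝ) L, bdist Ω (x + s • e) ^ (α - 1) ≤ b s) :
    ∃ d ∈ subLenSet Ω α x (x + L • e), d ≤ ∫ s in (0:ℝ)..L, b s := by
  have hc : ContinuousOn (fun s : ℝ => bdist Ω (x + s • e) ^ (α - 1)) (Icc 0 L) := by
    refine ContinuousOn.rpow_const ?_ fun s hs => Or.inl (bdist_pos hΩ hf (hmem s hs)).ne'
    exact ((bdist_continuous Ω).comp (by fun_prop)).continuousOn
  have hi : IntervalIntegrable (fun s : ℝ => bdist Ω (x + s • e) ^ (α - 1)) volume 0 L := by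
    apply ContinuousOn.intervalIntegrable
    rwa [uIcc_of_le hL]
  refine ⟨_, ⟨L, fun s => x + s • e, hL, ?_, by simp, rfl, hmem, hi, rfl⟩, ?_⟩
  · refine LipschitzOnWith.of_dist_le_mul fun s _ t _ => ?_
    rw [dist_add_left, dist_eq_norm, ← sub_smul, norm_smul, NNReal.coe_one, one_mul, Real.dist_eq,
      Real.norm_eq_abs]
    exact mul_le_of_le_one_right (abs_nonneg _) he
  · exact intervalIntegral.integral_mono_on hL hi hb hle

theorem rpow_bound {α a b : ℝ} (hα : α ≤ 1) (ha : 0 < a) (hab : a ≤ b) :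
    b ^ (α - 1) ≤ a ^ (α - 1) :=
  Real.rpow_le_rpow_of_nonpos ha hab (by linarith)

theorem subLen_local {Ω : Set (Eu n)} (hΩ : IsOpen Ω) (hf : (frontier Ω).Nonempty) {α : ℝ}
    (hα : α ≤ 1) {x y : Eu n} (hx : x ∈ Ω) (hxy : dist x y ≤ bdist Ω x / 2) :
    ∃ d ∈ subLenSet Ω α x y, d ≤ dist x y * (bdist Ω x / 2) ^ (α - 1) := by
  have hpos := bdist_pos hΩ hf hx
  have hsmall : ∀ z, dist x z ≤ bdist Ω x / 2 → z ∈ Ω := fun z hz =>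
    ball_bdist_subset hx (by rw [Metric.mem_ball, dist_comm]; linarith)
  have hsmall' : ∀ z, dist x z ≤ bdist Ω x / 2 → bdist Ω x / 2 ≤ bdist Ω z := fun z hz => by
    have := bdist_le_add Ω x z
    linarith
  have key : ∀ s ∈ Icc (0:ℝ) (dist x y), dist x (x + s • ((dist x y)⁻¹ • (y - x))) ≤
      bdist Ω x / 2 := by
    intro s hs
    rw [dist_self_add_right, norm_smul, norm_smul, Real.norm_eq_abs, abs_of_nonneg hs.1, norm_inv,
      Real.norm_eq_abs, abs_of_nonneg dist_nonneg, ← dist_eq_norm, dist_comm y x]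
    rcases eq_or_ne (dist x y) 0 with h | h
    · rw [h]; simp; linarith
    · rw [inv_mul_cancel₀ h, mul_one]; exact hs.2.trans hxy
  have hend : x + dist x y • ((dist x y)⁻¹ • (y - x)) = y := by
    rcases eq_or_ne (dist x y) 0 with h | h
    · rw [h]; simp [dist_eq_zero.1 h]
    · rw [smul_smul, mul_inv_cancel₀ h, one_smul]; abel
  have := dSub_segment hΩ hf (α := α) (x := x) (e := (dist x y)⁻¹ • (y - x)) ?_ (L := dist x y)
    dist_nonneg (fun s hs => hsmall _ (key s hs)) (b := fun _ => (bdist Ω x / 2) ^ (α - 1))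
    (by simp) (fun s hs => rpow_bound hα (by positivity) (hsmall' _ (key s hs)))
  · rw [hend] at this
    simpa using this
  · rw [norm_smul, norm_inv, Real.norm_eq_abs, abs_of_nonneg dist_nonneg, dist_comm, dist_eq_norm]
    exact inv_mul_le_one

/-- In a connected open set any two points are joined by a curve of finite subhyperbolic length. -/
theorem subLen_nonempty {Ω : Set (Eu n)} (hΩ : IsOpen Ω) (hf : (frontier Ω).Nonempty)
    (hconn : IsConnected Ω) {α : ℝ} (hα : α ≤ 1) {x y : Eu n} (hx : x ∈ Ω) (hy : y ∈ Ω) :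
    (subLenSet Ω α x y).Nonempty := by
  refine hconn.isPreconnected.induction₂ (fun x y => (subLenSet Ω α x y).Nonempty) ?_ ?_ ?_ hx hy
  · intro z hz
    have hpos := bdist_pos hΩ hf hz
    filter_upwards [mem_nhdsWithin_of_mem_nhds (Metric.closedBall_mem_nhds z (half_pos hpos))]
      with w hw
    rw [Metric.mem_closedBall, dist_comm] at hw
    obtain ⟨d, hd, -⟩ := subLen_local hΩ hf hα hz hw
    exact ⟨d, hd⟩
  · rintro x y z _ _ _ ⟨d, hd⟩ ⟨e, he⟩
    exact ⟨_, subLen_add hd he⟩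
  · rintro x y _ _ ⟨d, hd⟩
    exact ⟨d, subLen_symm hd⟩

theorem dSub_triangle {Ω : Set (Eu n)} (hΩ : IsOpen Ω) (hf : (frontier Ω).Nonempty)
    (hconn : IsConnected Ω) {α : ℝ} (hα : α ≤ 1) {x y z : Eu n} (hx : x ∈ Ω) (hy : y ∈ Ω)
    (hz : z ∈ Ω) : dSub Ω α x z ≤ dSub Ω α x y + dSub Ω α y z := by
  refine le_of_forall_pos_le_add fun ε hε => ?_
  obtain ⟨d, hd, hd'⟩ := Real.lt_sInf_add_pos (subLen_nonempty hΩ hf hconn hα hx hy) (half_pos hε)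
  obtain ⟨e, he, he'⟩ := Real.lt_sInf_add_pos (subLen_nonempty hΩ hf hconn hα hy hz) (half_pos hε)
  have := dSub_le (subLen_add hd he)
  unfold dSub at this ⊢
  linarith

/-- The subhyperbolic metric is continuous at interior points. -/
theorem dSub_tendsto_zero {Ω : Set (Eu n)} (hΩ : IsOpen Ω) (hf : (frontier Ω).Nonempty) {α : ℝ}
    (hα : α ≤ 1) {x : Eu n} (hx : x ∈ Ω) {ι : Type*} {l : Filter ι} {u : ι → Eu n}
    (hu : Tendsto u l (nhds x)) : Tendsto (fun i => dSub Ω α x (u i)) l (nhds 0) := by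
  have hpos := bdist_pos hΩ hf hx
  have hd : Tendsto (fun i => dist x (u i)) l (nhds 0) := by
    have := (tendsto_const_nhds (x := x)).dist hu
    rwa [dist_self] at this
  have hd2 := hd.mul_const ((bdist Ω x / 2) ^ (α - 1))
  rw [zero_mul] at hd2
  refine tendsto_of_tendsto_of_tendsto_of_le_of_le' tendsto_const_nhds hd2
    (Eventually.of_forall fun i => dSub_nonneg _ _ _ _) ?_
  filter_upwards [hd.eventually_le_const (half_pos hpos)] with i hi
  obtain ⟨d, h1, h2⟩ := subLen_local hΩ hf hα hx hi
  exact (dSub_le h1).trans h2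

/-- Points seen from a ball: along the segment from `a` to `u` the density is dominated by
that of a cone with vertex `a`. -/
theorem dSub_cone {Ω : Set (Eu n)} (hΩ : IsOpen Ω) {α : ℝ} (hα0 : 0 < α)
    (hα : α ≤ 1) {a u : Eu n} {ρ : ℝ} (hρ : 0 < ρ) (ha : a ∈ frontier Ω)
    (hvis : QVisible Ω (cube u ρ) a) {s t : ℝ} (hs : 0 < s) (hst : s ≤ t) (ht : t ≤ 1) :
    dSub Ω α (a + s • (u - a)) (a + t • (u - a)) ≤
      ρ ^ (α - 1) * ‖u - a‖ / α * (t ^ α - s ^ α) := by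
  have hf : (frontier Ω).Nonempty := ⟨a, ha⟩
  have hin : ∀ τ : ℝ, 0 < τ → τ ≤ 1 → a + τ • (u - a) ∈ Ω := fun τ h0 h1 =>
    hvis u (Metric.mem_closedBall_self hρ.le) τ ⟨h0, h1⟩
  have hbd : ∀ τ : ℝ, 0 < τ → τ ≤ 1 → τ * ρ ≤ bdist Ω (a + τ • (u - a)) := by
    intro τ h0 h1
    refine le_bdist_of_ball hΩ hf fun z hz => ?_
    have hz' : a + τ⁻¹ • (z - a) ∈ cube u ρ := by
      rw [cube, Metric.mem_closedBall, dist_eq_norm]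
      rw [Metric.mem_ball, dist_eq_norm] at hz
      have : a + τ⁻¹ • (z - a) - u = τ⁻¹ • (z - (a + τ • (u - a))) := by
        rw [← sub_sub, smul_sub τ⁻¹ (z - a), smul_smul, inv_mul_cancel₀ h0.ne', one_smul]
        abel
      rw [this, norm_smul, norm_inv, Real.norm_eq_abs, abs_of_pos h0, inv_mul_le_iff₀ h0]
      exact hz.le
    have := hvis _ hz' τ ⟨h0, h1⟩
    rw [add_sub_cancel_left, smul_smul, mul_inv_cancel₀ h0.ne', one_smul] at this
    simpa using this
  have hD : 0 < ‖u - a‖ := by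
    rw [norm_pos_iff, sub_ne_zero]
    rintro rfl
    have := hin 1 one_pos le_rfl
    rw [sub_self, smul_zero, add_zero] at this
    rw [hΩ.frontier_eq] at ha
    exact ha.2 this
  set D := ‖u - a‖ with hDdef
  have hpt : ∀ σ : ℝ, a + s • (u - a) + σ • (D⁻¹ • (u - a)) = a + (s + σ / D) • (u - a) := by
    intro σ
    rw [smul_smul, add_smul, add_assoc, div_eq_mul_inv]
  have hrange : ∀ σ ∈ Icc (0:ℝ) ((t - s) * D), 0 < s + σ / D ∧ s + σ / D ≤ 1 := by
    intro σ hσ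
    have h1 : 0 ≤ σ / D := div_nonneg hσ.1 hD.le
    have h2 : σ / D ≤ t - s := by rw [div_le_iff₀ hD]; exact hσ.2
    constructor <;> linarith
  have hb : IntervalIntegrable (fun σ => ρ ^ (α - 1) * (s + σ / D) ^ (α - 1)) volume 0
      ((t - s) * D) := by
    apply ContinuousOn.intervalIntegrable
    rw [uIcc_of_le (mul_nonneg (by linarith) hD.le)]
    refine continuousOn_const.mul (ContinuousOn.rpow_const (by fun_prop) fun σ hσ => Or.inl ?_)
    exact (hrange σ hσ).1.ne'
  have hle : ∀ σ ∈ Icc (0:ℝ) ((t - s) * D),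
      bdist Ω (a + s • (u - a) + σ • (D⁻¹ • (u - a))) ^ (α - 1) ≤
        ρ ^ (α - 1) * (s + σ / D) ^ (α - 1) := by
    intro σ hσ
    rw [hpt]
    obtain ⟨h0, h1⟩ := hrange σ hσ
    refine (rpow_bound hα (by positivity) (hbd _ h0 h1)).trans_eq ?_
    rw [Real.mul_rpow h0.le hρ.le, mul_comm]
  obtain ⟨d, hd, hd'⟩ := dSub_segment hΩ hf (α := α) (x := a + s • (u - a))
    (e := D⁻¹ • (u - a)) (L := (t - s) * D)
    (by rw [norm_smul, norm_inv, Real.norm_eq_abs, abs_of_pos hD, ← hDdef,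
      inv_mul_cancel₀ hD.ne'])
    (mul_nonneg (by linarith) hD.le)
    (fun σ hσ => by rw [hpt]; exact hin _ (hrange σ hσ).1 (hrange σ hσ).2)
    hb hle
  · rw [hpt, mul_div_cancel_right₀ _ hD.ne', add_sub_cancel] at hd
    refine (dSub_le hd).trans (hd'.trans_eq ?_)
    rw [intervalIntegral.integral_const_mul,
      intervalIntegral.integral_comp_add_div (fun x => x ^ (α - 1)) hD.ne' s,
      integral_rpow (Or.inl (by linarith))]
    rw [zero_div, add_zero, mul_div_cancel_right₀ _ hD.ne', add_sub_cancel, smul_eq_mul,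
      sub_add_cancel]
    ring

theorem accessSeq_of_dSub {Ω : Set (Eu n)} {α : ℝ} (hα0 : 0 < α) {x : Eu n} {u : ℕ → Eu n}
    (hmem : ∀ i, u i ∈ Ω) (hu : Tendsto u atTop (nhds x))
    (hd : ∀ ε > (0:ℝ), ∃ N, ∀ i ≥ N, ∀ j ≥ N, dSub Ω α (u i) (u j) < ε) :
    AccessSeq Ω α x u := by
  refine ⟨hmem, hu, fun ε hε => ?_⟩
  obtain ⟨N, hN⟩ := hd _ (half_pos hε)
  obtain ⟨M, hM⟩ := Metric.cauchySeq_iff.1 hu.cauchySeq ((ε / 2) ^ α⁻¹) (by positivity)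
  refine ⟨max N M, fun i hi j hj => ?_⟩
  have h1 := hN i (le_trans (le_max_left _ _) hi) j (le_trans (le_max_left _ _) hj)
  have h2 := hM i (le_trans (le_max_right _ _) hi) j (le_trans (le_max_right _ _) hj)
  have h3 := Real.rpow_lt_rpow dist_nonneg h2 hα0
  rw [← Real.rpow_mul (by positivity), inv_mul_cancel₀ hα0.ne', Real.rpow_one, dist_eq_norm] at h3
  unfold dTil
  linarith

/-- A sequence along the segment from the centre to a visible boundary point. -/
theorem accessSeq_of_visible {Ω : Set (Eu n)} (hΩ : IsOpen Ω) {α : ℝ} (hα0 : 0 < α)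
    (hα : α ≤ 1) {a u : Eu n} {ρ : ℝ} (hρ : 0 < ρ) (ha : a ∈ frontier Ω)
    (hvis : QVisible Ω (cube u ρ) a) {τ : ℕ → ℝ} (hτ : ∀ k, τ k ∈ Ioc (0:ℝ) 1)
    (hlim : Tendsto τ atTop (nhds 0)) : AccessSeq Ω α a (fun k => a + τ k • (u - a)) := by
  have hconv : Tendsto (fun k => a + τ k • (u - a)) atTop (nhds a) := by
    have := (hlim.smul_const (u - a)).const_add a
    simpa using this
  refine accessSeq_of_dSub hα0 (fun k => hvis u (Metric.mem_closedBall_self hρ.le) _ (hτ k))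
    hconv fun ε hε => ?_
  set K := ρ ^ (α - 1) * ‖u - a‖ / α with hK
  have hK0 : 0 ≤ K := by positivity
  have h1 : Tendsto (fun k => K * τ k ^ α) atTop (nhds 0) := by
    have := ((hlim.rpow_const (Or.inr hα0.le) (p := α)).const_mul K)
    rwa [Real.zero_rpow hα0.ne', mul_zero] at this
  obtain ⟨M, hM⟩ := (h1.eventually_lt_const hε).exists_forall_of_atTop
  refine ⟨M, fun i hi j hj => ?_⟩
  rcases le_total (τ i) (τ j) with h | h
  · refine (dSub_cone hΩ hα0 hα hρ ha hvis (hτ i).1 h (hτ j).2).trans_lt ?_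
    have := hM j hj
    have h3 : 0 ≤ K * τ i ^ α := mul_nonneg hK0 (Real.rpow_nonneg (hτ i).1.le _)
    rw [mul_sub]
    linarith
  · rw [dSub_comm]
    refine (dSub_cone hΩ hα0 hα hρ ha hvis (hτ j).1 h (hτ i).2).trans_lt ?_
    have := hM i hi
    have h3 : 0 ≤ K * τ j ^ α := mul_nonneg hK0 (Real.rpow_nonneg (hτ j).1.le _)
    rw [mul_sub]
    linarith

theorem accessible_of_visible {Ω : Set (Eu n)} (hΩ : IsOpen Ω) {α : ℝ} (hα0 : 0 < α)
    (hα : α ≤ 1) {a u : Eu n} {ρ : ℝ} (hρ : 0 < ρ) (ha : a ∈ frontier Ω)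
    (hvis : QVisible Ω (cube u ρ) a) : Accessible Ω α a := by
  refine ⟨ha, _, accessSeq_of_visible hΩ hα0 hα hρ ha hvis (τ := fun k => 1 / ((k:ℝ) + 1))
    (fun k => ⟨by positivity, ?_⟩) tendsto_one_div_add_atTop_nhds_zero_nat⟩
  rw [div_le_one (by positivity)]
  linarith [Nat.cast_nonneg (α := ℝ) k]

/-! ### Whitney coverings -/

/-- A covering of `Ω` by non-overlapping cubes `Q_i = Q(c_i, r_i)` with `d_i = dist(Q_i, ∂Ω)`
comparable to `diam Q_i = 2 r_i`, together with nearest boundary points `a_i`. -/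
structure Whit (Ω : Set (Eu n)) (θ : ℝ) (c : ℕ → Eu n) (r d : ℕ → ℝ) (a : ℕ → Eu n) : Prop where
  isOpen : IsOpen Ω
  one_lt : 1 < θ
  pos : ∀ i, 0 < r i
  sub : ∀ i, Metric.closedBall (c i) (r i) ⊆ Ω
  cov : Ω ⊆ ⋃ i, Metric.closedBall (c i) (r i)
  disj : ∀ i j, i ≠ j → Disjoint (Metric.ball (c i) (r i)) (Metric.ball (c j) (r j))
  fr : ∀ i, a i ∈ frontier Ω
  far : ∀ i, ∀ x ∈ Metric.closedBall (c i) (r i), ∀ b ∈ frontier Ω, d i ≤ dist x b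
  near : ∀ i, dist (a i) (c i) ≤ r i + d i
  rd : ∀ i, 2 * r i ≤ θ * d i
  dr : ∀ i, d i ≤ 2 * θ * r i

theorem whit_of {Ω : Set (Eu n)} {θ : ℝ} (hΩ : IsOpen Ω) (hθ : 1 < θ)
    {c : ℕ → Eu n} {r : ℕ → ℝ} (hr : ∀ i, 0 < r i) (hsub : ∀ i, cube (c i) (r i) ⊆ Ω)
    (hcov : Ω ⊆ ⋃ i, cube (c i) (r i))
    (hdisj : ∀ i j, i ≠ j →
      Disjoint (interior (cube (c i) (r i))) (interior (cube (c j) (r j))))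
    (hwh : ∀ i, (1/θ) * (2 * r i) ≤ setDistS (cube (c i) (r i)) (frontier Ω) ∧
      setDistS (cube (c i) (r i)) (frontier Ω) ≤ θ * (2 * r i))
    {a : ℕ → Eu n}
    (ha : ∀ i, a i ∈ frontier Ω ∧ ∀ b ∈ frontier Ω,
      Metric.infDist (a i) (cube (c i) (r i)) ≤ Metric.infDist b (cube (c i) (r i))) :
    Whit Ω θ c r (fun i => setDistS (cube (c i) (r i)) (frontier Ω)) a := by
  refine ⟨hΩ, hθ, hr, hsub, hcov, fun i j hij => ?_, fun i => (ha i).1, ?_, ?_, ?_, ?_⟩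
  · have := hdisj i j hij
    unfold cube at this
    rwa [interior_closedBall _ (hr i).ne', interior_closedBall _ (hr j).ne'] at this
  · intro i x hx b hb
    refine csInf_le ⟨0, ?_⟩ ⟨x, hx, b, hb, rfl⟩
    rintro _ ⟨x, -, y, -, rfl⟩
    exact dist_nonneg
  · intro i
    have hle : Metric.infDist (a i) (cube (c i) (r i)) ≤
        setDistS (cube (c i) (r i)) (frontier Ω) := by
      refine le_csInf ⟨_, c i, Metric.mem_closedBall_self (hr i).le, a i, (ha i).1, rfl⟩ ?_
      rintro _ ⟨x, hx, b, hb, rfl⟩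
      refine ((ha i).2 b hb).trans ?_
      rw [dist_comm]
      exact Metric.infDist_le_dist_of_mem hx
    obtain ⟨y, hy, hyd⟩ := (isCompact_closedBall (c i) (r i)).exists_infDist_eq_dist
      ⟨c i, Metric.mem_closedBall_self (hr i).le⟩ (a i)
    have h1 := dist_triangle (a i) y (c i)
    rw [Metric.mem_closedBall] at hy
    unfold cube at hle
    rw [hyd] at hle
    change _ ≤ r i + setDistS (Metric.closedBall (c i) (r i)) (frontier Ω)
    linarith
  · intro i
    have := (hwh i).1
    rw [one_div, inv_mul_le_iff₀ (by linarith)] at this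
    exact this
  · intro i
    have := (hwh i).2
    linarith

/-- The relative amount by which Whitney cubes are enlarged. -/
def del (θ : ℝ) : ℝ := 1 / (100 * θ ^ 2)

/-- The slightly enlarged Whitney cube `Q_i*`. -/
def qstar (θ : ℝ) (c : ℕ → Eu n) (r : ℕ → ℝ) (i : ℕ) : Set (Eu n) :=
  Metric.closedBall (c i) ((1 + del θ) * r i)

namespace Whit

variable {Ω : Set (Eu n)} {θ : ℝ} {c : ℕ → Eu n} {r d : ℕ → ℝ} {a : ℕ → Eu n}

theorem del_pos (W : Whit Ω θ c r d a) : 0 < del θ := by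
  have := W.one_lt
  unfold del; positivity

theorem del_mul (W : Whit Ω θ c r d a) : del θ * θ ^ 2 = 1 / 100 := by
  have := W.one_lt
  unfold del; field_simp

theorem del_mul' (W : Whit Ω θ c r d a) : del θ * θ ≤ 1 / 100 := by
  have := W.del_mul
  nlinarith [W.one_lt, W.del_pos, mul_pos W.del_pos (zero_lt_one.trans W.one_lt)]

theorem del_le (W : Whit Ω θ c r d a) : del θ ≤ 1 / 100 := by
  nlinarith [W.del_mul', W.one_lt, W.del_pos]

theorem hf (W : Whit Ω θ c r d a) : (frontier Ω).Nonempty := ⟨_, W.fr 0⟩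

theorem th_pos (W : Whit Ω θ c r d a) : 0 < θ := zero_lt_one.trans W.one_lt

theorem d_pos (W : Whit Ω θ c r d a) (i : ℕ) : 0 < d i := by
  have := W.rd i
  have h := W.pos i
  by_contra hd
  nlinarith [W.th_pos]

theorem ball_sub (W : Whit Ω θ c r d a) (i : ℕ) : Metric.ball (c i) (r i + d i) ⊆ Ω := by
  have hd := W.d_pos i
  have hr := W.pos i
  refine subset_of_frontier_free (convex_ball _ _).isPreconnected
    ⟨c i, Metric.mem_ball_self (by positivity), W.sub i (Metric.mem_closedBall_self hr.le)⟩
    fun b hb hfr => ?_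
  set t := r i / (r i + d i) with ht
  have ht0 : 0 ≤ t := by positivity
  have hsum : 1 - t = d i / (r i + d i) := by rw [ht]; field_simp; ring
  rw [Metric.mem_ball, dist_eq_norm] at hb
  have h1 : c i + t • (b - c i) ∈ Metric.closedBall (c i) (r i) := by
    rw [Metric.mem_closedBall, dist_self_add_left, norm_smul, Real.norm_eq_abs, abs_of_nonneg ht0,
      ht, div_mul_eq_mul_div, div_le_iff₀ (by positivity)]
    exact mul_le_mul_of_nonneg_left hb.le hr.le
  have h2 := W.far i _ h1 b hfr
  have h3 : dist (c i + t • (b - c i)) b = (1 - t) * ‖b - c i‖ := by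
    rw [dist_comm, dist_eq_norm]
    have : b - (c i + t • (b - c i)) = (1 - t) • (b - c i) := by
      rw [sub_smul, one_smul]; abel
    rw [this, norm_smul, Real.norm_eq_abs, abs_of_nonneg (by rw [hsum]; positivity)]
  rw [h3, hsum, div_mul_eq_mul_div, le_div_iff₀ (by positivity)] at h2
  nlinarith

theorem vis (W : Whit Ω θ c r d a) (i : ℕ) {K : Set (Eu n)}
    (hK : K ⊆ Metric.ball (c i) (r i + d i)) : QVisible Ω K (a i) := by
  intro y hy t ht
  apply W.ball_sub i
  have h1 := hK hy
  have h2 := W.near i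
  rw [Metric.mem_ball, dist_eq_norm] at h1 ⊢
  rw [dist_eq_norm] at h2
  have : a i + t • (y - a i) - c i = (1 - t) • (a i - c i) + t • (y - c i) := by
    module
  rw [this]
  refine (norm_add_le _ _).trans_lt ?_
  rw [norm_smul, norm_smul, Real.norm_eq_abs, Real.norm_eq_abs, abs_of_pos ht.1,
    abs_of_nonneg (by linarith [ht.2])]
  have h3 := mul_le_mul_of_nonneg_left h2 (sub_nonneg.2 ht.2)
  have h4 := mul_lt_mul_of_pos_left h1 ht.1
  linarith

theorem r_le (W : Whit Ω θ c r d a) (i : ℕ) : del θ * r i ≤ d i / 200 := by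
  have h1 := mul_le_mul_of_nonneg_left (W.rd i) W.del_pos.le
  have h2 := mul_le_mul_of_nonneg_right W.del_mul' (W.d_pos i).le
  linarith

theorem star_sub (W : Whit Ω θ c r d a) (i : ℕ) :
    qstar θ c r i ⊆ Metric.ball (c i) (r i + d i) := by
  refine Metric.closedBall_subset_ball ?_
  have := W.r_le i
  have := W.d_pos i
  linarith

theorem bd_lower (W : Whit Ω θ c r d a) (i : ℕ) {x : Eu n} (hx : x ∈ qstar θ c r i) :
    99 / 100 * d i ≤ bdist Ω x := by
  have h1 := W.r_le i
  have h2 := W.d_pos i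
  rw [qstar, Metric.mem_closedBall] at hx
  refine le_bdist_of_ball W.isOpen W.hf ((Metric.ball_subset_ball' ?_).trans (W.ball_sub i))
  linarith

theorem bd_upper (W : Whit Ω θ c r d a) (i : ℕ) {x : Eu n} (hx : x ∈ qstar θ c r i) :
    bdist Ω x ≤ (θ + 201 / 200) * d i := by
  have h1 := W.r_le i
  have h2 := W.near i
  have h3 := W.rd i
  rw [qstar, Metric.mem_closedBall] at hx
  have h4 : bdist Ω x ≤ dist x (a i) := Metric.infDist_le_dist_of_mem (W.fr i)
  have h5 := dist_triangle x (c i) (a i)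
  rw [dist_comm (c i)] at h5
  linarith

theorem bd_le_r (W : Whit Ω θ c r d a) (i : ℕ) {x : Eu n} (hx : x ∈ qstar θ c r i) :
    bdist Ω x ≤ 6 * θ ^ 2 * r i := by
  have h1 := W.bd_upper i hx
  have h2 := W.dr i
  have h3 := W.one_lt
  have h4 := W.pos i
  have h5 : (θ + 201 / 200) * d i ≤ 3 * θ * (2 * θ * r i) :=
    mul_le_mul (by linarith) h2 (W.d_pos i).le (by linarith)
  linarith

theorem r_le_bd (W : Whit Ω θ c r d a) (i : ℕ) {x : Eu n} (hx : x ∈ qstar θ c r i) :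
    r i ≤ θ * bdist Ω x := by
  have h1 := W.bd_lower i hx
  have h2 := W.rd i
  have h3 := mul_le_mul_of_nonneg_left h1 W.th_pos.le
  linarith [W.pos i]

theorem d_comp (W : Whit Ω θ c r d a) {i j : ℕ} {x : Eu n} (hi : x ∈ qstar θ c r i)
    (hj : x ∈ qstar θ c r j) : d j ≤ 2.1 * θ * d i := by
  have h1 := W.bd_lower j hj
  have h2 := W.bd_upper i hi
  have h3 : (θ + 201 / 200) * d i ≤ 2.005 * θ * d i :=
    mul_le_mul_of_nonneg_right (by linarith [W.one_lt]) (W.d_pos i).le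
  have h4 := mul_pos W.th_pos (W.d_pos i)
  linarith

theorem rd_comp (W : Whit Ω θ c r d a) {i j : ℕ} {x : Eu n} (hi : x ∈ qstar θ c r i)
    (hj : x ∈ qstar θ c r j) : r j ≤ 1.05 * θ ^ 2 * d i := by
  have h1 := mul_le_mul_of_nonneg_left (W.d_comp hi hj) W.th_pos.le
  have h2 := W.rd j
  nlinarith

theorem r_comp (W : Whit Ω θ c r d a) {i j : ℕ} {x : Eu n} (hi : x ∈ qstar θ c r i)
    (hj : x ∈ qstar θ c r j) : r j ≤ 3 * θ ^ 3 * r i := by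
  have h1 := W.rd_comp hi hj
  have h2 := mul_le_mul_of_nonneg_left (W.dr i) (sq_nonneg θ)
  have h3 : 0 < θ ^ 3 * r i := mul_pos (pow_pos W.th_pos 3) (W.pos i)
  nlinarith

/-- For two neighbouring Whitney cubes, the larger one contains a subcube `Q(k, ρ)` from which both
nearest boundary points are visible, and whose dilation by `22θ²` contains these points. The
quadratic dependence on `θ` is available because the subcube sits in the larger cube. -/
theorem pair (W : Whit Ω θ c r d a) {i j : ℕ} {x : Eu n} (hi : x ∈ qstar θ c r i)
    (hj : x ∈ qstar θ c r j) (hij : r i ≤ r j) :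
    ∃ (k : Eu n) (ρ : ℝ), 0 < ρ ∧ ρ ≤ r j ∧
      Metric.closedBall k ρ ⊆ Metric.ball (c j) (r j) ∧
      QVisible Ω (cube k ρ) (a i) ∧ QVisible Ω (cube k ρ) (a j) ∧
      dist (a i) k ≤ 22 * θ ^ 2 * ρ ∧ dist (a j) k ≤ 22 * θ ^ 2 * ρ := by
  have hri := W.pos i
  have hrj := W.pos j
  have hdi := W.d_pos i
  have hdj := W.d_pos j
  have hδ := W.del_pos
  have h1θ := W.one_lt
  have hδi := W.r_le i
  have hcomp := W.rd_comp hi hj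
  have hδj : del θ * r j ≤ 0.0105 * d i := by
    have := mul_le_mul_of_nonneg_left hcomp hδ.le
    have h2 := W.del_mul
    have : del θ * (1.05 * θ ^ 2 * d i) = 1.05 * (del θ * θ ^ 2) * d i := by ring
    rw [h2] at this
    linarith
  -- the point of `Q_j` closest to `x`
  set s := (1 + del θ)⁻¹ with hs
  have hs0 : 0 < s := by positivity
  have hs1 : 1 - s = s * del θ := by rw [hs]; field_simp; ring
  set w := c j + s • (x - c j) with hw
  have hxj : ‖x - c j‖ ≤ (1 + del θ) * r j := by
    rw [qstar, Metric.mem_closedBall, dist_eq_norm] at hj; exact hj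
  have hsx : s * ‖x - c j‖ ≤ r j := by
    rw [hs, inv_mul_le_iff₀ (by positivity)]; exact hxj
  have hwc : ‖w - c j‖ ≤ r j := by
    rw [hw, add_sub_cancel_left, norm_smul, Real.norm_eq_abs, abs_of_pos hs0]; exact hsx
  have hwx : ‖w - x‖ ≤ del θ * r j := by
    have : w - x = -((1 - s) • (x - c j)) := by rw [hw]; module
    rw [this, norm_neg, norm_smul, Real.norm_eq_abs, abs_of_nonneg (by rw [hs1]; positivity), hs1]
    nlinarith
  set R := min (r j) (d i / 2) with hR
  have hR0 : 0 < R := lt_min hrj (by positivity)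
  have hR1 : R ≤ r j := min_le_left _ _
  have hR2 : R ≤ d i / 2 := min_le_right _ _
  have hq0 : 0 ≤ R / r j := by positivity
  have hq1 : R / r j ≤ 1 := (div_le_one hrj).2 hR1
  have hqr : R / r j * r j = R := by field_simp
  set k := w + (R / r j) • (c j - w) with hk
  have hkw : ‖k - w‖ ≤ R := by
    rw [hk, add_sub_cancel_left, norm_smul, Real.norm_eq_abs, abs_of_nonneg hq0, norm_sub_rev]
    exact (mul_le_mul_of_nonneg_left hwc hq0).trans_eq hqr
  have hkc : ‖k - c j‖ ≤ r j - R := by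
    have : k - c j = (1 - R / r j) • (w - c j) := by rw [hk]; module
    rw [this, norm_smul, Real.norm_eq_abs, abs_of_nonneg (by linarith)]
    have := mul_le_mul_of_nonneg_left hwc (sub_nonneg.2 hq1)
    linarith
  have hxi : ‖x - c i‖ ≤ (1 + del θ) * r i := by
    rw [qstar, Metric.mem_closedBall, dist_eq_norm] at hi; exact hi
  have hsubj : Metric.closedBall k (R / 2) ⊆ Metric.ball (c j) (r j) := by
    refine Metric.closedBall_subset_ball' ?_
    rw [dist_eq_norm]; linarith
  have hkci : ‖k - c i‖ ≤ R + del θ * r j + (1 + del θ) * r i := by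
    have : k - c i = (k - w) + (w - x) + (x - c i) := by abel
    rw [this]
    refine (norm_add₃_le).trans ?_
    linarith
  have hsubi : Metric.closedBall k (R / 2) ⊆ Metric.ball (c i) (r i + d i) := by
    refine Metric.closedBall_subset_ball' ?_
    rw [dist_eq_norm]; linarith
  have hθ2 : 1 ≤ θ ^ 2 := by nlinarith
  have hθ3 : θ ≤ θ ^ 2 := by nlinarith
  refine ⟨k, R / 2, by positivity, by linarith, hsubj, W.vis i hsubi,
    W.vis j (hsubj.trans (Metric.ball_subset_ball (by linarith))), ?_, ?_⟩
  · have h1 : dist (a i) k ≤ r i + d i + (R + del θ * r j + (1 + del θ) * r i) := by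
      refine (dist_triangle _ (c i) _).trans (add_le_add (W.near i) ?_)
      rw [dist_comm, dist_eq_norm]; exact hkci
    refine h1.trans ?_
    have hδ1 := W.del_le
    rcases min_choice (r j) (d i / 2) with h | h
    · rw [← hR] at h
      rw [h]
      have h3 := W.dr i
      have h4 : 2 * θ * r i ≤ 2 * θ * r j := mul_le_mul_of_nonneg_left hij (by linarith)
      have h5 : del θ * r j ≤ 1 / 100 * r j := mul_le_mul_of_nonneg_right hδ1 hrj.le
      have h6 : del θ * r i ≤ 1 / 100 * r i := mul_le_mul_of_nonneg_right hδ1 hri.le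
      have h7 : r j ≤ θ ^ 2 * r j := le_mul_of_one_le_left (by positivity) hθ2
      have h8 : θ * r j ≤ θ ^ 2 * r j := mul_le_mul_of_nonneg_right hθ3 (by positivity)
      linarith
    · rw [← hR] at h
      rw [h]
      have h3 := W.rd i
      have h7 : d i ≤ θ ^ 2 * d i := le_mul_of_one_le_left (by positivity) hθ2
      have h8 : θ * d i ≤ θ ^ 2 * d i := mul_le_mul_of_nonneg_right hθ3 (by positivity)
      linarith
  · have h1 : dist (a j) k ≤ r j + d j + (r j - R) := by
      refine (dist_triangle _ (c j) _).trans (add_le_add (W.near j) ?_)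
      rw [dist_comm, dist_eq_norm]; exact hkc
    refine h1.trans ?_
    rcases min_choice (r j) (d i / 2) with h | h
    · rw [← hR] at h
      rw [h]
      have h3 := W.dr j
      have h7 : r j ≤ θ ^ 2 * r j := le_mul_of_one_le_left (by positivity) hθ2
      have h8 : θ * r j ≤ θ ^ 2 * r j := mul_le_mul_of_nonneg_right hθ3 (by positivity)
      linarith
    · rw [← hR] at h
      rw [h]
      have h3 := W.rd j
      have h4 := W.d_comp hi hj
      have h5 : (θ + 1) * d j ≤ (2 * θ) * (2.1 * θ * d i) :=
        mul_le_mul (by linarith) h4 hdj.le (by linarith)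
      have h7 : 0 ≤ θ ^ 2 * d i := by positivity
      linarith

/-- Indices of the Whitney cubes whose enlargement meets `Q_i*`. -/
def nbr (θ : ℝ) (c : ℕ → Eu n) (r : ℕ → ℝ) (i : ℕ) : Set ℕ :=
  {j | (qstar θ c r j ∩ qstar θ c r i).Nonempty}

theorem nbr_symm {i j : ℕ} (h : j ∈ nbr θ c r i) : i ∈ nbr θ c r j := by
  obtain ⟨x, h1, h2⟩ := h
  exact ⟨x, h2, h1⟩

theorem nbr_self (W : Whit Ω θ c r d a) (i : ℕ) : i ∈ nbr θ c r i := by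
  refine ⟨c i, ?_⟩
  rw [inter_self]
  exact Metric.mem_closedBall_self (mul_nonneg (by linarith [W.del_pos]) (W.pos i).le)

end Whit

/-- The bound for the number of neighbours of a Whitney cube. -/
def nbrBound (n : ℕ) (θ : ℝ) : ℝ := (3 * θ ^ 3 * (2 + 9 * θ ^ 3)) ^ n

theorem vol_closedBall (x : Eu n) {ρ : ℝ} (hρ : 0 ≤ ρ) :
    volume (Metric.closedBall x ρ) = ENNReal.ofReal ((2 * ρ) ^ n) := by
  rw [Real.volume_pi_closedBall x hρ, Fintype.card_fin]

theorem vol_ball (x : Eu n) {ρ : ℝ} (hρ : 0 < ρ) :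
    volume (Metric.ball x ρ) = ENNReal.ofReal ((2 * ρ) ^ n) := by
  rw [Real.volume_pi_ball x hρ, Fintype.card_fin]

/-- Volume counting for non-overlapping cubes. -/
theorem card_le_of_disjoint {ι : Type*} (S : Finset ι) {c : ι → Eu n} {r : ι → ℝ}
    (hd : ∀ i ∈ S, ∀ j ∈ S, i ≠ j → Disjoint (Metric.ball (c i) (r i)) (Metric.ball (c j) (r j)))
    {z : Eu n} {ρ R : ℝ} (hρ : 0 < ρ) (hR : 0 ≤ R) (hr : ∀ i ∈ S, ρ ≤ r i)
    (hsub : ∀ i ∈ S, Metric.ball (c i) (r i) ⊆ Metric.closedBall z (R * ρ)) :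
    (S.card : ℝ) ≤ R ^ n := by
  have h1 : ∑ i ∈ S, volume (Metric.ball (c i) (r i)) ≤
      volume (Metric.closedBall z (R * ρ)) := by
    rw [← measure_biUnion_finset (fun i hi j hj hij => hd i hi j hj hij)
      (fun i _ => measurableSet_ball)]
    exact measure_mono (iUnion₂_subset hsub)
  have h2 : ∑ _i ∈ S, ENNReal.ofReal ((2 * ρ) ^ n) ≤
      ∑ i ∈ S, volume (Metric.ball (c i) (r i)) := by
    refine Finset.sum_le_sum fun i hi => ?_
    rw [vol_ball _ (hρ.trans_le (hr i hi))]
    refine ENNReal.ofReal_le_ofReal ?_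
    have := hr i hi
    gcongr
  have h3 := h2.trans h1
  rw [vol_closedBall _ (by positivity), Finset.sum_const, nsmul_eq_mul, ← ENNReal.ofReal_natCast,
    ← ENNReal.ofReal_mul (by positivity), ENNReal.ofReal_le_ofReal_iff (by positivity)] at h3
  rw [show (2 * (R * ρ)) ^ n = R ^ n * (2 * ρ) ^ n by rw [← mul_pow]; ring] at h3
  exact le_of_mul_le_mul_right h3 (by positivity)

namespace Whit

variable {Ω : Set (Eu n)} {θ : ℝ} {c : ℕ → Eu n} {r d : ℕ → ℝ} {a : ℕ → Eu n}

theorem nbr_card (W : Whit Ω θ c r d a) (i : ℕ) (S : Finset ℕ) (hS : ∀ j ∈ S, j ∈ nbr θ c r i) :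
    (S.card : ℝ) ≤ nbrBound n θ := by
  have hθ := W.th_pos
  have hθ3 : 0 < 3 * θ ^ 3 := by positivity
  have hri := W.pos i
  have hδ := W.del_le
  refine card_le_of_disjoint S (c := c) (r := r) (fun i _ j _ hij => W.disj i j hij) (z := c i)
    (ρ := r i / (3 * θ ^ 3)) (by positivity) (by positivity) ?_ ?_
  · intro j hj
    obtain ⟨x, hx1, hx2⟩ := hS j hj
    rw [div_le_iff₀ hθ3]
    have := W.r_comp hx1 hx2
    linarith
  · intro j hj
    obtain ⟨x, hx1, hx2⟩ := hS j hj
    have h1 := W.r_comp hx2 hx1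
    have hrj := W.pos j
    refine Metric.ball_subset_closedBall.trans (Metric.closedBall_subset_closedBall' ?_)
    have h2 := dist_triangle (c j) x (c i)
    unfold qstar at hx1 hx2
    rw [Metric.mem_closedBall] at hx1 hx2
    rw [dist_comm x (c j)] at hx1
    have h3 : 3 * θ ^ 3 * (2 + 9 * θ ^ 3) * (r i / (3 * θ ^ 3)) = 2 * r i + 9 * θ ^ 3 * r i := by
      field_simp
    rw [h3]
    nlinarith

theorem nbr_finite (W : Whit Ω θ c r d a) (i : ℕ) : (nbr θ c r i).Finite := by
  by_contra h
  obtain ⟨N, hN⟩ := exists_nat_gt (nbrBound n θ)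
  obtain ⟨S, hS, hc⟩ := Set.Infinite.exists_subset_card_eq h N
  have := W.nbr_card i S (fun j hj => hS hj)
  rw [hc] at this
  linarith

/-- The neighbours of `Q_i`, as a finite set. -/
def nb (W : Whit Ω θ c r d a) (i : ℕ) : Finset ℕ := (W.nbr_finite i).toFinset

theorem mem_nb (W : Whit Ω θ c r d a) {i j : ℕ} : j ∈ W.nb i ↔ j ∈ nbr θ c r i := by
  simp [nb]

theorem nb_comm (W : Whit Ω θ c r d a) {i j : ℕ} : j ∈ W.nb i ↔ i ∈ W.nb j := by
  rw [mem_nb, mem_nb]; exact ⟨nbr_symm, nbr_symm⟩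

theorem nb_card (W : Whit Ω θ c r d a) (i : ℕ) : ((W.nb i).card : ℝ) ≤ nbrBound n θ :=
  W.nbr_card i _ fun _ => W.mem_nb.1

theorem sub_star (W : Whit Ω θ c r d a) (i : ℕ) :
    Metric.closedBall (c i) (r i) ⊆ qstar θ c r i := by
  refine Metric.closedBall_subset_closedBall ?_
  nlinarith [W.pos i, W.del_pos]

theorem star_sub_Ω (W : Whit Ω θ c r d a) (i : ℕ) : qstar θ c r i ⊆ Ω :=
  (W.star_sub i).trans (W.ball_sub i)

end Whit

/-! ### Smooth averages and Morrey's estimate -/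

/-- A smooth bump function supported in the cube `Q(0, 1/2)`. -/
def bmp (n : ℕ) : ContDiffBump (0 : Eu n) := ⟨1 / 4, 1 / 2, by norm_num, by norm_num⟩

/-- The averaging kernel: nonnegative, smooth, supported in `Q(0, 1/2)`, of integral one. -/
def moll (n : ℕ) : Eu n → ℝ := (bmp n).normed volume

theorem moll_contDiff : ContDiff ℝ (⊤ : ℕ∞) (moll n) := (bmp n).contDiff_normed

theorem moll_nonneg (x : Eu n) : 0 ≤ moll n x := (bmp n).nonneg_normed x

theorem moll_integral : ∫ x, moll n x = 1 := (bmp n).integral_normed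

theorem moll_tsupport : tsupport (moll n) = Metric.closedBall 0 (1 / 2) :=
  (bmp n).tsupport_normed_eq

theorem moll_zero {x : Eu n} (hx : 1 / 2 < ‖x‖) : moll n x = 0 := by
  refine image_eq_zero_of_notMem_tsupport ?_
  rw [moll_tsupport, mem_closedBall_zero_iff, not_le]
  exact hx

theorem moll_fderiv_zero {x : Eu n} (hx : 1 / 2 < ‖x‖) : fderiv ℝ (moll n) x = 0 := by
  refine fderiv_of_notMem_tsupport ℝ ?_
  rw [moll_tsupport, mem_closedBall_zero_iff, not_le]
  exact hx

theorem moll_bdd : ∃ M, 0 < M ∧ ∀ x, moll n x ≤ M := by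
  have hc : HasCompactSupport (moll n) := by
    unfold HasCompactSupport
    rw [moll_tsupport]; exact isCompact_closedBall _ _
  obtain ⟨C, hC⟩ := hc.exists_bound_of_continuous moll_contDiff.continuous
  refine ⟨|C| + 1, by positivity, fun x => ?_⟩
  linarith [le_abs_self (moll n x), hC x, le_abs_self C, Real.norm_eq_abs (moll n x)]

/-- An upper bound of the averaging kernel. -/
def mollM (n : ℕ) : ℝ := (moll_bdd (n := n)).choose

theorem mollM_pos : 0 < mollM n := (moll_bdd (n := n)).choose_spec.1

theorem moll_le (x : Eu n) : moll n x ≤ mollM n := (moll_bdd (n := n)).choose_spec.2 x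

/-- The smooth average of `F` over the cube `Q(c, r) ⊆ Ω`. -/
def av (Ω : Set (Eu n)) (F : Eu n → ℝ) (c : Eu n) (r : ℝ) : ℝ :=
  ∫ z in Ω, F z * ((r⁻¹) ^ n * moll n (r⁻¹ • (z - c)))

theorem integrableOn_of_compact {Ω K : Set (Eu n)} (hΩ : IsOpen Ω) {h : Eu n → ℝ}
    (hh : ContinuousOn h Ω) (hK : IsCompact K) (hKΩ : K ⊆ Ω) (h0 : ∀ z ∉ K, h z = 0) :
    IntegrableOn h Ω :=
  ((hh.mono hKΩ).integrableOn_compact hK).of_forall_sdiff_eq_zero hΩ.measurableSet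
    fun z hz => h0 z hz.2

/-- A smooth average lies between any bounds of the function on the cube. -/
theorem av_near {Ω : Set (Eu n)} (hΩ : IsOpen Ω) {F : Eu n → ℝ} (hF : ContinuousOn F Ω)
    {c : Eu n} {r : ℝ} (hr : 0 < r) (hc : Metric.closedBall c r ⊆ Ω) {v e : ℝ}
    (he : ∀ z ∈ Metric.closedBall c r, |F z - v| ≤ e) : |av Ω F c r - v| ≤ e := by
  set k : Eu n → ℝ := fun z => (r⁻¹) ^ n * moll n (r⁻¹ • (z - c)) with hk
  have hk0 : ∀ z ∉ Metric.closedBall c r, k z = 0 := by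
    intro z hz
    rw [Metric.mem_closedBall, dist_eq_norm, not_le] at hz
    simp only [hk]
    rw [moll_zero, mul_zero]
    rw [norm_smul, norm_inv, Real.norm_eq_abs, abs_of_pos hr, ← div_eq_inv_mul,
      lt_div_iff₀ hr]
    linarith
  have hkc : Continuous k := by
    refine continuous_const.mul (moll_contDiff.continuous.comp ?_)
    fun_prop
  have hkn : ∀ z, 0 ≤ k z := fun z => mul_nonneg (by positivity) (moll_nonneg _)
  have hk1 : ∫ z in Ω, k z = 1 := by
    rw [setIntegral_eq_integral_of_forall_compl_eq_zero (fun z hz => hk0 z fun h => hz (hc h))]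
    simp only [hk]
    rw [integral_const_mul, integral_sub_right_eq_self (fun z => moll n (r⁻¹ • z)) c,
      Measure.integral_comp_smul, moll_integral, Module.finrank_fin_fun, smul_eq_mul, mul_one,
      abs_of_pos (by positivity)]
    exact mul_inv_cancel₀ (by positivity)
  have hik : IntegrableOn k Ω :=
    integrableOn_of_compact hΩ hkc.continuousOn (isCompact_closedBall c r) hc hk0
  have hiFk : IntegrableOn (fun z => F z * k z) Ω :=
    integrableOn_of_compact hΩ (hF.mul hkc.continuousOn) (isCompact_closedBall c r) hc
      fun z hz => by rw [hk0 z hz, mul_zero]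
  have h1 : av Ω F c r - v = ∫ z in Ω, (F z * k z - v * k z) := by
    rw [integral_sub hiFk (hik.const_mul v), integral_const_mul, hk1, mul_one]; rfl
  rw [h1, ← Real.norm_eq_abs]
  have h2 : ∫ z in Ω, e * k z = e := by rw [integral_const_mul, hk1, mul_one]
  rw [← h2]
  refine norm_integral_le_of_norm_le (hik.const_mul e) (Eventually.of_forall fun z => ?_)
  rw [← sub_mul, norm_mul, Real.norm_eq_abs, Real.norm_eq_abs, abs_of_nonneg (hkn z)]
  by_cases hz : z ∈ Metric.closedBall c r
  · exact mul_le_mul_of_nonneg_right (he z hz) (hkn z)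
  · rw [hk0 z hz, mul_zero, mul_zero]

/-- The affine map carrying the cube with center `x + s⁻¹(c-x)` and radius `s⁻¹r` to the unit
cube. -/
def lin (x c : Eu n) (r s : ℝ) (z : Eu n) : Eu n := r⁻¹ • (s • (z - x) + (x - c))

theorem lin_eq {x c : Eu n} {r s : ℝ} (hs : s ≠ 0) (z : Eu n) :
    lin x c r s z = (s⁻¹ * r)⁻¹ • (z - (x + s⁻¹ • (c - x))) := by
  have h : s • (z - (x + s⁻¹ • (c - x))) = s • (z - x) + (x - c) := by
    rw [← sub_sub, smul_sub s (z - x), smul_inv_smul₀ hs]; abel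
  rw [lin, mul_inv, inv_inv, mul_comm, mul_smul, h]

theorem lin_norm_le {x c : Eu n} {r s : ℝ} (hr : 0 < r) (z : Eu n)
    (h : ‖lin x c r s z‖ ≤ 1 / 2) : ‖x + s • (z - x) - c‖ ≤ r / 2 := by
  rw [lin, norm_smul, norm_inv, Real.norm_eq_abs, abs_of_pos hr, inv_mul_le_iff₀ hr] at h
  rw [show x + s • (z - x) - c = s • (z - x) + (x - c) by abel]
  linarith

theorem lin_cont (x c : Eu n) (r : ℝ) :
    Continuous fun q : ℝ × Eu n => lin x c r q.1 q.2 := by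
  unfold lin; fun_prop

/-- The kernel of the smooth average over the cube with center `x + s⁻¹(c-x)` and radius
`s⁻¹r`. -/
def Phi (x c : Eu n) (r s : ℝ) (z : Eu n) : ℝ := s ^ n * ((r⁻¹) ^ n * moll n (lin x c r s z))

/-- The derivative of `Phi` in `s`. -/
def dPhi (x c : Eu n) (r s : ℝ) (z : Eu n) : ℝ :=
  n * s ^ (n - 1) * ((r⁻¹) ^ n * moll n (lin x c r s z)) +
    s ^ n * ((r⁻¹) ^ n * fderiv ℝ (moll n) (lin x c r s z) (r⁻¹ • (z - x)))

theorem av_eq_Phi {Ω : Set (Eu n)} {F : Eu n → ℝ} {x c : Eu n} {r s : ℝ} (hs : s ≠ 0) :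
    av Ω F (x + s⁻¹ • (c - x)) (s⁻¹ * r) = ∫ z in Ω, F z * Phi x c r s z := by
  unfold av Phi
  simp only [lin_eq hs, mul_inv, inv_inv, mul_pow, mul_assoc]

theorem hasDerivAt_Phi (x c : Eu n) (r s : ℝ) (z : Eu n) :
    HasDerivAt (fun s => Phi x c r s z) (dPhi x c r s z) s := by
  have h1 : HasDerivAt (fun s => lin x c r s z) (r⁻¹ • (z - x)) s := by
    unfold lin
    have := (((hasDerivAt_id s).smul_const (z - x)).add_const (x - c)).const_smul r⁻¹
    rw [one_smul] at this
    exact this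
  have h2 : HasDerivAt (fun s => moll n (lin x c r s z))
      (fderiv ℝ (moll n) (lin x c r s z) (r⁻¹ • (z - x))) s :=
    ((moll_contDiff.differentiable (by simp)) _).hasFDerivAt.comp_hasDerivAt s h1
  exact (hasDerivAt_pow n s).mul (h2.const_mul ((r⁻¹) ^ n))

theorem Phi_cont (x c : Eu n) (r : ℝ) : Continuous fun q : ℝ × Eu n => Phi x c r q.1 q.2 := by
  unfold Phi
  exact (continuous_fst.pow n).mul
    (continuous_const.mul (moll_contDiff.continuous.comp (lin_cont x c r)))

theorem dPhi_cont (x c : Eu n) (r : ℝ) : Continuous fun q : ℝ × Eu n => dPhi x c r q.1 q.2 := by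
  have h1 : Continuous fun q : ℝ × Eu n => fderiv ℝ (moll n) (lin x c r q.1 q.2) :=
    (moll_contDiff.continuous_fderiv (by simp)).comp (lin_cont x c r)
  have h2 : Continuous fun q : ℝ × Eu n => r⁻¹ • (q.2 - x) := by fun_prop
  have h3 := moll_contDiff.continuous.comp (lin_cont x c r)
  unfold dPhi
  exact ((continuous_const.mul (continuous_fst.pow _)).mul (continuous_const.mul h3)).add
    ((continuous_fst.pow n).mul (continuous_const.mul (h1.clm_apply h2)))

theorem Phi_zero {x c : Eu n} {r s : ℝ} {z : Eu n} (h : 1 / 2 < ‖lin x c r s z‖) :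
    Phi x c r s z = 0 := by
  simp [Phi, moll_zero h]

theorem dPhi_zero {x c : Eu n} {r s : ℝ} {z : Eu n} (h : 1 / 2 < ‖lin x c r s z‖) :
    dPhi x c r s z = 0 := by
  simp [dPhi, moll_zero h, moll_fderiv_zero h]

/-- Differentiation of the averages along a cone with vertex `x`. -/
theorem hasDerivAt_av {Ω : Set (Eu n)} (hΩ : IsOpen Ω) {F : Eu n → ℝ} (hF : ContinuousOn F Ω)
    {x c : Eu n} {r σ : ℝ} (hr : 0 < r) (hσ : 0 < σ)
    (hcone : ∀ s, σ < s → ∀ y, ‖y - c‖ ≤ r / 2 → x + s⁻¹ • (y - x) ∈ Ω) {s : ℝ} (hs : σ < s) :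
    HasDerivAt (fun s => ∫ z in Ω, F z * Phi x c r s z) (∫ z in Ω, F z * dPhi x c r s z) s := by
  obtain ⟨s1, hs1, hs1'⟩ := exists_between hs
  set K : Set (Eu n) := (fun q : ℝ × Eu n => x + q.1⁻¹ • (q.2 - x)) ''
    (Icc s1 (s + 1) ×ˢ Metric.closedBall c (r / 2)) with hKdef
  have hK : IsCompact K := by
    refine (isCompact_Icc.prod (isCompact_closedBall _ _)).image_of_continuousOn ?_
    have hg : Continuous fun q : ℝ × Eu n => q.2 - x := by fun_prop
    refine continuousOn_const.add (ContinuousOn.fun_smul ?_ hg.continuousOn)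
    refine continuousOn_fst.inv₀ fun q hq => ?_
    have := hq.1.1
    linarith
  have hKΩ : K ⊆ Ω := by
    rintro _ ⟨q, hq, rfl⟩
    have h2 := hq.2
    rw [Metric.mem_closedBall, dist_eq_norm] at h2
    exact hcone q.1 (by linarith [hq.1.1]) q.2 h2
  have hout : ∀ t ∈ Icc s1 (s + 1), ∀ z ∉ K, 1 / 2 < ‖lin x c r t z‖ := by
    intro t ht z hz
    by_contra hle
    rw [not_lt] at hle
    refine hz ⟨(t, x + t • (z - x)), ⟨ht, ?_⟩, ?_⟩
    · rw [Metric.mem_closedBall, dist_eq_norm]; exact lin_norm_le hr z hle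
    · have : t ≠ 0 := by linarith [ht.1]
      simp [this]
  have hsI : s ∈ Icc s1 (s + 1) := ⟨hs1'.le, by linarith⟩
  have hcont : ∀ t, Continuous fun z => Phi x c r t z := fun t =>
    (Phi_cont x c r).comp (by fun_prop : Continuous fun z : Eu n => (t, z))
  have hdcont : ∀ t, Continuous fun z => dPhi x c r t z := fun t =>
    (dPhi_cont x c r).comp (by fun_prop : Continuous fun z : Eu n => (t, z))
  obtain ⟨M, hM⟩ := (isCompact_Icc.prod hK).exists_bound_of_continuousOn
    (dPhi_cont x c r).continuousOn (s := Icc s1 (s + 1) ×ˢ K)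
  have hM0 : ∀ t ∈ Icc s1 (s + 1), ∀ z, ‖F z * dPhi x c r t z‖ ≤
      K.indicator (fun z => |F z| * M) z := by
    intro t ht z
    by_cases hz : z ∈ K
    · rw [indicator_of_mem hz, norm_mul, Real.norm_eq_abs]
      exact mul_le_mul_of_nonneg_left (hM (t, z) ⟨ht, hz⟩) (abs_nonneg _)
    · rw [indicator_of_notMem hz, dPhi_zero (hout t ht z hz), mul_zero, norm_zero]
  refine (hasDerivAt_integral_of_dominated_loc_of_deriv_le (μ := volume.restrict Ω)
    (F := fun s z => F z * Phi x c r s z) (F' := fun s z => F z * dPhi x c r s z)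
    (bound := K.indicator fun z => |F z| * M)
    (s := Icc s1 (s + 1)) (Icc_mem_nhds hs1' (by linarith)) ?_ ?_ ?_ ?_ ?_ ?_).2
  · exact Eventually.of_forall fun t =>
      (hF.mul (hcont t).continuousOn).aestronglyMeasurable hΩ.measurableSet
  · exact integrableOn_of_compact hΩ (hF.mul (hcont s).continuousOn) hK hKΩ fun z hz => by
      rw [Phi_zero (hout s hsI z hz), mul_zero]
  · exact (hF.mul (hdcont s).continuousOn).aestronglyMeasurable hΩ.measurableSet
  · exact Eventually.of_forall fun z t ht => hM0 t ht z
  · refine Integrable.integrableOn ?_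
    rw [integrable_indicator_iff hK.measurableSet]
    exact (((hF.mono hKΩ).abs.mul continuousOn_const)).integrableOn_compact hK
  · exact Eventually.of_forall fun z t _ => (hasDerivAt_Phi x c r t z).const_mul (F z)

/-- The test functions whose divergence is `dPhi`. -/
def tst (x c : Eu n) (r s : ℝ) (i : Fin n) (z : Eu n) : ℝ :=
  s ^ (n - 1) * (r⁻¹) ^ n * (moll n (lin x c r s z) * (z i - x i))

theorem clm_eq_sum (L : Eu n →L[ℝ] ℝ) (v : Eu n) :
    L v = ∑ i, v i * L (Pi.single i 1) := by
  conv_lhs => rw [← Finset.univ_sum_single v, map_sum]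
  refine Finset.sum_congr rfl fun i _ => ?_
  rw [← smul_eq_mul, ← map_smul]
  congr 1
  rw [← Pi.single_smul, smul_eq_mul, mul_one]

theorem tst_hasFDerivAt (x c : Eu n) (r s : ℝ) (i : Fin n) (z : Eu n) :
    HasFDerivAt (tst x c r s i)
      ((s ^ (n - 1) * (r⁻¹) ^ n) • (moll n (lin x c r s z) • ContinuousLinearMap.proj i +
        (z i - x i) • (fderiv ℝ (moll n) (lin x c r s z)).comp
          ((r⁻¹ * s) • ContinuousLinearMap.id ℝ (Eu n)))) z := by
  have h1 : HasFDerivAt (fun z => lin x c r s z)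
      ((r⁻¹ * s) • ContinuousLinearMap.id ℝ (Eu n)) z := by
    have := ((((hasFDerivAt_id (𝕜 := ℝ) z).sub_const x).const_smul s).add_const
      (x - c)).const_smul r⁻¹
    rw [smul_smul] at this
    exact this
  have h2 := ((moll_contDiff.differentiable (by simp)) (lin x c r s z)).hasFDerivAt.comp z h1
  have h3 : HasFDerivAt (fun z : Eu n => z i - x i)
      (ContinuousLinearMap.proj (R := ℝ) (φ := fun _ : Fin n => ℝ) i) z :=
    (hasFDerivAt_apply i z).sub_const (x i)
  exact (h2.mul h3).const_mul (s ^ (n - 1) * (r⁻¹) ^ n)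

theorem dPhi_eq (hn : 0 < n) (x c : Eu n) (r s : ℝ) (z : Eu n) :
    dPhi x c r s z = ∑ i, fderiv ℝ (tst x c r s i) z (Pi.single i 1) := by
  have hs : s ^ n = s ^ (n - 1) * s := by rw [← pow_succ, Nat.sub_add_cancel hn]
  have h1 : ∀ i, fderiv ℝ (tst x c r s i) z (Pi.single i 1) =
      s ^ (n - 1) * (r⁻¹) ^ n * (moll n (lin x c r s z)) +
      s ^ (n - 1) * (r⁻¹) ^ n * (r⁻¹ * s) *
        ((z - x) i * fderiv ℝ (moll n) (lin x c r s z) (Pi.single i 1)) := by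
    intro i
    rw [(tst_hasFDerivAt x c r s i z).fderiv]
    simp
    ring
  simp only [h1]
  rw [Finset.sum_add_distrib, ← Finset.mul_sum, ← Finset.mul_sum,
    ← clm_eq_sum, Finset.sum_const, Finset.card_univ,
    Fintype.card_fin, nsmul_eq_mul, dPhi, map_smul, smul_eq_mul, hs]
  ring

theorem tst_contDiff (x c : Eu n) (r s : ℝ) (i : Fin n) :
    ContDiff ℝ (⊤ : ℕ∞) (tst x c r s i) := by
  unfold tst lin
  refine contDiff_const.mul ((moll_contDiff.comp ?_).mul ?_) <;> fun_prop

theorem tst_zero {x c : Eu n} {r s : ℝ} {i : Fin n} {z : Eu n} (h : 1 / 2 < ‖lin x c r s z‖) :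
    tst x c r s i z = 0 := by
  simp [tst, moll_zero h]

theorem mem_ball_iff_lin {x c : Eu n} {r s : ℝ} (hr : 0 < r) (hs : 0 < s) (z : Eu n) :
    z ∈ Metric.closedBall (x + s⁻¹ • (c - x)) (s⁻¹ * r / 2) ↔ ‖lin x c r s z‖ ≤ 1 / 2 := by
  have : 0 < s⁻¹ * r := by positivity
  rw [lin_eq hs.ne', norm_smul, norm_inv, Real.norm_eq_abs, abs_of_pos this,
    inv_mul_le_iff₀ this, Metric.mem_closedBall, dist_eq_norm]
  constructor <;> intro h <;> linarith

theorem holder_one {K : Set (Eu n)} {g : Eu n → Eu n} {q : ℝ} (hq : 1 < q)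
    (hK : volume K ≠ ⊤) (hg : AEStronglyMeasurable g (volume.restrict K))
    (hgq : IntegrableOn (fun z => ‖g z‖ ^ q) K) :
    ∫ z in K, ‖g z‖ ≤ (∫ z in K, ‖g z‖ ^ q) ^ (1 / q) * (volume.real K) ^ (1 - 1 / q) := by
  have hfin : Fact (volume K < ⊤) := ⟨hK.lt_top⟩
  have hq0 : 0 < q := by linarith
  have hpq := Real.HolderConjugate.conjExponent hq
  have h := integral_mul_le_Lp_mul_Lq_of_nonneg (μ := volume.restrict K) hpq
    (f := fun z => ‖g z‖) (g := fun _ => 1) (Eventually.of_forall fun z => norm_nonneg _)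
    (Eventually.of_forall fun z => zero_le_one) ?_ (memLp_const 1)
  · simp only [mul_one, Real.one_rpow, integral_const, measureReal_restrict_apply_univ,
      smul_eq_mul] at h
    rwa [show 1 / q.conjExponent = 1 - 1 / q by
      rw [Real.conjExponent]; field_simp] at h
  · have := (integrable_norm_rpow_iff (μ := volume.restrict K) hg (p := ENNReal.ofReal q)
      (by simpa using hq0) ENNReal.ofReal_ne_top).1 (by rwa [ENNReal.toReal_ofReal hq0.le])
    exact this.norm

/-- The weak gradient controls the derivative of the averages along a cone. -/
theorem deriv_av_le (hn : 0 < n) {Ω : Set (Eu n)} {F : Eu n → ℝ} {g : Eu n → Eu n}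
    (hΩ : IsOpen Ω) (hF : ContinuousOn F Ω) (hg : HasWeakGradOn F g Ω) {x c : Eu n} {r s Λ : ℝ}
    (hr : 0 < r) (hs : 0 < s) (hxc : ‖x - c‖ ≤ Λ * r)
    (hK : Metric.closedBall (x + s⁻¹ • (c - x)) (s⁻¹ * r / 2) ⊆ Ω) :
    |∫ z in Ω, F z * dPhi x c r s z| ≤
      n * (s ^ (n - 1) * (r⁻¹) ^ n * (mollM n * (s⁻¹ * (Λ + 1) * r))) *
        ∫ z in Metric.closedBall (x + s⁻¹ • (c - x)) (s⁻¹ * r / 2), ‖g z‖ := by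
  set K := Metric.closedBall (x + s⁻¹ • (c - x)) (s⁻¹ * r / 2) with hKdef
  have hKc : IsCompact K := isCompact_closedBall _ _
  have hout : ∀ z ∉ K, 1 / 2 < ‖lin x c r s z‖ := fun z hz =>
    not_le.1 fun h => hz ((mem_ball_iff_lin hr hs z).2 h)
  have hcs : ∀ i, HasCompactSupport (tst x c r s i) := fun i =>
    HasCompactSupport.intro hKc fun z hz => tst_zero (hout z hz)
  have hts : ∀ i, tsupport (tst x c r s i) ⊆ K := fun i =>
    closure_minimal (fun z hz => by
      by_contra h
      exact hz (tst_zero (hout z h))) hKc.isClosed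
  have hintg : ∀ i, IntegrableOn
      (fun z => F z * fderiv ℝ (tst x c r s i) z (Pi.single i 1)) Ω := by
    intro i
    refine integrableOn_of_compact hΩ (hF.mul ?_) hKc hK fun z hz => ?_
    · exact (((tst_contDiff x c r s i).continuous_fderiv (by simp)).clm_apply
        continuous_const).continuousOn
    · rw [fderiv_of_notMem_tsupport ℝ (fun h => hz (hts i h))]; simp
  have h1 : ∫ z in Ω, F z * dPhi x c r s z = ∑ i, -∫ z in Ω, g z i * tst x c r s i z := by
    simp_rw [dPhi_eq hn, Finset.mul_sum]
    rw [integral_finsetSum _ fun i _ => hintg i]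
    exact Finset.sum_congr rfl fun i _ => hg.2.2 _ (tst_contDiff x c r s i) (hcs i)
      ((hts i).trans hK) i
  set A := s ^ (n - 1) * (r⁻¹) ^ n * (mollM n * (s⁻¹ * (Λ + 1) * r)) with hA
  have hΛ : 0 ≤ Λ + 1 := by
    have := (norm_nonneg _).trans hxc
    have := nonneg_of_mul_nonneg_left this hr
    linarith
  have hM := mollM_pos (n := n)
  have hA0 : 0 ≤ A := by positivity
  have htst : ∀ i, ∀ z ∈ K, |tst x c r s i z| ≤ A := by
    intro i z hz
    have h2 : |z i - x i| ≤ s⁻¹ * (Λ + 1) * r := by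
      have h3 := norm_le_pi_norm (z - x) i
      rw [Real.norm_eq_abs, Pi.sub_apply] at h3
      rw [hKdef, Metric.mem_closedBall, dist_eq_norm] at hz
      have h4 : ‖z - x‖ ≤ s⁻¹ * r / 2 + s⁻¹ * (Λ * r) := by
        have : z - x = (z - (x + s⁻¹ • (c - x))) + s⁻¹ • (c - x) := by abel
        rw [this]
        refine (norm_add_le _ _).trans (add_le_add hz ?_)
        rw [norm_smul, Real.norm_eq_abs, abs_of_pos (by positivity), norm_sub_rev]
        exact mul_le_mul_of_nonneg_left hxc (by positivity)
      have h5 : 0 ≤ s⁻¹ * r := by positivity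
      linarith
    rw [tst, abs_mul, abs_of_nonneg (by positivity : 0 ≤ s ^ (n - 1) * (r⁻¹) ^ n), abs_mul,
      abs_of_nonneg (moll_nonneg _)]
    exact mul_le_mul_of_nonneg_left (mul_le_mul (moll_le _) h2 (abs_nonneg _) hM.le)
      (by positivity)
  have hgi : IntegrableOn g K := hg.2.1.integrableOn_compact_subset hK hKc
  have hbd : ∀ i, |∫ z in Ω, g z i * tst x c r s i z| ≤ A * ∫ z in K, ‖g z‖ := by
    intro i
    rw [setIntegral_eq_of_subset_of_forall_sdiff_eq_zero hΩ.measurableSet hK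
      (fun z hz => by rw [tst_zero (hout z hz.2), mul_zero]), ← Real.norm_eq_abs,
      ← integral_const_mul]
    refine norm_integral_le_of_norm_le (hgi.norm.const_mul A) ?_
    filter_upwards [ae_restrict_mem hKc.measurableSet] with z hz
    rw [norm_mul, mul_comm]
    exact mul_le_mul (htst i z hz) (norm_le_pi_norm (g z) i) (norm_nonneg _) hA0
  rw [h1]
  refine (Finset.abs_sum_le_sum_abs _ _).trans ?_
  simp_rw [abs_neg]
  refine (Finset.sum_le_sum fun i _ => hbd i).trans_eq ?_
  rw [Finset.sum_const, Finset.card_univ, Fintype.card_fin, nsmul_eq_mul]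
  ring

/-- The constant in Morrey's estimate. -/
def morC (n : ℕ) (q Λ : ℝ) : ℝ := n * mollM n * (Λ + 1) / (1 - n / q)

/-- The local energy of a gradient in a dilated cube. -/
def en (Ω : Set (Eu n)) (g : Eu n → Eu n) (q : ℝ) (c : Eu n) (R : ℝ) : ℝ :=
  ∫ z in Ω ∩ Metric.closedBall c R, ‖g z‖ ^ q

theorem en_nonneg (Ω : Set (Eu n)) (g : Eu n → Eu n) (q : ℝ) (c : Eu n) (R : ℝ) :
    0 ≤ en Ω g q c R := by
  unfold en
  exact integral_nonneg fun z => by positivity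

theorem deriv_av_le' (hn : 0 < n) {Ω : Set (Eu n)} {F : Eu n → ℝ} {g : Eu n → Eu n}
    (hΩ : IsOpen Ω) (hF : ContinuousOn F Ω) (hg : HasWeakGradOn F g Ω) {q : ℝ} (hq : n < q)
    {x c : Eu n} {r s Λ : ℝ} (hr : 0 < r) (hs : 1 ≤ s) (hΛ : 1 ≤ Λ) (hxc : ‖x - c‖ ≤ Λ * r)
    (hintg : IntegrableOn (fun z => ‖g z‖ ^ q) (Ω ∩ Metric.closedBall c (Λ * r)))
    (hK : Metric.closedBall (x + s⁻¹ • (c - x)) (s⁻¹ * r / 2) ⊆ Ω) :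
    |∫ z in Ω, F z * dPhi x c r s z| ≤
      n * mollM n * (Λ + 1) * r ^ (1 - n / q) * en Ω g q c (Λ * r) ^ (1 / q) *
        s ^ ((n : ℝ) / q - 1 - 1) := by
  have hs0 : 0 < s := by linarith
  have hn1 : (1 : ℝ) ≤ n := by exact_mod_cast hn
  have hq1 : 1 < q := by linarith
  set K := Metric.closedBall (x + s⁻¹ • (c - x)) (s⁻¹ * r / 2) with hKdef
  have hsub : K ⊆ Ω ∩ Metric.closedBall c (Λ * r) := by
    refine subset_inter hK (Metric.closedBall_subset_closedBall' ?_)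
    have h1 : x + s⁻¹ • (c - x) - c = (1 - s⁻¹) • (x - c) := by
      rw [sub_smul, one_smul, ← neg_sub c x, smul_neg, sub_neg_eq_add]; abel
    have h2 : 0 ≤ 1 - s⁻¹ := by rw [sub_nonneg]; exact inv_le_one_of_one_le₀ hs
    rw [dist_eq_norm, h1, norm_smul, Real.norm_eq_abs, abs_of_nonneg h2]
    have h3 := mul_le_mul_of_nonneg_left hxc h2
    have h4 : 0 ≤ s⁻¹ * r := by positivity
    nlinarith
  have h1 := deriv_av_le hn hΩ hF hg hr hs0 hxc hK
  have hρ : 0 < s⁻¹ * r := by positivity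
  have h2 := holder_one (K := K) (g := g) hq1
    (isCompact_closedBall _ _).measure_ne_top
    (hg.2.1.integrableOn_compact_subset hK (isCompact_closedBall _ _)).aestronglyMeasurable
    (hintg.mono_set hsub)
  have h3 : volume.real K = (s⁻¹ * r) ^ n := by
    rw [Measure.real, hKdef, vol_closedBall _ (by positivity), ENNReal.toReal_ofReal (by positivity)]
    congr 1; ring
  have h4 : (∫ z in K, ‖g z‖ ^ q) ^ (1 / q) ≤ en Ω g q c (Λ * r) ^ (1 / q) := by
    refine Real.rpow_le_rpow (integral_nonneg fun z => by positivity) ?_ (by positivity)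
    exact setIntegral_mono_set hintg (Eventually.of_forall fun z => by positivity)
      hsub.eventuallyLE
  rw [h3] at h2
  have hM := mollM_pos (n := n)
  have h5 : s ^ (n - 1) * (r⁻¹) ^ n * (s⁻¹ * r) * ((s⁻¹ * r) ^ n) ^ (1 - 1 / q) =
      r ^ (1 - n / q) * s ^ ((n : ℝ) / q - 1 - 1) := by
    rw [← Real.rpow_natCast (s⁻¹ * r) n, ← Real.rpow_mul hρ.le,
      Real.mul_rpow (by positivity) hr.le, Real.inv_rpow hs0.le, ← Real.rpow_neg hs0.le,
      inv_pow, ← Real.rpow_natCast, ← Real.rpow_natCast, ← Real.rpow_neg hr.le,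
      ← Real.rpow_neg_one s, Nat.cast_sub hn]
    calc s ^ ((n : ℝ) - (1 : ℕ)) * r ^ (-(n : ℝ)) * (s ^ (-1 : ℝ) * r) *
          (s ^ (-((n : ℝ) * (1 - 1 / q))) * r ^ ((n : ℝ) * (1 - 1 / q)))
        = (s ^ ((n : ℝ) - (1 : ℕ)) * s ^ (-1 : ℝ) * s ^ (-((n : ℝ) * (1 - 1 / q)))) *
          (r ^ (-(n : ℝ)) * r ^ (1 : ℝ) * r ^ ((n : ℝ) * (1 - 1 / q))) := by
            rw [Real.rpow_one]; ring
      _ = r ^ (1 - n / q) * s ^ ((n : ℝ) / q - 1 - 1) := by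
            rw [← Real.rpow_add hs0, ← Real.rpow_add hs0, ← Real.rpow_add hr,
              ← Real.rpow_add hr, mul_comm]
            congr 2 <;> (push_cast; ring)
  calc |∫ z in Ω, F z * dPhi x c r s z|
      ≤ n * (s ^ (n - 1) * (r⁻¹) ^ n * (mollM n * (s⁻¹ * (Λ + 1) * r))) *
        (en Ω g q c (Λ * r) ^ (1 / q) * ((s⁻¹ * r) ^ n) ^ (1 - 1 / q)) := by
          refine h1.trans (mul_le_mul_of_nonneg_left (h2.trans ?_) (by positivity))
          exact mul_le_mul_of_nonneg_right h4 (by positivity)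
    _ = n * mollM n * (Λ + 1) * en Ω g q c (Λ * r) ^ (1 / q) *
        (s ^ (n - 1) * (r⁻¹) ^ n * (s⁻¹ * r) * ((s⁻¹ * r) ^ n) ^ (1 - 1 / q)) := by ring
    _ = _ := by rw [h5]; ring

/-- Smooth averages over the homothetic images of a cube towards a point `x` differ from the
average over the cube by the local energy. -/
theorem morrey_cone (hn : 0 < n) {Ω : Set (Eu n)} {F : Eu n → ℝ} {g : Eu n → Eu n}
    (hΩ : IsOpen Ω) (hF : ContinuousOn F Ω) (hg : HasWeakGradOn F g Ω) {q : ℝ} (hq : n < q)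
    {x c : Eu n} {r Λ : ℝ} (hr : 0 < r) (hΛ : 1 ≤ Λ) (hxc : ‖x - c‖ ≤ Λ * r)
    (hintg : IntegrableOn (fun z => ‖g z‖ ^ q) (Ω ∩ Metric.closedBall c (Λ * r)))
    (hvis : QVisible Ω (cube c r) x) {S : ℝ} (hS : 1 ≤ S) :
    |av Ω F (x + S⁻¹ • (c - x)) (S⁻¹ * r) - av Ω F c r| ≤
      morC n q Λ * r ^ (1 - n / q) * en Ω g q c (Λ * r) ^ (1 / q) := by
  have hn1 : (1 : ℝ) ≤ n := by exact_mod_cast hn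
  have hq0 : 0 < q := by linarith
  have he1 : (n : ℝ) / q < 1 := by rwa [div_lt_one hq0]
  set A := n * mollM n * (Λ + 1) * r ^ (1 - n / q) * en Ω g q c (Λ * r) ^ (1 / q) with hA
  have hM := mollM_pos (n := n)
  have hA0 : 0 ≤ A := by
    have := en_nonneg Ω g q c (Λ * r)
    positivity
  set σ := (1 + 1 / (2 * Λ + 1))⁻¹ with hσ
  have hσ0 : 0 < σ := by positivity
  have hσ1 : σ < 1 := inv_lt_one_of_one_lt₀ (by
    have : 0 < 1 / (2 * Λ + 1) := by positivity
    linarith)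
  have hcone : ∀ s, σ < s → ∀ y, ‖y - c‖ ≤ r / 2 → x + s⁻¹ • (y - x) ∈ Ω := by
    intro s hs y hy
    have hs0 : 0 < s := hσ0.trans hs
    rcases le_total 1 s with h | h
    · refine hvis y ?_ s⁻¹ ⟨by positivity, inv_le_one_of_one_le₀ h⟩
      rw [cube, Metric.mem_closedBall, dist_eq_norm]; linarith
    · have h1 := hvis (x + s⁻¹ • (y - x)) ?_ 1 ⟨one_pos, le_rfl⟩
      · rwa [one_smul, add_sub_cancel] at h1
      have h2 : s⁻¹ ≤ 1 + 1 / (2 * Λ + 1) := by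
        have := (inv_lt_inv₀ hs0 hσ0).2 hs
        rw [hσ, inv_inv] at this
        exact this.le
      have h3 : 1 ≤ s⁻¹ := (one_le_inv₀ hs0).2 h
      have h4 : x + s⁻¹ • (y - x) - c = (y - c) + (s⁻¹ - 1) • (y - x) := by
        rw [sub_smul, one_smul]; abel
      have h5 : ‖y - x‖ ≤ (Λ + 1 / 2) * r := by
        have : y - x = (y - c) - (x - c) := by abel
        rw [this]
        refine (norm_sub_le _ _).trans ?_
        linarith
      rw [cube, Metric.mem_closedBall, dist_eq_norm, h4]
      refine (norm_add_le _ _).trans ?_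
      rw [norm_smul, Real.norm_eq_abs, abs_of_nonneg (by linarith)]
      have h6 : (s⁻¹ - 1) * ‖y - x‖ ≤ 1 / (2 * Λ + 1) * ((Λ + 1 / 2) * r) :=
        mul_le_mul (by linarith) h5 (norm_nonneg _) (by positivity)
      have h7 : 1 / (2 * Λ + 1) * ((Λ + 1 / 2) * r) = r / 2 := by field_simp
      linarith
  have hball : ∀ s, σ < s → Metric.closedBall (x + s⁻¹ • (c - x)) (s⁻¹ * r / 2) ⊆ Ω := by
    intro s hs z hz
    have hs0 : 0 < s := hσ0.trans hs
    have := hcone s hs _ (lin_norm_le hr z ((mem_ball_iff_lin hr hs0 z).1 hz))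
    simpa [hs0.ne'] using this
  set B := fun s => ∫ z in Ω, F z * Phi x c r s z with hB
  have hBd : ∀ s, σ < s → HasDerivAt B (∫ z in Ω, F z * dPhi x c r s z) s := fun s hs =>
    hasDerivAt_av hΩ hF hr hσ0 hcone hs
  have hBb : ∀ s, 1 ≤ s → |∫ z in Ω, F z * dPhi x c r s z| ≤ A * s ^ ((n : ℝ) / q - 1 - 1) :=
    fun s hs => deriv_av_le' hn hΩ hF hg hq hr hs hΛ hxc hintg (hball s (by linarith))
  have hpow : ∀ s, 1 ≤ s → HasDerivAt (fun s : ℝ => A / (1 - n / q) * s ^ ((n : ℝ) / q - 1))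
      (-(A * s ^ ((n : ℝ) / q - 1 - 1))) s := by
    intro s hs
    have h1 := (Real.hasDerivAt_rpow_const (p := (n : ℝ) / q - 1)
      (Or.inl (by linarith : s ≠ 0))).const_mul (A / (1 - n / q))
    have h2 : A / (1 - n / q) * ((n : ℝ) / q - 1) = -A := by
      rw [div_mul_eq_mul_div, div_eq_iff (by linarith)]; ring
    rw [← mul_assoc, h2, neg_mul] at h1
    exact h1
  -- both `A/(1-n/q) s^(n/q-1) ± B(s)` decrease for `s ≥ 1`
  have key : ∀ e : ℝ, |e| = 1 → e * (B S - B 1) ≤ A / (1 - n / q) := by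
    intro e he
    have hd : ∀ s, 1 ≤ s → HasDerivAt
        (fun s => A / (1 - n / q) * s ^ ((n : ℝ) / q - 1) + e * B s)
        (-(A * s ^ ((n : ℝ) / q - 1 - 1)) + e * ∫ z in Ω, F z * dPhi x c r s z) s :=
      fun s hs => (hpow s hs).add ((hBd s (by linarith)).const_mul e)
    have hanti : AntitoneOn (fun s => A / (1 - n / q) * s ^ ((n : ℝ) / q - 1) + e * B s)
        (Ici 1) := by
      refine antitoneOn_of_deriv_nonpos (convex_Ici 1) ?_ ?_ ?_
      · exact fun s hs => (hd s hs).continuousAt.continuousWithinAt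
      · rw [interior_Ici]
        exact fun s hs => (hd s (le_of_lt hs)).differentiableAt.differentiableWithinAt
      · rw [interior_Ici]
        intro s hs
        have hs' : 1 ≤ s := le_of_lt hs
        rw [(hd s hs').deriv]
        have h1 := hBb s hs'
        have h2 := le_abs_self (e * ∫ z in Ω, F z * dPhi x c r s z)
        rw [abs_mul, he, one_mul] at h2
        linarith
    have h1 := hanti (mem_Ici.2 le_rfl) (mem_Ici.2 hS) hS
    simp only [Real.one_rpow, mul_one] at h1
    have h2 : 0 ≤ A / (1 - n / q) * S ^ ((n : ℝ) / q - 1) :=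
      mul_nonneg (div_nonneg hA0 (by linarith)) (Real.rpow_nonneg (by linarith) _)
    linarith
  have h1 := key 1 (by simp)
  have h2 := key (-1) (by simp)
  have hBS : B S = av Ω F (x + S⁻¹ • (c - x)) (S⁻¹ * r) := (av_eq_Phi (by linarith)).symm
  have hB1 : B 1 = av Ω F c r := by
    have := av_eq_Phi (Ω := Ω) (F := F) (x := x) (c := c) (r := r) (s := 1) one_ne_zero
    rw [inv_one, one_smul, one_mul, add_sub_cancel] at this
    exact this.symm
  rw [← hBS, ← hB1]
  have h3 : morC n q Λ * r ^ (1 - n / q) * en Ω g q c (Λ * r) ^ (1 / q) = A / (1 - n / q) := by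
    rw [morC, hA]; ring
  rw [h3, abs_le]
  constructor <;> linarith

/-- Morrey's estimate in a cube contained in `Ω`. -/
theorem morrey_cube (hn : 0 < n) {Ω : Set (Eu n)} {F : Eu n → ℝ} {g : Eu n → Eu n}
    (hΩ : IsOpen Ω) (hF : ContinuousOn F Ω) (hg : HasWeakGradOn F g Ω) {q : ℝ} (hq : n < q)
    {x c : Eu n} {r : ℝ} (hr : 0 < r) (hx : x ∈ Metric.closedBall c r)
    (hc : Metric.closedBall c r ⊆ Ω)
    (hintg : IntegrableOn (fun z => ‖g z‖ ^ q) (Ω ∩ Metric.closedBall c r)) :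
    |F x - av Ω F c r| ≤ morC n q 1 * r ^ (1 - n / q) * en Ω g q c r ^ (1 / q) := by
  have hxc : ‖x - c‖ ≤ 1 * r := by rw [one_mul, ← dist_eq_norm]; exact hx
  have hvis : QVisible Ω (cube c r) x := fun y hy t ht => by
    have := (convex_closedBall c r).add_smul_sub_mem hx hy ⟨ht.1.le, ht.2⟩
    exact hc this
  have hmain := fun {S : ℝ} (hS : 1 ≤ S) => morrey_cone hn hΩ hF hg hq (x := x) hr le_rfl hxc
    (by rwa [one_mul]) hvis hS
  rw [one_mul] at hmain
  refine le_of_forall_pos_le_add fun e he => ?_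
  have hcx := (hF.continuousAt (hΩ.mem_nhds (hc hx)))
  obtain ⟨δ, hδ, hδF⟩ := Metric.continuousAt_iff.1 hcx e he
  set S := max 1 (4 * r / δ) with hS
  have hS1 : 1 ≤ S := le_max_left _ _
  have hS0 : 0 < S := by linarith
  have hS2 : S⁻¹ * (2 * r) < δ := by
    rw [inv_mul_lt_iff₀ hS0]
    have := (div_le_iff₀ hδ).1 (le_max_right 1 (4 * r / δ))
    rw [← hS] at this
    linarith
  have hav : |av Ω F (x + S⁻¹ • (c - x)) (S⁻¹ * r) - F x| ≤ e := by
    refine av_near hΩ hF (by positivity) ?_ ?_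
    · refine (Metric.closedBall_subset_closedBall' ?_).trans hc
      rw [dist_eq_norm, show x + S⁻¹ • (c - x) - c = (1 - S⁻¹) • (x - c) by
        rw [sub_smul, one_smul, ← neg_sub c x, smul_neg, sub_neg_eq_add]; abel]
      have h2 : 0 ≤ 1 - S⁻¹ := by rw [sub_nonneg]; exact inv_le_one_of_one_le₀ hS1
      rw [norm_smul, Real.norm_eq_abs, abs_of_nonneg h2]
      have := mul_le_mul_of_nonneg_left hxc h2
      linarith
    · intro z hz
      rw [← Real.dist_eq]
      refine (hδF ?_).le
      rw [Metric.mem_closedBall] at hz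
      have h1 := dist_triangle z (x + S⁻¹ • (c - x)) x
      have h2 : dist (x + S⁻¹ • (c - x)) x ≤ S⁻¹ * r := by
        rw [dist_self_add_left, norm_smul, Real.norm_eq_abs, abs_of_pos (by positivity),
          norm_sub_rev]
        rw [one_mul] at hxc
        exact mul_le_mul_of_nonneg_left hxc (by positivity)
      linarith
  have h3 := hmain hS1
  rw [abs_le] at hav h3 ⊢
  constructor <;> linarith

/-- Morrey's estimate for traces at visible boundary points. -/
theorem morrey_trace (hn : 0 < n) {Ω : Set (Eu n)} {F : Eu n → ℝ} {g : Eu n → Eu n}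
    (hΩ : IsOpen Ω) (hF : ContinuousOn F Ω) (hg : HasWeakGradOn F g Ω) {q : ℝ} (hq : n < q)
    {α : ℝ} (hα : 0 < α) (hα1 : α ≤ 1) {f : Eu n → ℝ} (hf : TraceEq Ω α F f)
    {x c : Eu n} {r Λ : ℝ} (hr : 0 < r) (hΛ : 1 ≤ Λ) (hxc : dist x c ≤ Λ * r)
    (hx : x ∈ frontier Ω)
    (hintg : IntegrableOn (fun z => ‖g z‖ ^ q) (Ω ∩ Metric.closedBall c (Λ * r)))
    (hvis : QVisible Ω (cube c r) x) :
    |f x - av Ω F c r| ≤ morC n q Λ * r ^ (1 - n / q) * en Ω g q c (Λ * r) ^ (1 / q) := by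
  rw [dist_eq_norm] at hxc
  set τ : ℕ → ℝ := fun k => ((k : ℝ) + 1)⁻¹ with hτ
  have hτ0 : ∀ k, 0 < τ k := fun k => by positivity
  have hτ1 : ∀ k, τ k ≤ 1 := fun k => inv_le_one_of_one_le₀ (by
    have : (0 : ℝ) ≤ k := by positivity
    linarith)
  have hτt : Tendsto τ atTop (nhds 0) := by
    have := tendsto_one_div_add_atTop_nhds_zero_nat (𝕜 := ℝ)
    simpa only [one_div] using this
  have hacc := accessSeq_of_visible hΩ hα hα1 hr hx hvis (fun k => ⟨hτ0 k, hτ1 k⟩) hτt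
  have hlim := hf x (accessible_of_visible hΩ hα hα1 hr hx hvis) _ hacc
  have he1 : 0 < 1 - (n : ℝ) / q := by
    have hn1 : (1 : ℝ) ≤ n := by exact_mod_cast hn
    rw [sub_pos, div_lt_one (by linarith)]; exact hq
  have hC : 0 ≤ morC n q 1 := by
    have := mollM_pos (n := n)
    unfold morC
    positivity
  set E := en Ω g q c (Λ * r) with hE
  have hE0 : 0 ≤ E := en_nonneg _ _ _ _ _
  have hq0 : 0 < q := by
    have : (0 : ℝ) ≤ n := by positivity
    linarith
  have hbound : ∀ k, |F (x + τ k • (c - x)) - av Ω F c r| ≤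
      morC n q Λ * r ^ (1 - n / q) * E ^ (1 / q) +
        morC n q 1 * (τ k * r) ^ (1 - n / q) * E ^ (1 / q) := by
    intro k
    have hsubΩ : Metric.closedBall (x + τ k • (c - x)) (τ k * r) ⊆ Ω := by
      intro z hz
      have h1 := hvis (x + (τ k)⁻¹ • (z - x)) ?_ (τ k) ⟨hτ0 k, hτ1 k⟩
      · rwa [add_sub_cancel_left, smul_inv_smul₀ (hτ0 k).ne', add_sub_cancel] at h1
      · rw [Metric.mem_closedBall, dist_eq_norm] at hz
        rw [cube, Metric.mem_closedBall, dist_eq_norm]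
        have : x + (τ k)⁻¹ • (z - x) - c = (τ k)⁻¹ • (z - (x + τ k • (c - x))) := by
          rw [← sub_sub, smul_sub (τ k)⁻¹ (z - x), inv_smul_smul₀ (hτ0 k).ne']; abel
        rw [this, norm_smul, Real.norm_eq_abs, abs_of_pos (inv_pos.2 (hτ0 k)),
          inv_mul_le_iff₀ (hτ0 k)]
        exact hz
    have hsub : Ω ∩ Metric.closedBall (x + τ k • (c - x)) (τ k * r) ⊆
        Ω ∩ Metric.closedBall c (Λ * r) := by
      refine inter_subset_inter_right _ (Metric.closedBall_subset_closedBall' ?_)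
      rw [dist_eq_norm, show x + τ k • (c - x) - c = (1 - τ k) • (x - c) by
        rw [sub_smul, one_smul, ← neg_sub c x, smul_neg, sub_neg_eq_add]; abel]
      have h2 : 0 ≤ 1 - τ k := sub_nonneg.2 (hτ1 k)
      rw [norm_smul, Real.norm_eq_abs, abs_of_nonneg h2]
      have h3 := mul_le_mul_of_nonneg_left hxc h2
      have h4 : 0 ≤ τ k * r := by have := hτ0 k; positivity
      nlinarith
    have hrk : 0 < τ k * r := mul_pos (hτ0 k) hr
    have h1 := morrey_cube hn hΩ hF hg hq (x := x + τ k • (c - x)) hrk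
      (Metric.mem_closedBall_self hrk.le) hsubΩ (hintg.mono_set hsub)
    have h2 := morrey_cone hn hΩ hF hg hq hr hΛ hxc hintg hvis (S := (τ k)⁻¹)
      ((one_le_inv₀ (hτ0 k)).2 (hτ1 k))
    rw [inv_inv] at h2
    have h3 : en Ω g q (x + τ k • (c - x)) (τ k * r) ≤ E :=
      setIntegral_mono_set hintg (Eventually.of_forall fun z => by positivity) hsub.eventuallyLE
    have h4 : morC n q 1 * (τ k * r) ^ (1 - n / q) *
          en Ω g q (x + τ k • (c - x)) (τ k * r) ^ (1 / q) ≤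
        morC n q 1 * (τ k * r) ^ (1 - n / q) * E ^ (1 / q) :=
      mul_le_mul_of_nonneg_left (Real.rpow_le_rpow (en_nonneg _ _ _ _ _) h3 (by positivity))
        (by positivity)
    rw [abs_le] at h1 h2 ⊢
    constructor <;> linarith
  have ht1 : Tendsto (fun k => |F (x + τ k • (c - x)) - av Ω F c r|) atTop
      (nhds |f x - av Ω F c r|) := (hlim.sub_const _).abs
  have ht2 : Tendsto (fun k => morC n q Λ * r ^ (1 - n / q) * E ^ (1 / q) +
      morC n q 1 * (τ k * r) ^ (1 - n / q) * E ^ (1 / q)) atTop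
      (nhds (morC n q Λ * r ^ (1 - n / q) * E ^ (1 / q))) := by
    have h1 := hτt.mul_const r
    rw [zero_mul] at h1
    have h2 := h1.rpow_const (p := 1 - (n : ℝ) / q) (Or.inr he1.le)
    rw [Real.zero_rpow he1.ne'] at h2
    have h3 := ((h2.const_mul (morC n q 1)).mul_const (E ^ (1 / q))).const_add
      (morC n q Λ * r ^ (1 - n / q) * E ^ (1 / q))
    simpa using h3
  exact le_of_tendsto_of_tendsto' ht1 ht2 hbound

/-! ### A discrete maximal inequality -/

/-- The constant in the discrete maximal inequality. -/
def maxC (n : ℕ) (Λ s : ℝ) : ℝ := s * (2 * (4 * Λ) ^ n) / (s - 1) * (2 * Λ ^ n) ^ (s - 1)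

/-- The weak-type estimate, from Vitali's covering lemma: the cubes on which the averages exceed
`t` are controlled by the mass of `h` where `h` is comparable to at least `t`. -/
theorem weak_type {ι : Type*} (S : Finset ι) {c : ι → Eu n} {r a : ι → ℝ} {Λ : ℝ} (hΛ : 1 ≤ Λ)
    (hr : ∀ i ∈ S, 0 < r i) {h : Eu n → ℝ} (hm : Measurable h)
    (ha : ∀ i ∈ S, ENNReal.ofReal (a i) * volume (Metric.closedBall (c i) (r i)) ≤
      ∫⁻ z in Metric.closedBall (c i) (Λ * r i), ENNReal.ofReal (h z))
    (hd : ∀ i ∈ S, ∀ j ∈ S, i ≠ j → Disjoint (Metric.ball (c i) (r i)) (Metric.ball (c j) (r j)))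
    {t : ℝ} (ht : 0 < t) :
    ∑ i ∈ S with t < a i, volume (Metric.closedBall (c i) (r i)) ≤
      ENNReal.ofReal (2 * (4 * Λ) ^ n / t) *
        ∫⁻ z in {z | t < 2 * Λ ^ n * h z}, ENNReal.ofReal (h z) := by
  classical
  have hΛ0 : 0 < Λ := by linarith
  set A := {z | t < 2 * Λ ^ n * h z} with hA
  have hAm : MeasurableSet A := measurableSet_lt measurable_const (hm.const_mul _)
  set St := S.filter fun i => t < a i with hSt
  have hSr : ∀ i ∈ St, 0 < r i := fun i hi => hr i (Finset.mem_filter.1 hi).1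
  obtain ⟨R, hR⟩ := (St.image fun i => Λ * r i).bddAbove
  obtain ⟨u, huS, hud, hu⟩ := Vitali.exists_disjoint_subfamily_covering_enlargement_closedBall
    (St : Set ι) c (fun i => Λ * r i) R
    (fun i hi => hR (Finset.mem_coe.2 (Finset.mem_image_of_mem _ hi))) 4 (by norm_num)
  have hufin : u.Finite := St.finite_toSet.subset huS
  set U := hufin.toFinset with hU
  have hUS : ∀ b ∈ U, b ∈ St := fun b hb => huS (hufin.mem_toFinset.1 hb)
  have hone : ∀ b ∈ U, volume (Metric.closedBall (c b) (r b)) ≤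
      ENNReal.ofReal (2 / t) *
        ∫⁻ z in Metric.closedBall (c b) (Λ * r b) ∩ A, ENNReal.ofReal (h z) := by
    intro b hb
    have hbS := Finset.mem_filter.1 (hUS b hb)
    have hrb := hr b hbS.1
    have h1 := ha b hbS.1
    rw [← lintegral_inter_add_sdiff _ _ hAm] at h1
    have h2 : ∫⁻ z in Metric.closedBall (c b) (Λ * r b) \ A, ENNReal.ofReal (h z) ≤
        ENNReal.ofReal (t * (2 * r b) ^ n / 2) := by
      calc ∫⁻ z in Metric.closedBall (c b) (Λ * r b) \ A, ENNReal.ofReal (h z)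
          ≤ ∫⁻ _z in Metric.closedBall (c b) (Λ * r b) \ A, ENNReal.ofReal (t / (2 * Λ ^ n)) := by
            refine setLIntegral_mono' (measurableSet_closedBall.diff hAm) fun z hz => ?_
            refine ENNReal.ofReal_le_ofReal ?_
            rw [le_div_iff₀ (by positivity)]
            have := hz.2
            simp only [hA, mem_ofPred_eq, not_lt] at this
            linarith
        _ ≤ ENNReal.ofReal (t / (2 * Λ ^ n)) * volume (Metric.closedBall (c b) (Λ * r b)) := by
            rw [setLIntegral_const]
            gcongr
            exact sdiff_subset
        _ = _ := by
            rw [vol_closedBall _ (by positivity), ← ENNReal.ofReal_mul (by positivity)]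
            congr 1
            rw [show 2 * (Λ * r b) = Λ * (2 * r b) by ring, mul_pow]
            field_simp
    have h3 : ENNReal.ofReal (t * (2 * r b) ^ n / 2) + ENNReal.ofReal (t * (2 * r b) ^ n / 2) ≤
        ENNReal.ofReal (a b) * volume (Metric.closedBall (c b) (r b)) := by
      rw [← ENNReal.ofReal_add (by positivity) (by positivity), add_halves,
        vol_closedBall _ hrb.le, ← ENNReal.ofReal_mul (ht.trans hbS.2).le]
      refine ENNReal.ofReal_le_ofReal ?_
      exact mul_le_mul_of_nonneg_right hbS.2.le (by positivity)
    have h4 : ENNReal.ofReal (t * (2 * r b) ^ n / 2) ≤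
        ∫⁻ z in Metric.closedBall (c b) (Λ * r b) ∩ A, ENNReal.ofReal (h z) := by
      have h5 := (h3.trans h1).trans (add_le_add_right h2 _)
      exact (ENNReal.add_le_add_iff_right ENNReal.ofReal_ne_top).1 h5
    rw [vol_closedBall _ hrb.le]
    refine le_trans (le_of_eq ?_) (mul_le_mul_right h4 _)
    rw [← ENNReal.ofReal_mul (by positivity)]
    congr 1
    field_simp
  calc ∑ i ∈ St, volume (Metric.closedBall (c i) (r i))
      = ∑ i ∈ St, volume (Metric.ball (c i) (r i)) := by
        refine Finset.sum_congr rfl fun i hi => ?_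
        rw [vol_closedBall _ (hSr i hi).le, vol_ball _ (hSr i hi)]
    _ = volume (⋃ i ∈ St, Metric.ball (c i) (r i)) := by
        rw [measure_biUnion_finset (fun i hi j hj hij =>
          hd i (Finset.mem_filter.1 hi).1 j (Finset.mem_filter.1 hj).1 hij)
          (fun i _ => measurableSet_ball)]
    _ ≤ volume (⋃ b ∈ U, Metric.closedBall (c b) (4 * (Λ * r b))) := by
        refine measure_mono (iUnion₂_subset fun i hi => ?_)
        obtain ⟨b, hb, hib⟩ := hu i hi
        refine Subset.trans ?_ (subset_iUnion₂ b (hufin.mem_toFinset.2 hb))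
        refine Subset.trans ?_ hib
        refine Metric.ball_subset_closedBall.trans (Metric.closedBall_subset_closedBall ?_)
        nlinarith [hSr i hi]
    _ ≤ ∑ b ∈ U, volume (Metric.closedBall (c b) (4 * (Λ * r b))) := measure_biUnion_finset_le _ _
    _ = ∑ b ∈ U, ENNReal.ofReal ((4 * Λ) ^ n) * volume (Metric.closedBall (c b) (r b)) := by
        refine Finset.sum_congr rfl fun b hb => ?_
        have hrb := hSr b (hUS b hb)
        rw [vol_closedBall _ hrb.le, vol_closedBall _ (by positivity),
          ← ENNReal.ofReal_mul (by positivity), ← mul_pow]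
        congr 2; ring
    _ ≤ ∑ b ∈ U, ENNReal.ofReal ((4 * Λ) ^ n) * (ENNReal.ofReal (2 / t) *
          ∫⁻ z in Metric.closedBall (c b) (Λ * r b) ∩ A, ENNReal.ofReal (h z)) :=
        Finset.sum_le_sum fun b hb => mul_le_mul_right (hone b hb) _
    _ = ENNReal.ofReal (2 * (4 * Λ) ^ n / t) * ∑ b ∈ U,
          ∫⁻ z in Metric.closedBall (c b) (Λ * r b) ∩ A, ENNReal.ofReal (h z) := by
        rw [← Finset.mul_sum, ← Finset.mul_sum, ← mul_assoc, ← ENNReal.ofReal_mul (by positivity)]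
        congr 2; ring
    _ = ENNReal.ofReal (2 * (4 * Λ) ^ n / t) *
          ∫⁻ z in ⋃ b ∈ U, Metric.closedBall (c b) (Λ * r b) ∩ A, ENNReal.ofReal (h z) := by
        rw [lintegral_biUnion_finset]
        · intro b hb b' hb' hbb
          exact (hud (hufin.mem_toFinset.1 hb) (hufin.mem_toFinset.1 hb') hbb).mono
            inter_subset_left inter_subset_left
        · exact fun b _ => measurableSet_closedBall.inter hAm
    _ ≤ _ := by
        gcongr
        exact iUnion₂_subset fun b _ => inter_subset_right

/-- The discrete maximal inequality for averages over dilations of non-overlapping cubes. -/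
theorem maximal {ι : Type*} [MeasurableSpace ι] [DiscreteMeasurableSpace ι] (S : Finset ι)
    {c : ι → Eu n} {r a : ι → ℝ} {Λ s : ℝ} (hΛ : 1 ≤ Λ) (hs : 1 < s)
    (hr : ∀ i ∈ S, 0 < r i) (ha0 : ∀ i, 0 ≤ a i) {h : Eu n → ℝ} (hm : Measurable h)
    (hh : ∀ z, 0 ≤ h z)
    (ha : ∀ i ∈ S, ENNReal.ofReal (a i) * volume (Metric.closedBall (c i) (r i)) ≤
      ∫⁻ z in Metric.closedBall (c i) (Λ * r i), ENNReal.ofReal (h z))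
    (hd : ∀ i ∈ S, ∀ j ∈ S, i ≠ j → Disjoint (Metric.ball (c i) (r i)) (Metric.ball (c j) (r j))) :
    ∑ i ∈ S, ENNReal.ofReal (a i ^ s) * volume (Metric.closedBall (c i) (r i)) ≤
      ENNReal.ofReal (maxC n Λ s) * ∫⁻ z, ENNReal.ofReal (h z ^ s) := by
  classical
  have hΛ0 : 0 < Λ := by linarith
  have hs0 : 0 < s - 1 := by linarith
  set ν : Measure ι := ∑ i ∈ S, volume (Metric.closedBall (c i) (r i)) • Measure.dirac i with hν
  set μ : Measure (Eu n) := volume.withDensity fun z => ENNReal.ofReal (h z) with hμ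
  have h1 : ∑ i ∈ S, ENNReal.ofReal (a i ^ s) * volume (Metric.closedBall (c i) (r i)) =
      ∫⁻ i, ENNReal.ofReal (a i ^ s) ∂ν := by
    rw [hν, lintegral_finsetSum_measure]
    refine Finset.sum_congr rfl fun i _ => ?_
    rw [lintegral_smul_measure, lintegral_dirac, smul_eq_mul, mul_comm]
  have h2 := lintegral_rpow_eq_lintegral_meas_lt_mul ν (f := a)
    (Eventually.of_forall ha0) (Measurable.of_discrete).aemeasurable (p := s) (by linarith)
  have h3 := lintegral_rpow_eq_lintegral_meas_lt_mul μ (f := fun z => 2 * Λ ^ n * h z)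
    (Eventually.of_forall fun z => mul_nonneg (by positivity) (hh z))
    (hm.const_mul _).aemeasurable (p := s - 1) hs0
  have h4 : ∫⁻ t in Ioi (0 : ℝ), ν {i | t < a i} * ENNReal.ofReal (t ^ (s - 1)) ≤
      ENNReal.ofReal (2 * (4 * Λ) ^ n) * ∫⁻ t in Ioi (0 : ℝ),
        μ {z | t < 2 * Λ ^ n * h z} * ENNReal.ofReal (t ^ (s - 1 - 1)) := by
    rw [← lintegral_const_mul' _ _ ENNReal.ofReal_ne_top]
    refine setLIntegral_mono' measurableSet_Ioi fun t ht => ?_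
    have ht' : 0 < t := ht
    have h5 : ν {i | t < a i} = ∑ i ∈ S with t < a i, volume (Metric.closedBall (c i) (r i)) := by
      rw [hν, Measure.finsetSum_apply, Finset.sum_filter]
      refine Finset.sum_congr rfl fun i _ => ?_
      rw [Measure.smul_apply, Measure.dirac_apply, smul_eq_mul]
      by_cases hi : t < a i <;> simp [hi]
    have h6 : ∫⁻ z in {z | t < 2 * Λ ^ n * h z}, ENNReal.ofReal (h z) ≤
        μ {z | t < 2 * Λ ^ n * h z} := withDensity_apply_le _ _
    rw [h5]
    calc (∑ i ∈ S with t < a i, volume (Metric.closedBall (c i) (r i))) *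
          ENNReal.ofReal (t ^ (s - 1))
        ≤ (ENNReal.ofReal (2 * (4 * Λ) ^ n / t) * μ {z | t < 2 * Λ ^ n * h z}) *
          ENNReal.ofReal (t ^ (s - 1)) := by
          gcongr
          exact (weak_type S hΛ hr hm ha hd ht').trans (mul_le_mul_right h6 _)
      _ = ENNReal.ofReal (2 * (4 * Λ) ^ n / t) * ENNReal.ofReal (t ^ (s - 1)) *
          μ {z | t < 2 * Λ ^ n * h z} := by ring
      _ = ENNReal.ofReal (2 * (4 * Λ) ^ n) * ENNReal.ofReal (t ^ (s - 1 - 1)) *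
          μ {z | t < 2 * Λ ^ n * h z} := by
          rw [← ENNReal.ofReal_mul (by positivity), ← ENNReal.ofReal_mul (by positivity),
            Real.rpow_sub_one ht'.ne' (s - 1)]
          congr 2; ring
      _ = _ := by ring
  have h7 : ∫⁻ z, ENNReal.ofReal ((2 * Λ ^ n * h z) ^ (s - 1)) ∂μ =
      ENNReal.ofReal ((2 * Λ ^ n) ^ (s - 1)) * ∫⁻ z, ENNReal.ofReal (h z ^ s) := by
    rw [hμ, lintegral_withDensity_eq_lintegral_mul _ hm.ennreal_ofReal
      ((hm.const_mul _).pow_const _).ennreal_ofReal, ← lintegral_const_mul' _ _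
      ENNReal.ofReal_ne_top]
    refine lintegral_congr fun z => ?_
    rw [Pi.mul_apply, ← ENNReal.ofReal_mul (hh z), ← ENNReal.ofReal_mul (by positivity),
      Real.mul_rpow (by positivity) (hh z)]
    congr 1
    have : h z ^ s = h z * h z ^ (s - 1) := by
      rcases (hh z).eq_or_lt with h0 | h0
      · rw [← h0, Real.zero_rpow (by linarith), zero_mul]
      · rw [Real.rpow_sub_one h0.ne']; field_simp
    rw [this]; ring
  have h8 : ∫⁻ t in Ioi (0 : ℝ), μ {z | t < 2 * Λ ^ n * h z} * ENNReal.ofReal (t ^ (s - 1 - 1)) =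
      ENNReal.ofReal (1 / (s - 1)) * (ENNReal.ofReal ((2 * Λ ^ n) ^ (s - 1)) *
        ∫⁻ z, ENNReal.ofReal (h z ^ s)) := by
    rw [← h7, h3, ← mul_assoc, ← ENNReal.ofReal_mul (by positivity), one_div,
      inv_mul_cancel₀ hs0.ne', ENNReal.ofReal_one, one_mul]
  rw [h1, h2]
  refine (mul_le_mul_right h4 _).trans (le_of_eq ?_)
  rw [h8, ← mul_assoc, ← mul_assoc, ← mul_assoc, ← ENNReal.ofReal_mul (by positivity),
    ← ENNReal.ofReal_mul (by positivity), ← ENNReal.ofReal_mul (by positivity), maxC]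
  congr 2; ring

/-! ### Necessity of the variational condition -/

/-- The intermediate exponent `n < q < p` to which the maximal estimate is applied. -/
def qq (n : ℕ) (p : ℝ) : ℝ := (n + p) / 2

theorem lt_qq {p : ℝ} (hp : (n : ℝ) < p) : (n : ℝ) < qq n p := by unfold qq; linarith

theorem qq_lt {p : ℝ} (hp : (n : ℝ) < p) : qq n p < p := by unfold qq; linarith

theorem qq_pos {p : ℝ} (hp : (n : ℝ) < p) : 0 < qq n p :=
  lt_of_le_of_lt (Nat.cast_nonneg n) (lt_qq hp)

theorem p_pos {p : ℝ} (hp : (n : ℝ) < p) : 0 < p := lt_of_le_of_lt (Nat.cast_nonneg n) hp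

/-- The averaged local energy of a gradient. -/
def dens (Ω : Set (Eu n)) (g : Eu n → Eu n) (p Λ : ℝ) (c : Eu n) (r : ℝ) : ℝ :=
  en Ω g (qq n p) c (Λ * r) / (2 * r) ^ n

theorem dens_nonneg (Ω : Set (Eu n)) (g : Eu n → Eu n) (p Λ : ℝ) (c : Eu n) {r : ℝ} (hr : 0 < r) :
    0 ≤ dens Ω g p Λ c r := div_nonneg (en_nonneg _ _ _ _ _) (by positivity)

/-- The constant of the `p`-th power form of the Morrey estimates. -/
def oscC (n : ℕ) (p Λ : ℝ) : ℝ := morC n (qq n p) Λ ^ p * 2 ^ (n * (p / qq n p))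

theorem morC_nonneg {q Λ : ℝ} (hq : (n : ℝ) < q) (hΛ : 0 ≤ Λ) : 0 ≤ morC n q Λ := by
  have h0 : 0 < q := lt_of_le_of_lt (Nat.cast_nonneg n) hq
  have h1 : (n : ℝ) / q ≤ 1 := (div_le_one h0).2 hq.le
  have := mollM_pos (n := n)
  unfold morC
  exact div_nonneg (by positivity) (by linarith)

theorem morC_mono {q Λ : ℝ} (hq : (n : ℝ) < q) (hΛ : 1 ≤ Λ) : morC n q 1 ≤ morC n q Λ := by
  have h0 : 0 < q := lt_of_le_of_lt (Nat.cast_nonneg n) hq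
  have h1 : (n : ℝ) / q ≤ 1 := (div_le_one h0).2 hq.le
  have := mollM_pos (n := n)
  unfold morC
  have h2 : 0 ≤ 1 - (n : ℝ) / q := by linarith
  gcongr

theorem oscC_nonneg {p Λ : ℝ} (hp : (n : ℝ) < p) (hΛ : 0 ≤ Λ) : 0 ≤ oscC n p Λ := by
  have := morC_nonneg (lt_qq hp) hΛ
  unfold oscC
  positivity

theorem osc_pow {p Λ : ℝ} (hp : (n : ℝ) < p) (hΛ : 0 ≤ Λ) {Ω : Set (Eu n)} {g : Eu n → Eu n}
    {c : Eu n} {r D : ℝ} (hr : 0 < r)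
    (hD : |D| ≤ morC n (qq n p) Λ * r ^ (1 - n / qq n p) *
      en Ω g (qq n p) c (Λ * r) ^ (1 / qq n p)) :
    |D| ^ p ≤ oscC n p Λ * r ^ p * dens Ω g p Λ c r ^ (p / qq n p) := by
  have hM := morC_nonneg (lt_qq hp) hΛ
  have hE := en_nonneg Ω g (qq n p) c (Λ * r)
  have hq := qq_pos hp
  have h1 := Real.rpow_le_rpow (abs_nonneg _) hD (p_pos hp).le
  refine h1.trans (le_of_eq ?_)
  rw [Real.mul_rpow (by positivity) (by positivity), Real.mul_rpow hM (by positivity),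
    ← Real.rpow_mul hr.le, ← Real.rpow_mul hE]
  unfold oscC dens
  rw [Real.div_rpow hE (by positivity), mul_pow, Real.mul_rpow (by positivity) (by positivity),
    ← Real.rpow_natCast 2 n, ← Real.rpow_natCast r n, ← Real.rpow_mul hr.le,
    ← Real.rpow_mul (by norm_num : (0 : ℝ) ≤ 2)]
  have h3 : r ^ ((1 - n / qq n p) * p) = r ^ p / r ^ ((n : ℝ) * (p / qq n p)) := by
    rw [← Real.rpow_sub hr]
    congr 1
    field_simp
  have h4 : 1 / qq n p * p = p / qq n p := by ring
  rw [h3, h4]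
  field_simp

theorem integrableOn_q {Ω : Set (Eu n)} {g : Eu n → Eu n} {p : ℝ} (hp : (n : ℝ) < p)
    (hgm : AEStronglyMeasurable g (volume.restrict Ω))
    (hg : IntegrableOn (fun z => ‖g z‖ ^ p) Ω) (c : Eu n) (R : ℝ) :
    IntegrableOn (fun z => ‖g z‖ ^ qq n p) (Ω ∩ Metric.closedBall c R) := by
  have h1 : IntegrableOn (fun z => 1 + ‖g z‖ ^ p) (Ω ∩ Metric.closedBall c R) := by
    refine Integrable.add ?_ (hg.mono_set inter_subset_left)
    refine integrableOn_const (C := (1 : ℝ)) ?_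
    exact (lt_of_le_of_lt (measure_mono inter_subset_right)
      measure_closedBall_lt_top).ne
  refine h1.mono' ?_ (Eventually.of_forall fun z => ?_)
  · have h2 := (hgm.mono_measure (Measure.restrict_mono (inter_subset_left
      (t := Metric.closedBall c R)) le_rfl)).norm.aemeasurable
    exact (h2.pow_const (qq n p)).aestronglyMeasurable
  · rw [Real.norm_of_nonneg (by positivity)]
    rcases le_total ‖g z‖ 1 with h | h
    · have := Real.rpow_le_one (norm_nonneg (g z)) h (qq_pos hp).le
      have : 0 ≤ ‖g z‖ ^ p := by positivity
      linarith
    · have := Real.rpow_le_rpow_of_exponent_le h (qq_lt hp).le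
      linarith

/-- The maximal estimate for averaged energies over non-overlapping cubes. -/
theorem sum_dens {ι : Type*} [MeasurableSpace ι] [DiscreteMeasurableSpace ι] (S : Finset ι)
    {Ω : Set (Eu n)} {g : Eu n → Eu n} {p Λ : ℝ} (hp : (n : ℝ) < p) (hΛ : 1 ≤ Λ)
    (hΩ : IsOpen Ω) (hgm : AEStronglyMeasurable g (volume.restrict Ω))
    (hg : IntegrableOn (fun z => ‖g z‖ ^ p) Ω) {c : ι → Eu n} {r : ι → ℝ} (hr : ∀ i, 0 < r i)
    (hd : ∀ i ∈ S, ∀ j ∈ S, i ≠ j → Disjoint (Metric.ball (c i) (r i)) (Metric.ball (c j) (r j))) :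
    ∑ i ∈ S, dens Ω g p Λ (c i) (r i) ^ (p / qq n p) * (2 * r i) ^ n ≤
      maxC n Λ (p / qq n p) * ∫ z in Ω, ‖g z‖ ^ p := by
  have hq := qq_pos hp
  have hs : 1 < p / qq n p := (one_lt_div hq).2 (qq_lt hp)
  set g' : Eu n → Eu n := hgm.mk g with hg'
  have hgg : ∀ᵐ z ∂(volume.restrict Ω), g z = g' z := hgm.ae_eq_mk
  set h : Eu n → ℝ := Ω.indicator fun z => ‖g' z‖ ^ qq n p with hh
  have hhm : Measurable h :=
    ((hgm.stronglyMeasurable_mk.measurable.norm).pow_const _).indicator hΩ.measurableSet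
  have hh0 : ∀ z, 0 ≤ h z := fun z => indicator_nonneg (fun z _ => by positivity) z
  have hC : 0 ≤ maxC n Λ (p / qq n p) := by
    have : 0 < p / qq n p - 1 := by linarith
    unfold maxC
    positivity
  have hlhs : ∀ i, ENNReal.ofReal (dens Ω g p Λ (c i) (r i)) *
      volume (Metric.closedBall (c i) (r i)) =
        ∫⁻ z in Metric.closedBall (c i) (Λ * r i), ENNReal.ofReal (h z) := by
    intro i
    have hri := hr i
    rw [vol_closedBall _ hri.le, ← ENNReal.ofReal_mul (dens_nonneg _ _ _ _ _ hri)]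
    unfold dens
    rw [div_mul_cancel₀ _ (by positivity)]
    unfold en
    rw [ofReal_integral_eq_lintegral_ofReal (integrableOn_q hp hgm hg _ _)
      (Eventually.of_forall fun z => by positivity)]
    have e1 : ∀ z, ENNReal.ofReal (h z) =
        Ω.indicator (fun z => ENNReal.ofReal (‖g' z‖ ^ qq n p)) z := fun z => by
      by_cases hz : z ∈ Ω <;> simp [hh, hz]
    rw [lintegral_congr e1, lintegral_indicator hΩ.measurableSet,
      Measure.restrict_restrict hΩ.measurableSet]
    refine lintegral_congr_ae ?_
    filter_upwards [ae_mono (Measure.restrict_mono (inter_subset_left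
      (t := Metric.closedBall (c i) (Λ * r i))) le_rfl) hgg] with z hz
    rw [hz]
  have key := maximal S (c := c) (r := r) (a := fun i => dens Ω g p Λ (c i) (r i)) hΛ hs
    (fun i _ => hr i) (fun i => dens_nonneg _ _ _ _ _ (hr i)) hhm hh0
    (fun i _ => (hlhs i).le) hd
  have hrhs : ∫⁻ z, ENNReal.ofReal (h z ^ (p / qq n p)) =
      ENNReal.ofReal (∫ z in Ω, ‖g z‖ ^ p) := by
    rw [ofReal_integral_eq_lintegral_ofReal hg (Eventually.of_forall fun z => by positivity)]
    have e1 : ∀ z, ENNReal.ofReal (h z ^ (p / qq n p)) =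
        Ω.indicator (fun z => ENNReal.ofReal (‖g' z‖ ^ p)) z := fun z => by
      by_cases hz : z ∈ Ω
      · simp only [hh, hz, indicator_of_mem]
        rw [← Real.rpow_mul (norm_nonneg _), mul_div_cancel₀ _ hq.ne']
      · simp only [hh, hz, not_false_eq_true, indicator_of_notMem]
        rw [Real.zero_rpow (by positivity), ENNReal.ofReal_zero]
    rw [lintegral_congr e1, lintegral_indicator hΩ.measurableSet]
    refine lintegral_congr_ae ?_
    filter_upwards [hgg] with z hz
    rw [hz]
  rw [hrhs, ← ENNReal.ofReal_mul hC] at key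
  have hl : ∑ i ∈ S, ENNReal.ofReal (dens Ω g p Λ (c i) (r i) ^ (p / qq n p)) *
      volume (Metric.closedBall (c i) (r i)) =
      ENNReal.ofReal (∑ i ∈ S, dens Ω g p Λ (c i) (r i) ^ (p / qq n p) * (2 * r i) ^ n) := by
    rw [ENNReal.ofReal_sum_of_nonneg]
    · refine Finset.sum_congr rfl fun i _ => ?_
      rw [vol_closedBall _ (hr i).le, ENNReal.ofReal_mul
        (Real.rpow_nonneg (dens_nonneg _ _ _ _ _ (hr i)) _)]
    · intro i _
      have := dens_nonneg Ω g p Λ (c i) (hr i)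
      have := hr i
      positivity
  rw [hl] at key
  exact (ENNReal.ofReal_le_ofReal_iff (mul_nonneg hC
    (integral_nonneg fun z => by positivity))).1 key

theorem weak_meas {Ω : Set (Eu n)} {F : Eu n → ℝ} {g : Eu n → Eu n} (h : HasWeakGradOn F g Ω) :
    AEStronglyMeasurable g (volume.restrict Ω) := h.2.1.aestronglyMeasurable

theorem add_rpow_le {p : ℝ} (hp : 0 ≤ p) {x y : ℝ} (hx : 0 ≤ x) (hy : 0 ≤ y) :
    (x + y) ^ p ≤ 2 ^ p * (x ^ p + y ^ p) := by
  have hx' : 0 ≤ x ^ p := by positivity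
  have hy' : 0 ≤ y ^ p := by positivity
  have h2 : (0 : ℝ) ≤ 2 ^ p := by positivity
  rcases le_total x y with h | h
  · calc (x + y) ^ p ≤ (2 * y) ^ p := Real.rpow_le_rpow (by positivity) (by linarith) hp
      _ = 2 ^ p * y ^ p := Real.mul_rpow (by norm_num) hy
      _ ≤ _ := mul_le_mul_of_nonneg_left (by linarith) h2
  · calc (x + y) ^ p ≤ (2 * x) ^ p := Real.rpow_le_rpow (by positivity) (by linarith) hp
      _ = 2 ^ p * x ^ p := Real.mul_rpow (by norm_num) hx
      _ ≤ _ := mul_le_mul_of_nonneg_left (by linarith) h2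

/-- Traces satisfy the variational condition. -/
theorem varCond_of_trace (hn : 0 < n) {Ω S : Set (Eu n)} {F : Eu n → ℝ} {g : Eu n → Eu n}
    {p η α : ℝ} (hp : (n : ℝ) < p) (hΩ : IsOpen Ω) (hη : 1 ≤ η)
    (hα : 0 < α) (hα1 : α ≤ 1) (hF : ContL1pRep Ω p F g) {f : Eu n → ℝ} (hf : TraceEq Ω α F f) :
    VarCondOn Ω S α p η (2 ^ p * oscC n p η * maxC n η (p / qq n p) * ∫ z in Ω, ‖g z‖ ^ p) f := by
  obtain ⟨hFc, hFg, hgi⟩ := hF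
  have hgm := weak_meas hFg
  have hp0 := p_pos hp
  intro m c r hr hsub hdisj x y hx hy
  have hB := oscC_nonneg (n := n) hp (Λ := η) (by linarith)
  have key := sum_dens (Finset.univ : Finset (Fin m)) hp hη hΩ hgm hgi (c := c) hr
    (fun i _ j _ hij => (hdisj i j hij).mono Metric.ball_subset_closedBall
      Metric.ball_subset_closedBall)
  have one : ∀ i, ∀ z, (Accessible Ω α z ∧ z ∈ cube (c i) (η * r i) ∧
        QVisible Ω (cube (c i) (r i)) z) → |f z - av Ω F (c i) (r i)| ^ p ≤
      oscC n p η * r i ^ p * dens Ω g p η (c i) (r i) ^ (p / qq n p) := fun i z hz =>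
    osc_pow hp (by linarith) (hr i) (morrey_trace hn hΩ hFc hFg (lt_qq hp) hα hα1 hf (hr i) hη
      hz.2.1 hz.1.1 (integrableOn_q hp hgm hgi _ _) hz.2.2)
  calc ∑ i, |f (x i) - f (y i)| ^ p / (2 * r i) ^ (p - (n : ℝ))
      ≤ ∑ i, 2 ^ p * oscC n p η * (dens Ω g p η (c i) (r i) ^ (p / qq n p) * (2 * r i) ^ n) := by
        refine Finset.sum_le_sum fun i _ => ?_
        have hri := hr i
        have h1 := one i _ (hx i)
        have h2 := one i _ (hy i)
        set D := dens Ω g p η (c i) (r i) ^ (p / qq n p)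
        have h3 : |f (x i) - f (y i)| ≤
            |f (x i) - av Ω F (c i) (r i)| + |f (y i) - av Ω F (c i) (r i)| := by
          rw [abs_sub_comm (f (y i))]
          exact abs_sub_le _ _ _
        have h4 := (Real.rpow_le_rpow (abs_nonneg _) h3 hp0.le).trans
          (add_rpow_le hp0.le (abs_nonneg _) (abs_nonneg _))
        have h5 : (2 * r i) ^ n = (2 * r i) ^ (n : ℝ) := (Real.rpow_natCast _ _).symm
        rw [div_le_iff₀ (by positivity), h5, mul_assoc, mul_assoc, mul_assoc,
          ← Real.rpow_add (by positivity), add_sub_cancel, Real.mul_rpow (by norm_num) hri.le]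
        refine h4.trans (mul_le_mul_of_nonneg_left ?_ (by positivity))
        have h6 : (2 : ℝ) ≤ 2 ^ p := by
          have h61 : (1 : ℝ) ≤ p := by
            have : (1 : ℝ) ≤ n := by exact_mod_cast hn
            linarith
          simpa using Real.rpow_le_rpow_of_exponent_le (by norm_num : (1 : ℝ) ≤ 2) h61
        have h7 : 0 ≤ oscC n p η * r i ^ p * D :=
          mul_nonneg (by positivity) (Real.rpow_nonneg (dens_nonneg _ _ _ _ _ hri) _)
        nlinarith
    _ ≤ _ := by
        rw [← Finset.mul_sum, mul_assoc (2 ^ p * oscC n p η) (maxC n η (p / qq n p))]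
        exact mul_le_mul_of_nonneg_left key (by positivity)

/-! ### The `L_p` bound for the trace composed with the nearest-point map -/

/-- The nearest-point map is constant on the interiors of the cubes, so composition with it is
measurable on subsets of `Ω`. -/
theorem Whit.meas_comp {Ω : Set (Eu n)} {θ : ℝ} {c : ℕ → Eu n} {r d : ℕ → ℝ} {a : ℕ → Eu n}
    (W : Whit Ω θ c r d a) {T : Eu n → Eu n}
    (hT : ∀ i, ∀ x ∈ interior (cube (c i) (r i)), T x = a i) (G : Eu n → ℝ) :
    AEStronglyMeasurable (fun x => G (T x)) (volume.restrict Ω) := by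
  have h1 : AEStronglyMeasurable (fun x => G (T x))
      (volume.restrict (⋃ i, Metric.closedBall (c i) (r i))) := by
    rw [aestronglyMeasurable_iUnion_iff]
    intro i
    have hi : Metric.closedBall (c i) (r i) =ᵐ[volume] Metric.ball (c i) (r i) := by
      rw [← Metric.ball_union_sphere]
      exact union_ae_eq_left_of_ae_eq_empty
        (ae_eq_empty.2 (Measure.addHaar_sphere_of_ne_zero _ _ (W.pos i).ne'))
    rw [Measure.restrict_congr_set hi]
    refine (aestronglyMeasurable_const (b := G (a i))).congr ?_
    filter_upwards [self_mem_ae_restrict Metric.isOpen_ball.measurableSet] with x hx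
    rw [hT i x (by rwa [cube, interior_closedBall _ (W.pos i).ne'])]
  exact h1.mono_measure (Measure.restrict_mono W.cov le_rfl)

/-- The integral of the nearest-point composition over a single Whitney cube. -/
theorem Whit.lint_comp {Ω : Set (Eu n)} {θ : ℝ} {c : ℕ → Eu n} {r d : ℕ → ℝ} {a : ℕ → Eu n}
    (W : Whit Ω θ c r d a) {T : Eu n → Eu n}
    (hT : ∀ i, ∀ x ∈ interior (cube (c i) (r i)), T x = a i) (G : Eu n → ℝ) (i : ℕ) :
    ∫⁻ x in Metric.closedBall (c i) (r i), ENNReal.ofReal (G (T x)) =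
      ENNReal.ofReal (G (a i)) * ENNReal.ofReal ((2 * r i) ^ n) := by
  have hi : Metric.closedBall (c i) (r i) =ᵐ[volume] Metric.ball (c i) (r i) := by
    rw [← Metric.ball_union_sphere]
    exact union_ae_eq_left_of_ae_eq_empty
      (ae_eq_empty.2 (Measure.addHaar_sphere_of_ne_zero _ _ (W.pos i).ne'))
  rw [Measure.restrict_congr_set hi, ← vol_ball (c i) (W.pos i), ← setLIntegral_const]
  refine setLIntegral_congr_fun Metric.isOpen_ball.measurableSet fun x hx => ?_
  rw [hT i x (by rwa [cube, interior_closedBall _ (W.pos i).ne'])]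

theorem Whit.sum_lint {Ω : Set (Eu n)} {θ : ℝ} {c : ℕ → Eu n} {r d : ℕ → ℝ} {a : ℕ → Eu n}
    (W : Whit Ω θ c r d a) (S : Finset ℕ) {A : Set (Eu n)}
    (hA : ∀ i ∈ S, Metric.closedBall (c i) (r i) ⊆ A) (h : Eu n → ℝ≥0∞) :
    ∑ i ∈ S, ∫⁻ x in Metric.closedBall (c i) (r i), h x ≤ ∫⁻ x in A, h x := by
  have hi : ∀ i, Metric.closedBall (c i) (r i) =ᵐ[volume] Metric.ball (c i) (r i) := fun i => by
    rw [← Metric.ball_union_sphere]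
    exact union_ae_eq_left_of_ae_eq_empty
      (ae_eq_empty.2 (Measure.addHaar_sphere_of_ne_zero _ _ (W.pos i).ne'))
  have h1 : ∑ i ∈ S, ∫⁻ x in Metric.closedBall (c i) (r i), h x =
      ∫⁻ x in ⋃ i ∈ S, Metric.ball (c i) (r i), h x := by
    rw [lintegral_biUnion_finset]
    · exact Finset.sum_congr rfl fun i _ => by rw [Measure.restrict_congr_set (hi i)]
    · intro i _ j _ hij
      exact W.disj i j hij
    · exact fun i _ => Metric.isOpen_ball.measurableSet
  rw [h1]
  refine lintegral_mono_set ?_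
  exact iUnion₂_subset fun i hiS => Metric.ball_subset_closedBall.trans (hA i hiS)

/-- The constant of the `L_p` estimate for the trace. -/
def lpC (n : ℕ) (p θ ε : ℝ) : ℝ :=
  4 ^ p * (1 + 2 * oscC n p (1 + 2 * θ) * (θ * ε) ^ p * maxC n (1 + 2 * θ) (p / qq n p))

theorem lint_trace (hn : 0 < n) {Ω : Set (Eu n)} {F : Eu n → ℝ} {g : Eu n → Eu n}
    {θ : ℝ} {c : ℕ → Eu n} {r d : ℕ → ℝ} {a : ℕ → Eu n} (W : Whit Ω θ c r d a)
    {T : Eu n → Eu n} (hT : ∀ i, ∀ x ∈ interior (cube (c i) (r i)), T x = a i)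
    {p ε α : ℝ} (hp : (n : ℝ) < p) (hε : 0 < ε)
    (hα : 0 < α) (hα1 : α ≤ 1) (hF : ContW1pRep Ω p F g) {f : Eu n → ℝ} (hf : TraceEq Ω α F f) :
    ∫⁻ x in Oeps Ω ε, ENNReal.ofReal (|f (T x)| ^ p) ≤
      ENNReal.ofReal (lpC n p θ ε * ((∫ z in Ω, |F z| ^ p) + ∫ z in Ω, ‖g z‖ ^ p)) := by
  obtain ⟨⟨hFc, hFg, hgi⟩, hFi⟩ := hF
  have hgm := weak_meas hFg
  have hp0 := p_pos hp
  have hθ := W.one_lt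
  set Λ : ℝ := 1 + 2 * θ with hΛd
  have hΛ : 1 ≤ Λ := by linarith
  have hB := oscC_nonneg (n := n) hp (Λ := Λ) (by linarith)
  have hIg : 0 ≤ ∫ z in Ω, ‖g z‖ ^ p := integral_nonneg fun z => by positivity
  have hIF : 0 ≤ ∫ z in Ω, |F z| ^ p := integral_nonneg fun z => by positivity
  have osc : ∀ i, ∀ z ∈ Metric.closedBall (c i) (r i), |f (a i) - F z| ^ p ≤
      2 ^ p * (2 * (oscC n p Λ * r i ^ p * dens Ω g p Λ (c i) (r i) ^ (p / qq n p))) := by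
    intro i z hz
    have hri := W.pos i
    have h1 := osc_pow hp (by linarith) hri (morrey_trace hn W.isOpen hFc hFg (lt_qq hp) hα hα1
      hf hri hΛ (x := a i) (by linarith [W.near i, W.dr i]) (W.fr i)
      (integrableOn_q hp hgm hgi _ _)
      (W.vis i (Metric.closedBall_subset_ball (by linarith [W.d_pos i]))))
    have hsub : Metric.closedBall (c i) (r i) ⊆ Ω ∩ Metric.closedBall (c i) (Λ * r i) :=
      subset_inter (W.sub i) (Metric.closedBall_subset_closedBall (by nlinarith))
    have hintg := integrableOn_q hp hgm hgi (c i) (Λ * r i)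
    have h2 : |F z - av Ω F (c i) (r i)| ^ p ≤
        oscC n p Λ * r i ^ p * dens Ω g p Λ (c i) (r i) ^ (p / qq n p) := by
      refine osc_pow hp (by linarith) hri ((morrey_cube hn W.isOpen hFc hFg (lt_qq hp) hri hz
        (W.sub i) (hintg.mono_set (inter_subset_inter_right _
          (Metric.closedBall_subset_closedBall (by nlinarith))))).trans ?_)
      have he : en Ω g (qq n p) (c i) (r i) ≤ en Ω g (qq n p) (c i) (Λ * r i) := by
        unfold en
        refine setIntegral_mono_set hintg (Eventually.of_forall fun z => by positivity) ?_
        exact (inter_subset_inter_right _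
          (Metric.closedBall_subset_closedBall (by nlinarith))).eventuallyLE
      have he0 := en_nonneg Ω g (qq n p) (c i) (r i)
      have hq := qq_pos hp
      have := morC_mono (lt_qq hp) hΛ
      have := morC_nonneg (n := n) (lt_qq hp) (Λ := Λ) (by linarith)
      gcongr
    have h3 : |f (a i) - F z| ≤
        |f (a i) - av Ω F (c i) (r i)| + |F z - av Ω F (c i) (r i)| := by
      rw [abs_sub_comm (F z)]
      exact abs_sub_le _ _ _
    have h4 := (Real.rpow_le_rpow (abs_nonneg _) h3 hp0.le).trans
      (add_rpow_le hp0.le (abs_nonneg _) (abs_nonneg _))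
    exact h4.trans (mul_le_mul_of_nonneg_left (by linarith) (by positivity))
  set I : Set ℕ := {i | (Metric.closedBall (c i) (r i) ∩ Oeps Ω ε).Nonempty} with hI
  have hIr : ∀ i ∈ I, r i ≤ θ * ε := by
    rintro i ⟨x, hx, hx2⟩
    have h1 := W.r_le_bd i (W.sub_star i hx)
    have h2 := mul_le_mul_of_nonneg_left hx2.2.le W.th_pos.le
    linarith
  set D : ℕ → ℝ := fun i => dens Ω g p Λ (c i) (r i) ^ (p / qq n p) with hD
  have hD0 : ∀ i, 0 ≤ D i := fun i => Real.rpow_nonneg (dens_nonneg _ _ _ _ _ (W.pos i)) _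
  set K : ℝ := 2 * oscC n p Λ * (θ * ε) ^ p with hK
  have hK0 : 0 ≤ K := by have := W.th_pos; positivity
  have cubebd : ∀ i ∈ I, ENNReal.ofReal (|f (a i)| ^ p) * ENNReal.ofReal ((2 * r i) ^ n) ≤
      ENNReal.ofReal (4 ^ p) * (∫⁻ x in Metric.closedBall (c i) (r i), ENNReal.ofReal (|F x| ^ p)) +
        ENNReal.ofReal (4 ^ p * K * (D i * (2 * r i) ^ n)) := by
    intro i hi
    have hri := W.pos i
    rw [← vol_closedBall (c i) hri.le, ← setLIntegral_const, ← lintegral_const_mul' _ _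
      ENNReal.ofReal_ne_top]
    have h5 : ENNReal.ofReal (4 ^ p * K * (D i * (2 * r i) ^ n)) =
        ∫⁻ x in Metric.closedBall (c i) (r i), ENNReal.ofReal (4 ^ p * K * D i) := by
      rw [setLIntegral_const, vol_closedBall (c i) hri.le, ← ENNReal.ofReal_mul
        (by have := hD0 i; positivity), mul_assoc]
      ring_nf
    rw [h5, ← lintegral_add_right _ measurable_const]
    refine setLIntegral_mono' Metric.isClosed_closedBall.measurableSet fun x hx => ?_
    rw [← ENNReal.ofReal_mul (by positivity), ← ENNReal.ofReal_add (by positivity)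
      (by have := hD0 i; positivity)]
    refine ENNReal.ofReal_le_ofReal ?_
    have h6 := osc i x hx
    have h7 : |f (a i)| ≤ |F x| + |f (a i) - F x| := by
      have := abs_add_le (F x) (f (a i) - F x)
      rwa [add_sub_cancel] at this
    have h8 := (Real.rpow_le_rpow (abs_nonneg _) h7 hp0.le).trans
      (add_rpow_le hp0.le (abs_nonneg _) (abs_nonneg _))
    have h9 : r i ^ p ≤ (θ * ε) ^ p := Real.rpow_le_rpow hri.le (hIr i hi) hp0.le
    have h10 : (4 : ℝ) ^ p = 2 ^ p * 2 ^ p := by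
      rw [← Real.mul_rpow (by norm_num) (by norm_num)]
      norm_num
    have h2p : (1 : ℝ) ≤ 2 ^ p := Real.one_le_rpow (by norm_num) hp0.le
    have h11 : 2 * (oscC n p Λ * r i ^ p * D i) ≤ K * D i := by
      rw [hK]
      have := mul_le_mul_of_nonneg_left h9 (mul_nonneg hB (hD0 i))
      nlinarith
    have h12 : |F x| ^ p ≤ 2 ^ p * |F x| ^ p := le_mul_of_one_le_left (by positivity) h2p
    calc |f (a i)| ^ p ≤ 2 ^ p * (|F x| ^ p + |f (a i) - F x| ^ p) := h8
      _ ≤ 2 ^ p * (2 ^ p * |F x| ^ p + 2 ^ p * (K * D i)) := by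
        refine mul_le_mul_of_nonneg_left (add_le_add h12 (h6.trans ?_)) (by positivity)
        exact mul_le_mul_of_nonneg_left h11 (by positivity)
      _ = _ := by rw [h10]; ring
  have fin : ∀ S : Finset ℕ, (∀ i ∈ S, i ∈ I) →
      ∑ i ∈ S, ENNReal.ofReal (|f (a i)| ^ p) * ENNReal.ofReal ((2 * r i) ^ n) ≤
      ENNReal.ofReal (lpC n p θ ε * ((∫ z in Ω, |F z| ^ p) + ∫ z in Ω, ‖g z‖ ^ p)) := by
    intro S hS
    refine (Finset.sum_le_sum fun i hi => cubebd i (hS i hi)).trans ?_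
    rw [Finset.sum_add_distrib, ← Finset.mul_sum]
    have h1 := W.sum_lint S (fun i _ => W.sub i) (fun x => ENNReal.ofReal (|F x| ^ p))
    rw [← ofReal_integral_eq_lintegral_ofReal hFi
      (Eventually.of_forall fun z => by positivity)] at h1
    have h2 := sum_dens S hp hΛ W.isOpen hgm hgi (c := c) W.pos
      (fun i _ j _ hij => W.disj i j hij)
    rw [← ENNReal.ofReal_sum_of_nonneg
      (fun i _ => by have := hD0 i; have := W.pos i; positivity), ← Finset.mul_sum]
    refine (add_le_add (mul_le_mul_right h1 _) (ENNReal.ofReal_le_ofReal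
      (mul_le_mul_of_nonneg_left h2 (by positivity)))).trans ?_
    have hM : 0 ≤ maxC n Λ (p / qq n p) := by
      have : 0 < p / qq n p - 1 := by
        have := (one_lt_div (qq_pos hp)).2 (qq_lt hp)
        linarith
      have := qq_pos hp
      unfold maxC
      positivity
    rw [← ENNReal.ofReal_mul (by positivity), ← ENNReal.ofReal_add (by positivity) (by positivity)]
    refine ENNReal.ofReal_le_ofReal ?_
    have hKM : 0 ≤ K * maxC n Λ (p / qq n p) := by positivity
    have e1 : lpC n p θ ε = 4 ^ p * (1 + K * maxC n Λ (p / qq n p)) := by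
      rw [lpC, hK, hΛd]
    rw [e1]
    have : 0 ≤ (4 : ℝ) ^ p * (∫ z in Ω, ‖g z‖ ^ p) := by positivity
    have : 0 ≤ (4 : ℝ) ^ p * (K * maxC n Λ (p / qq n p) * ∫ z in Ω, |F z| ^ p) := by positivity
    nlinarith
  classical
  have hcov : Oeps Ω ε ⊆ ⋃ i, Oeps Ω ε ∩ Metric.closedBall (c i) (r i) := by
    intro x hx
    obtain ⟨i, hi⟩ := mem_iUnion.1 (W.cov hx.1)
    exact mem_iUnion.2 ⟨i, hx, hi⟩
  calc ∫⁻ x in Oeps Ω ε, ENNReal.ofReal (|f (T x)| ^ p)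
      ≤ ∫⁻ x in ⋃ i, Oeps Ω ε ∩ Metric.closedBall (c i) (r i), ENNReal.ofReal (|f (T x)| ^ p) :=
        lintegral_mono_set hcov
    _ ≤ ∑' i, ∫⁻ x in Oeps Ω ε ∩ Metric.closedBall (c i) (r i), ENNReal.ofReal (|f (T x)| ^ p) :=
        lintegral_iUnion_le _ _
    _ ≤ ∑' i, (if i ∈ I then ENNReal.ofReal (|f (a i)| ^ p) * ENNReal.ofReal ((2 * r i) ^ n)
          else 0) := by
        refine ENNReal.tsum_le_tsum fun i => ?_
        split_ifs with hi
        · rw [← W.lint_comp hT (fun y => |f y| ^ p) i]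
          exact lintegral_mono_set inter_subset_right
        · have : Oeps Ω ε ∩ Metric.closedBall (c i) (r i) = ∅ := by
            rw [inter_comm]
            exact not_nonempty_iff_eq_empty.1 hi
          rw [this]
          simp
    _ ≤ _ := by
        refine ENNReal.summable.tsum_le_of_sum_le fun S => ?_
        rw [← Finset.sum_filter]
        exact fin _ fun i hi => (Finset.mem_filter.1 hi).2

theorem lp_trace (hn : 0 < n) {Ω : Set (Eu n)} {F : Eu n → ℝ} {g : Eu n → Eu n}
    {θ : ℝ} {c : ℕ → Eu n} {r d : ℕ → ℝ} {a : ℕ → Eu n} (W : Whit Ω θ c r d a)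
    {T : Eu n → Eu n} (hT : ∀ i, ∀ x ∈ interior (cube (c i) (r i)), T x = a i)
    {p ε α : ℝ} (hp : (n : ℝ) < p) (hε : 0 < ε)
    (hα : 0 < α) (hα1 : α ≤ 1) (hF : ContW1pRep Ω p F g) {f : Eu n → ℝ} (hf : TraceEq Ω α F f) :
    IntegrableOn (fun x => |f (T x)| ^ p) (Oeps Ω ε) ∧
    ∫ x in Oeps Ω ε, |f (T x)| ^ p ≤
      lpC n p θ ε * ((∫ z in Ω, |F z| ^ p) + ∫ z in Ω, ‖g z‖ ^ p) := by
  have h := lint_trace hn W hT hp hε hα hα1 hF hf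
  have hm : AEStronglyMeasurable (fun x => |f (T x)| ^ p) (volume.restrict (Oeps Ω ε)) :=
    (W.meas_comp hT (fun y => |f y| ^ p)).mono_measure
      (Measure.restrict_mono (fun x hx => hx.1) le_rfl)
  have hintg : IntegrableOn (fun x => |f (T x)| ^ p) (Oeps Ω ε) := by
    refine ⟨hm, ?_⟩
    rw [hasFiniteIntegral_iff_ofReal (Eventually.of_forall fun z => by positivity)]
    exact lt_of_le_of_lt h ENNReal.ofReal_lt_top
  refine ⟨hintg, ?_⟩
  rw [← ofReal_integral_eq_lintegral_ofReal hintg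
    (Eventually.of_forall fun z => by positivity)] at h
  refine (ENNReal.ofReal_le_ofReal_iff'.1 h).elim id fun h0 => ?_
  have hIg : 0 ≤ ∫ z in Ω, ‖g z‖ ^ p := integral_nonneg fun z => by positivity
  have hIF : 0 ≤ ∫ z in Ω, |F z| ^ p := integral_nonneg fun z => by positivity
  have : 0 ≤ lpC n p θ ε := by
    have hB := oscC_nonneg (n := n) hp (Λ := 1 + 2 * θ) (by linarith [W.one_lt])
    have := W.th_pos
    have : 0 < p / qq n p - 1 := by
      have := (one_lt_div (qq_pos hp)).2 (qq_lt hp)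
      linarith
    have := qq_pos hp
    have := p_pos hp
    unfold lpC maxC
    positivity
  exact h0.trans (mul_nonneg this (add_nonneg hIF hIg))

/-! ### The chain estimate along curves -/

/-- `γ : [0, L] → Ω` is an arc-length parametrized curve of finite subhyperbolic length. -/
structure IsCurve (Ω : Set (Eu n)) (α L : ℝ) (γ : ℝ → Eu n) : Prop where
  nonneg : 0 ≤ L
  lip : LipschitzOnWith 1 γ (Icc 0 L)
  mem : ∀ s ∈ Icc (0:ℝ) L, γ s ∈ Ω
  int : IntervalIntegrable (fun s => bdist Ω (γ s) ^ (α - 1)) volume 0 L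

/-- A curve which leaves `Q_i*` after visiting `Q_i` spends an arc of length `del θ * r i`
inside `Q_i*`. -/
theorem Whit.arc {Ω : Set (Eu n)} {θ : ℝ} {c : ℕ → Eu n} {r d : ℕ → ℝ} {a : ℕ → Eu n}
    (W : Whit Ω θ c r d a) {α L : ℝ} {γ : ℝ → Eu n} (hγ : IsCurve Ω α L γ) (i : ℕ)
    (hin : ∃ s ∈ Icc (0:ℝ) L, γ s ∈ Metric.closedBall (c i) (r i))
    (hout : ∃ s ∈ Icc (0:ℝ) L, γ s ∉ qstar θ c r i) :
    ∃ t, 0 ≤ t ∧ t + del θ * r i ≤ L ∧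
      ∀ s ∈ Icc t (t + del θ * r i), γ s ∈ qstar θ c r i := by
  obtain ⟨s0, h0, hs0⟩ := hin
  obtain ⟨s1, h1, hs1⟩ := hout
  have hpos : 0 < del θ * r i := mul_pos W.del_pos (W.pos i)
  have near : ∀ s ∈ Icc (0:ℝ) L, |s - s0| ≤ del θ * r i → γ s ∈ qstar θ c r i := by
    intro s hs hss
    have h2 := hγ.lip.dist_le_mul s hs s0 h0
    rw [NNReal.coe_one, one_mul, Real.dist_eq] at h2
    have h3 := dist_triangle (γ s) (γ s0) (c i)
    have h4 := Metric.mem_closedBall.1 hs0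
    refine Metric.mem_closedBall.2 ?_
    linarith
  have hfar : del θ * r i < |s1 - s0| := by
    by_contra! h
    exact hs1 (near s1 h1 h)
  rcases lt_abs.1 hfar with h | h
  · refine ⟨s0, h0.1, by linarith [h1.2], fun s hs => near s ⟨h0.1.trans hs.1, ?_⟩ ?_⟩
    · linarith [h1.2, hs.2]
    · rw [abs_of_nonneg (by linarith [hs.1])]
      linarith [hs.2]
  · refine ⟨s0 - del θ * r i, by linarith [h1.1], by linarith [h0.2], fun s hs =>
      near s ⟨?_, ?_⟩ ?_⟩
    · linarith [h1.1, hs.1]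
    · linarith [h0.2, hs.2]
    · rw [abs_of_nonpos (by linarith [hs.2])]
      linarith [hs.1]

/-- A curve visits only finitely many Whitney cubes. -/
theorem Whit.visited {Ω : Set (Eu n)} {θ : ℝ} {c : ℕ → Eu n} {r d : ℕ → ℝ} {a : ℕ → Eu n}
    (W : Whit Ω θ c r d a) {α L : ℝ} {γ : ℝ → Eu n} (hγ : IsCurve Ω α L γ) :
    ∃ S : Finset ℕ, (∀ s ∈ Icc (0:ℝ) L, ∃ i ∈ S, γ s ∈ Metric.closedBall (c i) (r i)) ∧
      ∀ i ∈ S, ∃ s ∈ Icc (0:ℝ) L, γ s ∈ Metric.closedBall (c i) (r i) := by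
  classical
  have hK : IsCompact (γ '' Icc 0 L) := isCompact_Icc.image_of_continuousOn hγ.lip.continuousOn
  have hsubb : ∀ i, Metric.closedBall (c i) (r i) ⊆ Metric.ball (c i) ((1 + del θ) * r i) :=
    fun i => Metric.closedBall_subset_ball (by
      have := mul_pos W.del_pos (W.pos i)
      linarith)
  obtain ⟨t, ht⟩ := hK.elim_finite_subcover (fun i => Metric.ball (c i) ((1 + del θ) * r i))
    (fun i => Metric.isOpen_ball) (by
      rintro _ ⟨s, hs, rfl⟩
      obtain ⟨i, hi⟩ := mem_iUnion.1 (W.cov (hγ.mem s hs))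
      exact mem_iUnion.2 ⟨i, hsubb i hi⟩)
  refine ⟨(t.biUnion W.nb).filter fun i => ∃ s ∈ Icc (0:ℝ) L,
    γ s ∈ Metric.closedBall (c i) (r i), fun s hs => ?_, fun i hi => (Finset.mem_filter.1 hi).2⟩
  obtain ⟨j, hj⟩ := mem_iUnion.1 (W.cov (hγ.mem s hs))
  obtain ⟨i, hit, hi⟩ := mem_iUnion₂.1 (ht ⟨s, hs, rfl⟩)
  refine ⟨j, Finset.mem_filter.2 ⟨Finset.mem_biUnion.2 ⟨i, hit, W.mem_nb.2 ?_⟩, s, hs, hj⟩, hj⟩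
  exact ⟨γ s, W.sub_star j hj, Metric.ball_subset_closedBall hi⟩

/-- The `α`-th powers of the sizes of the cubes visited by a curve are controlled by its
subhyperbolic length. -/
theorem Whit.sum_pow_le {Ω : Set (Eu n)} {θ : ℝ} {c : ℕ → Eu n} {r d : ℕ → ℝ} {a : ℕ → Eu n}
    (W : Whit Ω θ c r d a) {α L : ℝ} (hα1 : α ≤ 1) {γ : ℝ → Eu n} (hγ : IsCurve Ω α L γ)
    (S : Finset ℕ)
    (hin : ∀ i ∈ S, ∃ s ∈ Icc (0:ℝ) L, γ s ∈ Metric.closedBall (c i) (r i))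
    (hout : ∀ i ∈ S, ∃ s ∈ Icc (0:ℝ) L, γ s ∉ qstar θ c r i) :
    del θ * (6 * θ ^ 2) ^ (α - 1) * ∑ i ∈ S, r i ^ α ≤
      nbrBound n θ * ∫ s in (0:ℝ)..L, bdist Ω (γ s) ^ (α - 1) := by
  classical
  have hth := W.th_pos
  have hdel := W.del_pos
  have harc : ∀ i, ∃ t, i ∈ S → 0 ≤ t ∧ t + del θ * r i ≤ L ∧
      ∀ s ∈ Icc t (t + del θ * r i), γ s ∈ qstar θ c r i := by
    intro i
    by_cases hi : i ∈ S
    · obtain ⟨t, ht⟩ := W.arc hγ i (hin i hi) (hout i hi)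
      exact ⟨t, fun _ => ht⟩
    · exact ⟨0, fun h => absurd h hi⟩
  choose t ht using harc
  set w : ℝ → ℝ := fun s => bdist Ω (γ s) ^ (α - 1) with hw
  have hw0 : ∀ s, 0 ≤ w s := fun s => Real.rpow_nonneg (bdist_nonneg _ _) _
  have hwint : IntegrableOn w (Icc 0 L) := by
    rw [integrableOn_Icc_iff_integrableOn_Ioc]
    exact (intervalIntegrable_iff_integrableOn_Ioc_of_le hγ.nonneg).1 hγ.int
  set J : ℕ → Set ℝ := fun i => Icc (t i) (t i + del θ * r i) with hJ
  have hJsub : ∀ i ∈ S, J i ⊆ Icc 0 L := fun i hi s hs =>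
    ⟨(ht i hi).1.trans hs.1, hs.2.trans (ht i hi).2.1⟩
  have low : ∀ i ∈ S, del θ * (6 * θ ^ 2) ^ (α - 1) * r i ^ α ≤ ∫ s in J i, w s := by
    intro i hi
    have hri := W.pos i
    have h1 : ∀ s ∈ J i, (6 * θ ^ 2 * r i) ^ (α - 1) ≤ w s := fun s hs =>
      Real.rpow_le_rpow_of_nonpos (bdist_pos W.isOpen W.hf (hγ.mem s (hJsub i hi hs)))
        (W.bd_le_r i ((ht i hi).2.2 s hs)) (by linarith)
    have h2 := setIntegral_mono_on (μ := volume) (f := fun _ => (6 * θ ^ 2 * r i) ^ (α - 1))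
      (s := J i) (integrableOn_const (by simp [hJ])) (hwint.mono_set (hJsub i hi))
      measurableSet_Icc h1
    rw [setIntegral_const, Real.volume_real_Icc_of_le (by
      have := mul_pos hdel hri
      linarith), smul_eq_mul, add_sub_cancel_left] at h2
    refine le_trans (le_of_eq ?_) h2
    rw [Real.mul_rpow (by positivity) hri.le, show r i ^ α = r i * r i ^ (α - 1) by
      rw [Real.rpow_sub_one hri.ne', mul_div_cancel₀ _ hri.ne']]
    ring
  rw [Finset.mul_sum]
  refine (Finset.sum_le_sum low).trans ?_
  have e1 : ∀ i ∈ S, ∫ s in J i, w s = ∫ s in Icc 0 L, (J i).indicator w s := fun i hi => by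
    rw [setIntegral_indicator measurableSet_Icc, inter_eq_right.2 (hJsub i hi)]
  rw [Finset.sum_congr rfl e1, ← integral_finsetSum _ fun i _ =>
    hwint.indicator measurableSet_Icc, intervalIntegral.integral_of_le hγ.nonneg,
    ← integral_Icc_eq_integral_Ioc, ← integral_const_mul]
  refine setIntegral_mono_on (integrable_finsetSum _ fun i _ =>
    hwint.indicator measurableSet_Icc) (hwint.const_mul _) measurableSet_Icc fun s hs => ?_
  have e2 : ∑ i ∈ S, (J i).indicator w s = ((S.filter fun i => s ∈ J i).card : ℝ) * w s := by
    simp only [indicator_apply]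
    rw [← Finset.sum_filter, Finset.sum_const, nsmul_eq_mul]
  rw [e2]
  refine mul_le_mul_of_nonneg_right ?_ (hw0 s)
  obtain ⟨j, hj⟩ := mem_iUnion.1 (W.cov (hγ.mem s hs))
  refine W.nbr_card j _ fun i hi => ?_
  obtain ⟨hiS, hsi⟩ := Finset.mem_filter.1 hi
  exact ⟨γ s, (ht i hiS).2.2 s hsi, W.sub_star j hj⟩

/-- The constant of the chain estimate. -/
def chainC (n : ℕ) (p θ α : ℝ) : ℝ :=
  2 * morC n p 1 * (nbrBound n θ / (del θ * (6 * θ ^ 2) ^ (α - 1))) ^ (1 - 1 / p)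

/-- The chain estimate: the oscillation of a Sobolev function along a curve is controlled by the
subhyperbolic length.  The image of the curve is an interval, covered by the images of the visited
Whitney cubes, whose lengths are controlled by Morrey's inequality. -/
theorem Whit.chain (hn : 0 < n) {Ω : Set (Eu n)} {F : Eu n → ℝ} {g : Eu n → Eu n} {θ : ℝ}
    {c : ℕ → Eu n} {r d : ℕ → ℝ} {a : ℕ → Eu n} (W : Whit Ω θ c r d a) {p α L : ℝ}
    (hp : (n : ℝ) < p) (hα : α = (p - n) / (p - 1)) (hF : ContL1pRep Ω p F g) {γ : ℝ → Eu n}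
    (hγ : IsCurve Ω α L γ) (hsep : 4 * θ * bdist Ω (γ 0) < dist (γ 0) (γ L)) :
    |F (γ 0) - F (γ L)| ≤ chainC n p θ α * (∫ z in Ω, ‖g z‖ ^ p) ^ (1 / p) *
      (∫ s in (0:ℝ)..L, bdist Ω (γ s) ^ (α - 1)) ^ (1 - 1 / p) := by
  obtain ⟨hFc, hFg, hgi⟩ := hF
  have hn1 : (1 : ℝ) ≤ n := by exact_mod_cast hn
  have hp1 : 1 < p := by linarith
  have hp0 : 0 < p := by linarith
  have hα1 : α ≤ 1 := by
    rw [hα, div_le_one (by linarith)]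
    linarith
  have hθ := W.one_lt
  obtain ⟨S, hcov, hin⟩ := W.visited hγ
  have h0 : (0 : ℝ) ∈ Icc 0 L := ⟨le_rfl, hγ.nonneg⟩
  have hL : L ∈ Icc 0 L := ⟨hγ.nonneg, le_rfl⟩
  have hout : ∀ i ∈ S, ∃ s ∈ Icc (0:ℝ) L, γ s ∉ qstar θ c r i := by
    intro i _
    by_contra! h
    have h1 := Metric.mem_closedBall.1 (h 0 h0)
    have h2 := Metric.mem_closedBall'.1 (h L hL)
    have h3 := dist_triangle (γ 0) (c i) (γ L)
    have h4 := W.r_le_bd i (h 0 h0)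
    have h5 := W.del_le
    have h6 := W.pos i
    have h7 : del θ * r i ≤ 1 / 100 * r i := mul_le_mul_of_nonneg_right h5 h6.le
    linarith
  have hpow := W.sum_pow_le hα1 hγ S hin hout
  set m : ℝ := ∫ s in (0:ℝ)..L, bdist Ω (γ s) ^ (α - 1) with hm
  have hM := morC_nonneg (n := n) hp zero_le_one
  have hM' : 0 ≤ morC n p 1 := morC_nonneg hp zero_le_one
  set N : ℕ → ℝ := fun i => en Ω g p (c i) (r i) ^ (1 / p) with hN
  have hN0 : ∀ i, 0 ≤ N i := fun i => Real.rpow_nonneg (en_nonneg _ _ _ _ _) _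
  set o : ℕ → ℝ := fun i => morC n p 1 * (r i ^ (1 - n / p) * N i) with ho
  have ho0 : ∀ i, 0 ≤ o i := fun i => by
    have := W.pos i
    have := hN0 i
    positivity
  have hosc : ∀ i, ∀ x ∈ Metric.closedBall (c i) (r i), |F x - av Ω F (c i) (r i)| ≤ o i := by
    intro i x hx
    have := morrey_cube hn W.isOpen hFc hFg hp (W.pos i) hx (W.sub i)
      (hgi.mono_set inter_subset_left)
    rwa [mul_assoc] at this
  -- the image of the curve is an interval covered by the images of the visited cubes
  have hlen : |F (γ 0) - F (γ L)| ≤ ∑ i ∈ S, 2 * o i := by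
    have hsub : uIcc (F (γ 0)) (F (γ L)) ⊆
        ⋃ i ∈ S, Icc (av Ω F (c i) (r i) - o i) (av Ω F (c i) (r i) + o i) := by
      have hc : ContinuousOn (fun s => F (γ s)) (uIcc 0 L) := by
        rw [uIcc_of_le hγ.nonneg]
        exact hFc.comp hγ.lip.continuousOn hγ.mem
      refine (intermediate_value_uIcc hc).trans ?_
      rintro _ ⟨s, hs, rfl⟩
      rw [uIcc_of_le hγ.nonneg] at hs
      obtain ⟨i, hi, hsi⟩ := hcov s hs
      have := abs_le.1 (hosc i _ hsi)
      exact mem_iUnion₂.2 ⟨i, hi, by linarith, by linarith⟩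
    have h1 := (measure_mono (μ := volume) hsub).trans (measure_biUnion_finset_le S _)
    rw [Real.volume_interval] at h1
    have h2 : ∑ i ∈ S, volume (Icc (av Ω F (c i) (r i) - o i) (av Ω F (c i) (r i) + o i)) =
        ENNReal.ofReal (∑ i ∈ S, 2 * o i) := by
      rw [ENNReal.ofReal_sum_of_nonneg fun i _ => mul_nonneg zero_le_two (ho0 i)]
      refine Finset.sum_congr rfl fun i _ => ?_
      rw [Real.volume_Icc]
      ring_nf
    rw [h2, ENNReal.ofReal_le_ofReal_iff (Finset.sum_nonneg fun i _ =>
      mul_nonneg zero_le_two (ho0 i))] at h1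
    rwa [abs_sub_comm]
  have hpq : (p / (p - 1)).HolderConjugate p := (Real.HolderConjugate.conjExponent hp1).symm
  have hho := Real.inner_le_Lp_mul_Lq_of_nonneg S hpq (f := fun i => r i ^ (1 - n / p)) (g := N)
    (fun i _ => Real.rpow_nonneg (W.pos i).le _) (fun i _ => hN0 i)
  have e1 : ∀ i, (r i ^ (1 - n / p)) ^ (p / (p - 1)) = r i ^ α := fun i => by
    rw [← Real.rpow_mul (W.pos i).le, hα]
    congr 1
    have : p - 1 ≠ 0 := by linarith
    field_simp
  have e2 : ∀ i, N i ^ p = en Ω g p (c i) (r i) := fun i => by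
    rw [hN]
    simp only
    rw [← Real.rpow_mul (en_nonneg _ _ _ _ _), one_div_mul_cancel hp0.ne', Real.rpow_one]
  have e3 : 1 / (p / (p - 1)) = 1 - 1 / p := by
    field_simp
  rw [Finset.sum_congr rfl fun i _ => e1 i, Finset.sum_congr rfl fun i _ => e2 i, e3] at hho
  have hE : ∑ i ∈ S, en Ω g p (c i) (r i) ≤ ∫ z in Ω, ‖g z‖ ^ p := by
    have h1 := W.sum_lint S (fun i _ => W.sub i) (fun z => ENNReal.ofReal (‖g z‖ ^ p))
    have h2 : ∀ i, ∫⁻ z in Metric.closedBall (c i) (r i), ENNReal.ofReal (‖g z‖ ^ p) =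
        ENNReal.ofReal (en Ω g p (c i) (r i)) := fun i => by
      unfold en
      rw [inter_eq_right.2 (W.sub i), ofReal_integral_eq_lintegral_ofReal (hgi.mono_set (W.sub i))
        (Eventually.of_forall fun z => by positivity)]
    rw [Finset.sum_congr rfl fun i _ => h2 i, ← ofReal_integral_eq_lintegral_ofReal hgi
      (Eventually.of_forall fun z => by positivity),
      ← ENNReal.ofReal_sum_of_nonneg fun i _ => en_nonneg _ _ _ _ _] at h1
    exact (ENNReal.ofReal_le_ofReal_iff (integral_nonneg fun z => by positivity)).1 h1
  have hB : 0 < del θ * (6 * θ ^ 2) ^ (α - 1) := mul_pos W.del_pos (by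
    have := W.th_pos
    positivity)
  have hR : ∑ i ∈ S, r i ^ α ≤ nbrBound n θ / (del θ * (6 * θ ^ 2) ^ (α - 1)) * m := by
    rw [div_mul_eq_mul_div, le_div_iff₀ hB]
    linarith
  have hR0 : 0 ≤ ∑ i ∈ S, r i ^ α := Finset.sum_nonneg fun i _ => Real.rpow_nonneg (W.pos i).le _
  have hE0 : 0 ≤ ∑ i ∈ S, en Ω g p (c i) (r i) := Finset.sum_nonneg fun i _ => en_nonneg _ _ _ _ _
  have hm0 : 0 ≤ m := by
    rw [hm, intervalIntegral.integral_of_le hγ.nonneg]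
    exact integral_nonneg fun s => Real.rpow_nonneg (bdist_nonneg _ _) _
  have hnb : 0 ≤ nbrBound n θ := by
    have := W.th_pos
    unfold nbrBound
    positivity
  have hp2 : 0 ≤ 1 - 1 / p := by
    rw [sub_nonneg, div_le_one hp0]
    exact hp1.le
  have e4 : ∑ i ∈ S, 2 * o i = 2 * morC n p 1 * ∑ i ∈ S, r i ^ (1 - n / p) * N i := by
    rw [Finset.mul_sum]
    exact Finset.sum_congr rfl fun i _ => by rw [ho]; ring
  rw [e4] at hlen
  refine hlen.trans ?_
  calc 2 * morC n p 1 * ∑ i ∈ S, r i ^ (1 - n / p) * N i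
      ≤ 2 * morC n p 1 * ((nbrBound n θ / (del θ * (6 * θ ^ 2) ^ (α - 1)) * m) ^ (1 - 1 / p) *
          (∫ z in Ω, ‖g z‖ ^ p) ^ (1 / p)) := by
        refine mul_le_mul_of_nonneg_left (hho.trans ?_) (by positivity)
        exact mul_le_mul (Real.rpow_le_rpow hR0 hR hp2) (Real.rpow_le_rpow hE0 hE (by positivity))
          (Real.rpow_nonneg hE0 _) (Real.rpow_nonneg (mul_nonneg (div_nonneg hnb hB.le) hm0) _)
    _ = _ := by
        rw [Real.mul_rpow (div_nonneg hnb hB.le) hm0, chainC]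
        ring

/-! ### Continuity of traces with respect to the boundary metric -/

theorem IsCurve.mass_nonneg {Ω : Set (Eu n)} {α L : ℝ} {γ : ℝ → Eu n} (hγ : IsCurve Ω α L γ) :
    0 ≤ ∫ s in (0:ℝ)..L, bdist Ω (γ s) ^ (α - 1) := by
  rw [intervalIntegral.integral_of_le hγ.nonneg]
  exact integral_nonneg fun s => Real.rpow_nonneg (bdist_nonneg _ _) _

theorem exists_curve {Ω : Set (Eu n)} (hΩ : IsOpen Ω) (hf : (frontier Ω).Nonempty)
    (hconn : IsConnected Ω) {α : ℝ} (hα : α ≤ 1) {x y : Eu n} (hx : x ∈ Ω) (hy : y ∈ Ω) {δ : ℝ}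
    (h : dSub Ω α x y < δ) : ∃ (L : ℝ) (γ : ℝ → Eu n), IsCurve Ω α L γ ∧ γ 0 = x ∧ γ L = y ∧
      ∫ s in (0:ℝ)..L, bdist Ω (γ s) ^ (α - 1) < δ := by
  obtain ⟨_, ⟨L, γ, hL, hlip, h0, h1, hmem, hintg, rfl⟩, hlt⟩ :=
    exists_lt_of_csInf_lt (subLen_nonempty hΩ hf hconn hα hx hy) h
  exact ⟨L, γ, ⟨hL, hlip, hmem, hintg⟩, h0, h1, hlt⟩

/-- The length of the part of a curve on which the mass accumulates. -/
theorem IsCurve.dSub_le_mass {Ω : Set (Eu n)} {α L : ℝ} {γ : ℝ → Eu n} (hγ : IsCurve Ω α L γ)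
    {s t : ℝ} (hs : s ∈ Icc 0 L) (ht : t ∈ Icc 0 L) :
    dSub Ω α (γ s) (γ t) ≤ |(∫ u in (0:ℝ)..s, bdist Ω (γ u) ^ (α - 1)) -
      ∫ u in (0:ℝ)..t, bdist Ω (γ u) ^ (α - 1)| := by
  have hii : ∀ {s}, s ∈ Icc 0 L →
      IntervalIntegrable (fun u => bdist Ω (γ u) ^ (α - 1)) volume 0 s := fun {s} hs =>
    hγ.int.mono_set (by
      rw [uIcc_of_le hs.1, uIcc_of_le hγ.nonneg]
      exact Icc_subset_Icc_right hs.2)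
  have main : ∀ {s t}, s ∈ Icc 0 L → t ∈ Icc 0 L → s ≤ t →
      dSub Ω α (γ s) (γ t) ≤ |(∫ u in (0:ℝ)..s, bdist Ω (γ u) ^ (α - 1)) -
        ∫ u in (0:ℝ)..t, bdist Ω (γ u) ^ (α - 1)| := fun {s t} hs ht hst => by
    refine (dSub_le (subLen_restrict hγ.lip hγ.mem hγ.int hs.1 hst ht.2)).trans ?_
    rw [abs_sub_comm, intervalIntegral.integral_interval_sub_left (hii ht) (hii hs)]
    exact le_abs_self _
  rcases le_total s t with h | h
  · exact main hs ht h
  · rw [dSub_comm, abs_sub_comm]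
    exact main ht hs h

theorem IsCurve.mass_mem {Ω : Set (Eu n)} {α L : ℝ} {γ : ℝ → Eu n} (hγ : IsCurve Ω α L γ)
    {s : ℝ} (hs : s ∈ Icc 0 L) :
    (∫ u in (0:ℝ)..s, bdist Ω (γ u) ^ (α - 1)) ∈
      Icc 0 (∫ u in (0:ℝ)..L, bdist Ω (γ u) ^ (α - 1)) := by
  have h0 : ∀ u, 0 ≤ bdist Ω (γ u) ^ (α - 1) := fun u => Real.rpow_nonneg (bdist_nonneg _ _) _
  refine ⟨intervalIntegral.integral_nonneg hs.1 fun u _ => h0 u, ?_⟩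
  exact intervalIntegral.integral_mono_interval le_rfl hs.1 hs.2 (Eventually.of_forall h0) hγ.int

/-- Limit points of families of curves of bounded mass, taken along an ultrafilter. -/
theorem limit_pts {Ω : Set (Eu n)} (hΩ : IsOpen Ω) (hf : (frontier Ω).Nonempty)
    (hconn : IsConnected Ω) {α δ : ℝ} (hα : α ≤ 1) {β ι : Type*} (U : Ultrafilter β)
    {L : β → ℝ} {γ : β → ℝ → Eu n}
    (hγ : ∀ᶠ q in (U : Filter β), IsCurve Ω α (L q) (γ q) ∧
      ∫ s in (0:ℝ)..(L q), bdist Ω (γ q s) ^ (α - 1) ≤ δ)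
    {K : ι → Set (Eu n)} (hK : ∀ i, IsCompact (K i)) (hKΩ : ∀ i, K i ⊆ Ω)
    (hit : ∀ i, ∀ᶠ q in (U : Filter β), ∃ s ∈ Icc 0 (L q), γ q s ∈ K i) :
    ∃ (z : ι → Eu n) (m : ι → ℝ), (∀ i, z i ∈ K i) ∧ (∀ i, m i ∈ Icc 0 δ) ∧
      ∀ i j, dSub Ω α (z i) (z j) ≤ |m i - m j| := by
  classical
  have hch : ∀ i q, ∃ s, (∃ s ∈ Icc 0 (L q), γ q s ∈ K i) → s ∈ Icc 0 (L q) ∧ γ q s ∈ K i := by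
    intro i q
    by_cases h : ∃ s ∈ Icc 0 (L q), γ q s ∈ K i
    · obtain ⟨s, h1, h2⟩ := h
      exact ⟨s, fun _ => ⟨h1, h2⟩⟩
    · exact ⟨0, fun h' => absurd h' h⟩
  choose s hs using hch
  have hs' : ∀ i, ∀ᶠ q in (U : Filter β), s i q ∈ Icc 0 (L q) ∧ γ q (s i q) ∈ K i := fun i =>
    (hit i).mono fun q hq => hs i q hq
  set M : ι → β → ℝ := fun i q => ∫ u in (0:ℝ)..(s i q), bdist Ω (γ q u) ^ (α - 1) with hM
  have hz : ∀ i, ∃ z ∈ K i, Tendsto (fun q => γ q (s i q)) U (nhds z) := fun i =>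
    (hK i).ultrafilter_le_nhds' (U.map fun q => γ q (s i q)) ((hs' i).mono fun q hq => hq.2)
  have hm : ∀ i, ∃ m ∈ Icc (0:ℝ) δ, Tendsto (M i) U (nhds m) := fun i => by
    refine isCompact_Icc.ultrafilter_le_nhds' (U.map (M i)) ?_
    show ∀ᶠ q in (U : Filter β), M i q ∈ Icc 0 δ
    filter_upwards [hs' i, hγ] with q h1 h2
    have := h2.1.mass_mem h1.1
    exact ⟨this.1, this.2.trans h2.2⟩
  choose z hzK hzt using hz
  choose m hmI hmt using hm
  refine ⟨z, m, hzK, hmI, fun i j => ?_⟩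
  have t1 : ∀ i, Tendsto (fun q => dSub Ω α (z i) (γ q (s i q))) U (nhds 0) := fun i =>
    dSub_tendsto_zero hΩ hf hα (hKΩ i (hzK i)) (hzt i)
  have t2 : Tendsto (fun q => dSub Ω α (z i) (γ q (s i q)) + |M i q - M j q| +
      dSub Ω α (z j) (γ q (s j q))) U (nhds (0 + |m i - m j| + 0)) :=
    ((t1 i).add ((hmt i).sub (hmt j)).abs).add (t1 j)
  rw [zero_add, add_zero] at t2
  refine ge_of_tendsto t2 ?_
  filter_upwards [hs' i, hs' j, hγ] with q h1 h2 h3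
  have hzi := hKΩ i (hzK i)
  have hzj := hKΩ j (hzK j)
  have hi := hKΩ i h1.2
  have hj := hKΩ j h2.2
  have a1 := dSub_triangle hΩ hf hconn hα hzi hi hzj
  have a2 := dSub_triangle hΩ hf hconn hα hi hj hzj
  have a3 := h3.1.dSub_le_mass h1.1 h2.1
  rw [dSub_comm Ω α (γ q (s j q)) (z j)] at a2
  linarith

/-- A curve of mass at most `δ` leaving a neighbourhood of a point meets a fixed compact subset
of `Ω`: staying too close to the boundary is expensive when `α < 1`, and in dimension one the
spheres are finite. -/
theorem trap {Ω : Set (Eu n)} (hΩ : IsOpen Ω) (hf : (frontier Ω).Nonempty) {α : ℝ}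
    (hα : n = 1 ∨ α < 1) (x : Eu n) {ρ δ : ℝ} (hρ : 0 < ρ) (hδ : 0 ≤ δ) :
    ∃ K : Set (Eu n), IsCompact K ∧ K ⊆ Ω ∧ K ⊆ Metric.closedBall x ρ ∧
      ∀ (L : ℝ) (γ : ℝ → Eu n), IsCurve Ω α L γ →
        ∫ s in (0:ℝ)..L, bdist Ω (γ s) ^ (α - 1) ≤ δ →
        ∀ s ∈ Icc 0 L, ∀ t ∈ Icc 0 L, dist (γ s) x ≤ ρ / 2 → ρ ≤ dist (γ t) x →
          ∃ u ∈ Icc 0 L, γ u ∈ K := by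
  have ivt : ∀ (L : ℝ) (γ : ℝ → Eu n), IsCurve Ω α L γ →
      ∀ s ∈ Icc 0 L, ∀ t ∈ Icc 0 L, dist (γ s) x ≤ ρ / 2 → ρ ≤ dist (γ t) x →
        ∀ τ ∈ Icc (ρ / 2) ρ, ∃ u ∈ Icc 0 L, dist (γ u) x = τ := by
    intro L γ hγ s hs t ht h1 h2 τ hτ
    have hsub : uIcc s t ⊆ Icc 0 L := ordConnected_Icc.uIcc_subset hs ht
    have hc : ContinuousOn (fun u => dist (γ u) x) (uIcc s t) :=
      (continuous_id.dist (continuous_const (y := x))).comp_continuousOn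
        (hγ.lip.continuousOn.mono hsub)
    obtain ⟨u, hu, hue⟩ := intermediate_value_uIcc hc
      (Icc_subset_uIcc ⟨h1.trans hτ.1, hτ.2.trans h2⟩)
    exact ⟨u, hsub hu, hue⟩
  rcases hα with rfl | hα
  · refine ⟨Metric.sphere x ρ ∩ Ω, Set.Finite.isCompact (Set.Finite.subset ?_ inter_subset_left),
      inter_subset_right, inter_subset_left.trans Metric.sphere_subset_closedBall, ?_⟩
    · refine (Set.toFinite {fun _ => x 0 + ρ, fun _ => x 0 - ρ}).subset fun z hz => ?_
      have h1 : |z 0 - x 0| = ρ := by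
        have h2 : dist z x = ρ := hz
        rw [dist_pi_def] at h2
        have h3 : (Finset.univ : Finset (Fin 1)) = {0} := rfl
        rw [h3, Finset.sup_singleton, coe_nndist, Real.dist_eq] at h2
        exact h2
      rcases (abs_eq hρ.le).1 h1 with h | h
      · left
        ext k
        rw [Subsingleton.elim k 0]
        linarith
      · right
        ext k
        rw [Subsingleton.elim k 0]
        linarith
    · intro L γ hγ _ s hs t ht h1 h2
      obtain ⟨u, hu, hue⟩ := ivt L γ hγ s hs t ht h1 h2 ρ ⟨by linarith, le_rfl⟩
      exact ⟨u, hu, hue, hγ.mem u hu⟩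
  · set B : ℝ := 2 * (δ + 1) / ρ with hB
    have hB0 : 0 < B := by positivity
    set k : ℝ := B ^ (1 / (α - 1)) with hk
    have hk0 : 0 < k := Real.rpow_pos_of_pos hB0 _
    have hkB : k ^ (α - 1) = B := by
      rw [hk, ← Real.rpow_mul hB0.le, one_div_mul_cancel (by linarith), Real.rpow_one]
    refine ⟨closure Ω ∩ {z | k ≤ bdist Ω z} ∩ Metric.closedBall x ρ, ?_, ?_, inter_subset_right,
      ?_⟩
    · exact (isCompact_closedBall x ρ).inter_left
        (isClosed_closure.inter (isClosed_le continuous_const (bdist_continuous Ω)))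
    · rintro z ⟨⟨hz, hzk⟩, -⟩
      by_contra hzΩ
      have h1 : z ∈ frontier Ω := by
        rw [hΩ.frontier_eq]
        exact ⟨hz, hzΩ⟩
      have h2 : bdist Ω z = 0 := Metric.infDist_zero_of_mem h1
      have h3 : k ≤ bdist Ω z := hzk
      linarith
    · intro L γ hγ hmass s hs t ht h1 h2
      by_contra! hno
      set A : Set ℝ := Icc 0 L ∩ (fun u => dist (γ u) x) ⁻¹' Iic ρ with hA
      have hDc : ContinuousOn (fun u => dist (γ u) x) (Icc 0 L) :=
        (continuous_id.dist (continuous_const (y := x))).comp_continuousOn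
          hγ.lip.continuousOn
      have hAc : IsClosed A := hDc.preimage_isClosed_of_isClosed isClosed_Icc isClosed_Iic
      have hAL : A ⊆ Icc 0 L := inter_subset_left
      have hlip : LipschitzOnWith 1 (fun u => dist (γ u) x) A := by
        refine LipschitzOnWith.of_dist_le_mul fun u hu v hv => ?_
        have h3 := hγ.lip.dist_le_mul u (hAL hu) v (hAL hv)
        refine le_trans ?_ h3
        rw [Real.dist_eq]
        exact abs_dist_sub_le _ _ _
      have hvol : ENNReal.ofReal (ρ / 2) ≤ volume A := by
        have h3 := hlip.hausdorffMeasure_image_le (d := 1) zero_le_one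
        rw [hausdorffMeasure_real] at h3
        simp only [ENNReal.coe_one, ENNReal.one_rpow, one_mul] at h3
        refine le_trans ?_ h3
        have h4 : Icc (ρ / 2) ρ ⊆ (fun u => dist (γ u) x) '' A := by
          intro τ hτ
          obtain ⟨u, hu, hue⟩ := ivt L γ hγ s hs t ht h1 h2 τ hτ
          exact ⟨u, ⟨hu, by rw [mem_preimage, hue]; exact hτ.2⟩, hue⟩
        refine le_trans (le_of_eq ?_) (measure_mono h4)
        rw [Real.volume_Icc]
        ring_nf
      have hAfin : volume A ≠ ∞ :=
        ((measure_mono hAL).trans_lt (by rw [Real.volume_Icc]; exact ofReal_lt_top)).ne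
      have hvol' : ρ / 2 ≤ volume.real A :=
        (ENNReal.ofReal_le_iff_le_toReal hAfin).1 hvol
      have hw0 : ∀ u, 0 ≤ bdist Ω (γ u) ^ (α - 1) :=
        fun u => Real.rpow_nonneg (bdist_nonneg _ _) _
      have hwint : IntegrableOn (fun u => bdist Ω (γ u) ^ (α - 1)) (Icc 0 L) := by
        rw [integrableOn_Icc_iff_integrableOn_Ioc]
        exact (intervalIntegrable_iff_integrableOn_Ioc_of_le hγ.nonneg).1 hγ.int
      have hlow : ∀ u ∈ A, B ≤ bdist Ω (γ u) ^ (α - 1) := by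
        intro u hu
        have hbk : bdist Ω (γ u) ≤ k := by
          by_contra! h3
          exact hno u (hAL hu) ⟨⟨subset_closure (hγ.mem u (hAL hu)), h3.le⟩, hu.2⟩
        have hb0 := bdist_pos hΩ hf (hγ.mem u (hAL hu))
        rw [← hkB]
        exact Real.rpow_le_rpow_of_nonpos hb0 hbk (by linarith)
      have h5 := setIntegral_mono_on (μ := volume) (f := fun _ => B) (s := A)
        (integrableOn_const hAfin) (hwint.mono_set hAL) hAc.measurableSet hlow
      rw [setIntegral_const, smul_eq_mul] at h5
      have h6 : ∫ u in A, bdist Ω (γ u) ^ (α - 1) ≤ ∫ u in Icc 0 L, bdist Ω (γ u) ^ (α - 1) :=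
        setIntegral_mono_set hwint (Eventually.of_forall hw0) hAL.eventuallyLE
      rw [integral_Icc_eq_integral_Ioc, ← intervalIntegral.integral_of_le hγ.nonneg] at h6
      have h7 : ρ / 2 * B ≤ volume.real A * B := mul_le_mul_of_nonneg_right hvol' hB0.le
      have h8 : ρ / 2 * B = δ + 1 := by
        rw [hB]
        field_simp
      linarith

theorem dBar_frequently {Ω : Set (Eu n)} (hΩ : IsOpen Ω) (hf : (frontier Ω).Nonempty)
    (hconn : IsConnected Ω) {α δ : ℝ} (hα : α ≤ 1) {x y : Eu n} (hx : Accessible Ω α x)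
    (hy : Accessible Ω α y) (h : dBar Ω α x y < δ) :
    ∃ᶠ q in ((nhds x) ⊓ Filter.principal Ω) ×ˢ ((nhds y) ⊓ Filter.principal Ω),
      dSub Ω α q.1 q.2 < δ := by
  refine frequently_lt_of_liminf_lt ?_ h
  obtain ⟨-, u, hu, hut, huc⟩ := hx
  obtain ⟨-, v, hv, hvt, hvc⟩ := hy
  have hle : ∀ a b, dSub Ω α a b ≤ dTil Ω α a b := fun a b =>
    le_add_of_nonneg_right (Real.rpow_nonneg (norm_nonneg _) _)
  obtain ⟨N1, hN1⟩ := huc 1 one_pos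
  obtain ⟨N2, hN2⟩ := hvc 1 one_pos
  have hin : ∀ {w : ℕ → Eu n} {z : Eu n}, (∀ i, w i ∈ Ω) → Tendsto w atTop (nhds z) →
      Tendsto w atTop (nhds z ⊓ Filter.principal Ω) := fun hw ht =>
    tendsto_inf.2 ⟨ht, tendsto_principal.2 (Eventually.of_forall hw)⟩
  have ht : Tendsto (fun i => (u i, v i)) atTop
      (((nhds x) ⊓ Filter.principal Ω) ×ˢ ((nhds y) ⊓ Filter.principal Ω)) :=
    (hin hu hut).prodMk (hin hv hvt)
  refine IsCoboundedUnder.of_frequently_le (a := 1 + dSub Ω α (u N1) (v N2) + 1)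
    (ht.frequently (Eventually.frequently ?_))
  filter_upwards [eventually_ge_atTop N1, eventually_ge_atTop N2] with i h1 h2
  have a1 := (hle _ _).trans_lt (hN1 i h1 N1 le_rfl)
  have a2 := (hle _ _).trans_lt (hN2 N2 le_rfl i h2)
  have a3 := dSub_triangle hΩ hf hconn hα (hu i) (hu N1) (hv i)
  have a4 := dSub_triangle hΩ hf hconn hα (hu N1) (hv N2) (hv i)
  show dSub Ω α (u i) (v i) ≤ _
  linarith

theorem chainC_nonneg {p θ α : ℝ} (hp : (n : ℝ) < p) (hθ : 0 < θ) : 0 ≤ chainC n p θ α := by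
  have := morC_nonneg (n := n) hp zero_le_one
  unfold chainC nbrBound del
  positivity

/-- The trace is Hölder continuous with respect to the boundary metric. -/
theorem Whit.trace_holder (hn : 0 < n) {Ω : Set (Eu n)} {F : Eu n → ℝ} {g : Eu n → Eu n} {θ : ℝ}
    {c : ℕ → Eu n} {r d : ℕ → ℝ} {a : ℕ → Eu n} (W : Whit Ω θ c r d a) (hconn : IsConnected Ω)
    {p α : ℝ} (hp : (n : ℝ) < p) (hα : α = (p - n) / (p - 1)) (hF : ContL1pRep Ω p F g)
    {f : Eu n → ℝ} (hf : TraceEq Ω α F f) {x y : Eu n} (hx : Accessible Ω α x)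
    (hy : Accessible Ω α y) (hxy : x ≠ y) {δ t : ℝ} (hδt : δ < t) (h : dBar Ω α x y < δ) :
    |f x - f y| ≤ chainC n p θ α * (∫ z in Ω, ‖g z‖ ^ p) ^ (1 / p) * t ^ (1 - 1 / p) := by
  have hΩ := W.isOpen
  have hfr := W.hf
  have hn1 : (1 : ℝ) ≤ n := by exact_mod_cast hn
  have hp1 : 0 < p - 1 := by linarith
  have hα0 : 0 < α := by
    rw [hα]
    exact div_pos (by linarith) hp1
  have hα1 : α ≤ 1 := by
    rw [hα, div_le_one hp1]
    linarith
  have hnα : n = 1 ∨ α < 1 := by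
    rcases Nat.lt_or_ge 1 n with h1 | h1
    · right
      have : (1 : ℝ) < n := by exact_mod_cast h1
      rw [hα, div_lt_one hp1]
      linarith
    · left
      omega
  set l : Filter (Eu n × Eu n) :=
    ((nhds x) ⊓ Filter.principal Ω) ×ˢ ((nhds y) ⊓ Filter.principal Ω) with hl
  have hfreq := dBar_frequently hΩ hfr hconn hα1 hx hy h
  obtain ⟨U, hU⟩ := Ultrafilter.exists_le (f := l ⊓ 𝓟 {q | dSub Ω α q.1 q.2 < δ})
    (h := frequently_mem_iff_neBot.1 hfreq)
  have hUl : (U : Filter (Eu n × Eu n)) ≤ l := hU.trans inf_le_left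
  have hUδ : ∀ᶠ q in (U : Filter (Eu n × Eu n)), dSub Ω α q.1 q.2 < δ :=
    (hU.trans inf_le_right) (mem_principal_self _)
  have hU1 : Tendsto (Prod.fst : Eu n × Eu n → Eu n) U (nhds x ⊓ 𝓟 Ω) := tendsto_fst.mono_left hUl
  have hU2 : Tendsto (Prod.snd : Eu n × Eu n → Eu n) U (nhds y ⊓ 𝓟 Ω) := tendsto_snd.mono_left hUl
  have hUΩ1 : ∀ᶠ q in (U : Filter (Eu n × Eu n)), q.1 ∈ Ω :=
    tendsto_principal.1 (tendsto_inf.1 hU1).2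
  have hUΩ2 : ∀ᶠ q in (U : Filter (Eu n × Eu n)), q.2 ∈ Ω :=
    tendsto_principal.1 (tendsto_inf.1 hU2).2
  have hUx := (tendsto_inf.1 hU1).1
  have hUy := (tendsto_inf.1 hU2).1
  have hδ0 : 0 ≤ δ := by
    obtain ⟨q, hq⟩ := hUδ.exists
    exact (dSub_nonneg _ _ _ _).trans hq.le
  -- a curve of mass less than `δ` for each pair of points in the ultrafilter
  have hcurve : ∀ q : Eu n × Eu n, ∃ (L : ℝ) (γ : ℝ → Eu n),
      (q.1 ∈ Ω ∧ q.2 ∈ Ω ∧ dSub Ω α q.1 q.2 < δ) → IsCurve Ω α L γ ∧ γ 0 = q.1 ∧ γ L = q.2 ∧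
        ∫ s in (0:ℝ)..L, bdist Ω (γ s) ^ (α - 1) < δ := by
    intro q
    by_cases hq : q.1 ∈ Ω ∧ q.2 ∈ Ω ∧ dSub Ω α q.1 q.2 < δ
    · obtain ⟨L, γ, h1⟩ := exists_curve hΩ hfr hconn hα1 hq.1 hq.2.1 hq.2.2
      exact ⟨L, γ, fun _ => h1⟩
    · exact ⟨0, fun _ => 0, fun h => absurd h hq⟩
  choose L γ hγ using hcurve
  have hγU : ∀ᶠ q in (U : Filter (Eu n × Eu n)), IsCurve Ω α (L q) (γ q) ∧ γ q 0 = q.1 ∧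
      γ q (L q) = q.2 ∧ ∫ s in (0:ℝ)..(L q), bdist Ω (γ q s) ^ (α - 1) < δ := by
    filter_upwards [hUΩ1, hUΩ2, hUδ] with q h1 h2 h3 using hγ q ⟨h1, h2, h3⟩
  have hd0 : 0 < dist x y := dist_pos.2 hxy
  set ρ : ℕ → ℝ := fun j => dist x y / 2 * ((j : ℝ) + 1)⁻¹ with hρ
  have hρ0 : ∀ j, 0 < ρ j := fun j => by positivity
  have hρ1 : ∀ j, ρ j ≤ dist x y / 2 := fun j => by
    refine mul_le_of_le_one_right (by positivity) (inv_le_one_of_one_le₀ ?_)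
    have : (0 : ℝ) ≤ j := by positivity
    linarith
  have hρt : Tendsto ρ atTop (nhds 0) := by
    have := (tendsto_one_div_add_atTop_nhds_zero_nat (𝕜 := ℝ)).const_mul (dist x y / 2)
    simpa [hρ, one_div] using this
  choose Kx hKx1 hKx2 hKx3 hKx4 using fun j => trap hΩ hfr hnα x (hρ0 j) hδ0
  choose Ky hKy1 hKy2 hKy3 hKy4 using fun j => trap hΩ hfr hnα y (hρ0 j) hδ0
  obtain ⟨z, m, hzK, hmI, hzm⟩ := limit_pts (ι := ℕ ⊕ ℕ) hΩ hfr hconn hα1 U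
    (hγU.mono fun q hq => ⟨hq.1, hq.2.2.2.le⟩) (K := Sum.elim Kx Ky)
    (by rintro (j | j) <;> simp [hKx1, hKy1]) (by rintro (j | j) <;> simp [hKx2, hKy2]) (by
      have hx2 : ∀ j, ∀ᶠ q in (U : Filter (Eu n × Eu n)), dist q.1 x ≤ ρ j / 2 := fun j =>
        (hUx.eventually (Metric.ball_mem_nhds x (half_pos (hρ0 j)))).mono fun q hq => le_of_lt hq
      have hy2 : ∀ j, ∀ᶠ q in (U : Filter (Eu n × Eu n)), dist q.2 y ≤ ρ j / 2 := fun j =>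
        (hUy.eventually (Metric.ball_mem_nhds y (half_pos (hρ0 j)))).mono fun q hq => le_of_lt hq
      rintro (j | j)
      · filter_upwards [hγU, hx2 j, hy2 j] with q hq h1 h2
        refine hKx4 j _ _ hq.1 hq.2.2.2.le 0 ⟨le_rfl, hq.1.nonneg⟩ (L q) ⟨hq.1.nonneg, le_rfl⟩
          (by rw [hq.2.1]; exact h1) ?_
        rw [hq.2.2.1]
        have := dist_triangle_left x y q.2
        linarith [hρ1 j, hρ0 j]
      · filter_upwards [hγU, hx2 j, hy2 j] with q hq h1 h2
        refine hKy4 j _ _ hq.1 hq.2.2.2.le (L q) ⟨hq.1.nonneg, le_rfl⟩ 0 ⟨le_rfl, hq.1.nonneg⟩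
          (by rw [hq.2.2.1]; exact h2) ?_
        rw [hq.2.1]
        have := dist_triangle_left x y q.1
        linarith [hρ1 j, hρ0 j])
  -- the limit points form sequences along which the trace is attained
  have acc : ∀ {e : ℕ → ℕ ⊕ ℕ} {b : Eu n}, (∀ j, z (e j) ∈ Ω) →
      (∀ j, dist (z (e j)) b ≤ ρ j) →
      ∃ φ : ℕ → ℕ, AccessSeq Ω α b fun j => z (e (φ j)) := by
    intro e b he heb
    obtain ⟨m0, -, φ, hφ, hφt⟩ := isCompact_Icc.tendsto_subseq (fun j => hmI (e j))
    refine ⟨φ, accessSeq_of_dSub hα0 (fun j => he _) ?_ fun ε0 hε0 => ?_⟩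
    · have h1 : Tendsto (fun j => z (e j)) atTop (nhds b) :=
        tendsto_iff_dist_tendsto_zero.2
          (squeeze_zero (fun _ => dist_nonneg) heb hρt)
      exact h1.comp hφ.tendsto_atTop
    · obtain ⟨N, hN⟩ := Metric.cauchySeq_iff.1 hφt.cauchySeq ε0 hε0
      exact ⟨N, fun i hi j hj => (hzm _ _).trans_lt (hN i hi j hj)⟩
  obtain ⟨φ, hφ⟩ := acc (e := Sum.inl) (b := x) (fun j => hKx2 j (hzK (Sum.inl j)))
    (fun j => hKx3 j (hzK (Sum.inl j)))
  obtain ⟨ψ, hψ⟩ := acc (e := Sum.inr) (b := y) (fun j => hKy2 j (hzK (Sum.inr j)))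
    (fun j => hKy3 j (hzK (Sum.inr j)))
  have hlim := ((hf x hx _ hφ).sub (hf y hy _ hψ)).abs
  refine le_of_tendsto hlim ?_
  have hsep1 : Tendsto (fun j => dist (z (Sum.inl (φ j))) (z (Sum.inr (ψ j)))) atTop
      (nhds (dist x y)) := hφ.2.1.dist hψ.2.1
  have hsep2 : Tendsto (fun j => 4 * θ * bdist Ω (z (Sum.inl (φ j)))) atTop (nhds 0) := by
    have h1 := ((bdist_continuous Ω).tendsto x).comp hφ.2.1
    have h2 : bdist Ω x = 0 := Metric.infDist_zero_of_mem hx.1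
    rw [h2] at h1
    simpa using h1.const_mul (4 * θ)
  filter_upwards [hsep2.eventually_lt hsep1 hd0] with j hj
  have hz1 := hφ.1 j
  have hz2 := hψ.1 j
  have hdz : dSub Ω α (z (Sum.inl (φ j))) (z (Sum.inr (ψ j))) < t := by
    refine (hzm _ _).trans_lt (lt_of_le_of_lt ?_ hδt)
    have h1 := hmI (Sum.inl (φ j))
    have h2 := hmI (Sum.inr (ψ j))
    rw [abs_le]
    constructor <;> linarith [h1.1, h1.2, h2.1, h2.2]
  obtain ⟨L', γ', hγ', h0, h1, hm'⟩ := exists_curve hΩ hfr hconn hα1 hz1 hz2 hdz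
  have hch := W.chain hn hp hα hF hγ' (by rw [h0, h1]; exact hj)
  rw [h0, h1] at hch
  refine hch.trans (mul_le_mul_of_nonneg_left ?_ ?_)
  · refine Real.rpow_le_rpow hγ'.mass_nonneg hm'.le ?_
    rw [sub_nonneg, div_le_one (by linarith)]
    linarith
  · exact mul_nonneg (chainC_nonneg hp W.th_pos)
      (Real.rpow_nonneg (integral_nonneg fun z => by positivity) _)

theorem Whit.contWrtDBar (hn : 0 < n) {Ω : Set (Eu n)} {F : Eu n → ℝ} {g : Eu n → Eu n} {θ : ℝ}
    {c : ℕ → Eu n} {r d : ℕ → ℝ} {a : ℕ → Eu n} (W : Whit Ω θ c r d a) (hconn : IsConnected Ω)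
    {p α : ℝ} (hp : (n : ℝ) < p) (hα : α = (p - n) / (p - 1)) (hF : ContL1pRep Ω p F g)
    {f : Eu n → ℝ} (hf : TraceEq Ω α F f) : ContWrtDBar Ω α f := by
  intro x hx ε0 hε0
  have hn1 : (1 : ℝ) ≤ n := by exact_mod_cast hn
  set N : ℝ := chainC n p θ α * (∫ z in Ω, ‖g z‖ ^ p) ^ (1 / p) with hN
  have hpp : 0 < 1 - 1 / p := by
    rw [sub_pos, div_lt_one (by linarith)]
    linarith
  have ht : Tendsto (fun t : ℝ => N * t ^ (1 - 1 / p)) (nhds 0) (nhds 0) := by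
    have := ((Real.continuousAt_rpow_const 0 (1 - 1 / p) (Or.inr hpp.le)).tendsto).const_mul N
    rwa [Real.zero_rpow hpp.ne', mul_zero] at this
  have h1 : ∀ᶠ t : ℝ in nhdsWithin 0 (Ioi 0), N * t ^ (1 - 1 / p) < ε0 :=
    (ht.eventually_lt_const hε0).filter_mono nhdsWithin_le_nhds
  obtain ⟨t, ht1, ht0⟩ := (h1.and self_mem_nhdsWithin).exists
  have ht0' : (0 : ℝ) < t := ht0
  refine ⟨t / 2, by linarith, fun y hy hxy => ?_⟩
  by_cases he : x = y
  · rw [he, sub_self, abs_zero]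
    exact hε0
  · rw [abs_sub_comm]
    exact (W.trace_holder hn hconn hp hα hF hf hx hy he (by linarith) hxy).trans_lt ht1

/-! ### The Whitney extension: smoothness and pointwise bounds -/

/-- The classical gradient of a function, as a vector of partial derivatives. -/
def grd (F : Eu n → ℝ) (x : Eu n) : Eu n := fun k => fderiv ℝ F x (Pi.single k 1)

theorem norm_grd_le (F : Eu n → ℝ) (x : Eu n) : ‖grd F x‖ ≤ ‖fderiv ℝ F x‖ := by
  refine (pi_norm_le_iff_of_nonneg (norm_nonneg _)).2 fun k => ?_
  have h := (fderiv ℝ F x).le_opNorm (Pi.single k 1 : Eu n)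
  rw [Pi.norm_single, norm_one, mul_one] at h
  exact h

theorem grd_continuousOn {Ω : Set (Eu n)} (hΩ : IsOpen Ω) {F : Eu n → ℝ}
    (hF : ContDiffOn ℝ 1 F Ω) : ContinuousOn (grd F) Ω := by
  have h := hF.continuousOn_fderiv_of_isOpen hΩ le_rfl
  exact continuousOn_pi.2 fun k => h.clm_apply continuousOn_const

/-- The classical gradient of a `C¹` function is its weak gradient. -/
theorem weakGrad_of_contDiffOn {Ω : Set (Eu n)} (hΩ : IsOpen Ω) {F : Eu n → ℝ}
    (hF : ContDiffOn ℝ 1 F Ω) : HasWeakGradOn F (grd F) Ω := by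
  have hg := grd_continuousOn hΩ hF
  refine ⟨hF.continuousOn.locallyIntegrableOn hΩ.measurableSet,
    hg.locallyIntegrableOn hΩ.measurableSet, fun φ hφ hc hs i => ?_⟩
  have h0 : ∀ x ∉ tsupport φ, φ x = 0 := fun x hx => image_eq_zero_of_notMem_tsupport hx
  have h0' : ∀ x ∉ tsupport φ, fderiv ℝ φ x = 0 := fun x hx => fderiv_of_notMem_tsupport ℝ hx
  have hφ1 : ContDiff ℝ 1 φ := hφ.of_le (by exact_mod_cast le_top)
  have hdφ : Continuous fun x => fderiv ℝ φ x (Pi.single i 1) :=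
    (hφ1.continuous_fderiv one_ne_zero).clm_apply continuous_const
  have key : ∀ h : Eu n → ℝ, ContinuousOn h Ω → (∀ x ∉ tsupport φ, h x = 0) → Integrable h :=
    fun h hh hz => integrableOn_univ.1
      ((integrableOn_of_compact hΩ hh hc hs hz).of_forall_sdiff_eq_zero MeasurableSet.univ
        fun x hx => hz x fun h' => hx.2 (hs h'))
  have e : ∀ h : Eu n → ℝ, (∀ x ∉ tsupport φ, h x = 0) → ∫ x in Ω, h x = ∫ x, h x :=
    fun h hz => setIntegral_eq_integral_of_forall_compl_eq_zero
      fun x hx => hz x fun h' => hx (hs h')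
  rw [e _ fun x hx => by rw [h0' x hx]; simp, e _ fun x hx => by rw [h0 x hx, mul_zero]]
  refine integral_mul_fderiv_eq_neg_fderiv_mul_of_integrable (v := Pi.single i 1) ?_ ?_ ?_ ?_ ?_
  · exact key _ (((continuous_apply i).comp_continuousOn hg).mul hφ.continuous.continuousOn)
      fun x hx => by rw [h0 x hx, mul_zero]
  · exact key _ (hF.continuousOn.mul hdφ.continuousOn) fun x hx => by rw [h0' x hx]; simp
  · exact key _ (hF.continuousOn.mul hφ.continuous.continuousOn)
      fun x hx => by rw [h0 x hx, mul_zero]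
  · intro x hx
    exact (hF.contDiffAt (hΩ.mem_nhds (hs hx))).differentiableAt one_ne_zero
  · exact fun x _ => hφ1.differentiable one_ne_zero x

/-- `ψ` is a smooth bump: one on `Q(0,1)`, zero off `Q(0,1+δ)`, with gradient at most `K`. -/
structure IsBump (δ K : ℝ) (ψ : Eu n → ℝ) : Prop where
  smooth : ContDiff ℝ 1 ψ
  nonneg : ∀ x, 0 ≤ ψ x
  le_one : ∀ x, ψ x ≤ 1
  one : ∀ x, ‖x‖ ≤ 1 → ψ x = 1
  supp : ∀ x, 1 + δ ≤ ‖x‖ → ψ x = 0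
  K_nonneg : 0 ≤ K
  grad : ∀ x, ‖fderiv ℝ ψ x‖ ≤ K

theorem exists_bump (n : ℕ) {δ : ℝ} (hδ : 0 < δ) : ∃ (K : ℝ) (ψ : Eu n → ℝ), IsBump δ K ψ := by
  let b : ContDiffBump (0 : Eu n) := ⟨1, 1 + δ, one_pos, by linarith⟩
  have hs : ContDiff ℝ 1 b := b.contDiff
  have hc : HasCompactSupport (fderiv ℝ b) := b.hasCompactSupport.fderiv ℝ
  obtain ⟨C, hC⟩ := hc.exists_bound_of_continuous (hs.continuous_fderiv one_ne_zero)
  refine ⟨C, b, hs, fun x => b.nonneg, fun x => b.le_one, fun x hx => ?_, fun x hx => ?_, ?_, hC⟩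
  · exact b.one_of_mem_closedBall (by rwa [mem_closedBall_zero_iff])
  · exact b.zero_of_le_dist (by rwa [dist_zero_right])
  · exact (norm_nonneg _).trans (hC 0)

/-- The bump function adapted to the Whitney cube `Q_j`. -/
def wphi (ψ : Eu n → ℝ) (c : ℕ → Eu n) (r : ℕ → ℝ) (j : ℕ) (x : Eu n) : ℝ :=
  ψ ((r j)⁻¹ • (x - c j))

/-- The Whitney extension with values `v j` on the cubes. -/
def wext (ψ : Eu n → ℝ) (c : ℕ → Eu n) (r : ℕ → ℝ) (v : ℕ → ℝ) (x : Eu n) : ℝ :=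
  (∑' j, v j * wphi ψ c r j x) / ∑' j, wphi ψ c r j x

section ext

variable {Ω : Set (Eu n)} {θ : ℝ} {c : ℕ → Eu n} {r d : ℕ → ℝ} {a : ℕ → Eu n} {K : ℝ}
  {ψ : Eu n → ℝ}

theorem wphi_nonneg (hψ : IsBump (del θ) K ψ) (j : ℕ) (x : Eu n) : 0 ≤ wphi ψ c r j x :=
  hψ.nonneg _

theorem wphi_le_one (hψ : IsBump (del θ) K ψ) (j : ℕ) (x : Eu n) : wphi ψ c r j x ≤ 1 :=
  hψ.le_one _

theorem wphi_one (W : Whit Ω θ c r d a) (hψ : IsBump (del θ) K ψ) {j : ℕ} {x : Eu n}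
    (hx : x ∈ Metric.closedBall (c j) (r j)) : wphi ψ c r j x = 1 := by
  refine hψ.one _ ?_
  rw [Metric.mem_closedBall, dist_eq_norm] at hx
  rw [norm_smul, norm_inv, Real.norm_eq_abs, abs_of_pos (W.pos j), inv_mul_le_iff₀ (W.pos j)]
  linarith

theorem wphi_zero (W : Whit Ω θ c r d a) (hψ : IsBump (del θ) K ψ) {j : ℕ} {x : Eu n}
    (hx : x ∉ qstar θ c r j) : wphi ψ c r j x = 0 := by
  refine hψ.supp _ ?_
  rw [qstar, Metric.mem_closedBall, dist_eq_norm, not_le] at hx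
  rw [norm_smul, norm_inv, Real.norm_eq_abs, abs_of_pos (W.pos j), le_inv_mul_iff₀ (W.pos j)]
  linarith

theorem wphi_contDiff (hψ : IsBump (del θ) K ψ) (j : ℕ) : ContDiff ℝ 1 (wphi ψ c r j) :=
  hψ.smooth.comp ((contDiff_id.sub contDiff_const).const_smul ((r j)⁻¹) : ContDiff ℝ 1 fun x => (r j)⁻¹ • (x - c j))

theorem wphi_grad (W : Whit Ω θ c r d a) (hψ : IsBump (del θ) K ψ) (j : ℕ) (x : Eu n) :
    ‖fderiv ℝ (wphi ψ c r j) x‖ ≤ K / r j := by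
  have h1 : HasFDerivAt (fun y : Eu n => (r j)⁻¹ • (y - c j))
      ((r j)⁻¹ • ContinuousLinearMap.id ℝ (Eu n)) x :=
    ((hasFDerivAt_id x).sub_const (c j)).const_smul ((r j)⁻¹)
  have h2 := ((hψ.smooth.differentiable one_ne_zero) ((r j)⁻¹ • (x - c j))).hasFDerivAt.comp x h1
  have h3 : fderiv ℝ (wphi ψ c r j) x = _ := h2.fderiv
  rw [h3]
  refine (ContinuousLinearMap.opNorm_comp_le _ _).trans ?_
  have h4 : ‖(r j)⁻¹ • ContinuousLinearMap.id ℝ (Eu n)‖ ≤ (r j)⁻¹ := by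
    rw [norm_smul, norm_inv, Real.norm_eq_abs, abs_of_pos (W.pos j)]
    exact mul_le_of_le_one_right (inv_nonneg.2 (W.pos j).le) ContinuousLinearMap.norm_id_le
  rw [div_eq_mul_inv]
  exact mul_le_mul (hψ.grad _) h4 (norm_nonneg _) hψ.K_nonneg

/-- Near the cube `Q_i` only the bumps of the neighbours are nonzero. -/
theorem wphi_off (W : Whit Ω θ c r d a) (hψ : IsBump (del θ) K ψ) {i j : ℕ} {x : Eu n}
    (hx : x ∈ qstar θ c r i) (hj : j ∉ W.nb i) : wphi ψ c r j x = 0 := by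
  by_contra h
  refine hj (W.mem_nb.2 ⟨x, ?_, hx⟩)
  by_contra h'
  exact h (wphi_zero W hψ h')

theorem wsum_eq (W : Whit Ω θ c r d a) (hψ : IsBump (del θ) K ψ) (v : ℕ → ℝ) {i : ℕ} {x : Eu n}
    (hx : x ∈ qstar θ c r i) :
    ∑' j, v j * wphi ψ c r j x = ∑ j ∈ W.nb i, v j * wphi ψ c r j x :=
  tsum_eq_sum fun j hj => by rw [wphi_off W hψ hx hj, mul_zero]

theorem wsum_eq' (W : Whit Ω θ c r d a) (hψ : IsBump (del θ) K ψ) {i : ℕ} {x : Eu n}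
    (hx : x ∈ qstar θ c r i) :
    ∑' j, wphi ψ c r j x = ∑ j ∈ W.nb i, wphi ψ c r j x :=
  tsum_eq_sum fun _ hj => wphi_off W hψ hx hj

theorem wsum_one_le (W : Whit Ω θ c r d a) (hψ : IsBump (del θ) K ψ) {i : ℕ} {x : Eu n}
    (hx : x ∈ qstar θ c r i) : 1 ≤ ∑ j ∈ W.nb i, wphi ψ c r j x := by
  obtain ⟨k, hk⟩ := mem_iUnion.1 (W.cov (W.star_sub_Ω i hx))
  have hk' : k ∈ W.nb i := W.mem_nb.2 ⟨x, W.sub_star k hk, hx⟩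
  rw [← wphi_one W hψ hk]
  exact Finset.single_le_sum (f := fun j => wphi ψ c r j x)
    (fun j _ => wphi_nonneg hψ j x) hk'

theorem wext_eq (W : Whit Ω θ c r d a) (hψ : IsBump (del θ) K ψ) (v : ℕ → ℝ) {i : ℕ} {x : Eu n}
    (hx : x ∈ qstar θ c r i) (b : ℝ) :
    wext ψ c r v x = b + (∑ j ∈ W.nb i, (v j - b) * wphi ψ c r j x) /
      ∑ j ∈ W.nb i, wphi ψ c r j x := by
  have h1 := wsum_one_le W hψ hx
  rw [wext, wsum_eq W hψ v hx, wsum_eq' W hψ hx]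
  simp only [sub_mul, Finset.sum_sub_distrib, ← Finset.mul_sum]
  have h2 : ∑ j ∈ W.nb i, wphi ψ c r j x ≠ 0 := by linarith
  field_simp
  ring

theorem ball_nhds_star (W : Whit Ω θ c r d a) {i : ℕ} {x : Eu n}
    (hx : x ∈ Metric.closedBall (c i) (r i)) : qstar θ c r i ∈ nhds x := by
  refine Filter.mem_of_superset (Metric.isOpen_ball.mem_nhds ?_) Metric.ball_subset_closedBall
  rw [Metric.mem_closedBall] at hx
  rw [Metric.mem_ball]
  nlinarith [W.pos i, W.del_pos]

theorem wext_contDiffOn (W : Whit Ω θ c r d a) (hψ : IsBump (del θ) K ψ) (v : ℕ → ℝ) :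
    ContDiffOn ℝ 1 (wext ψ c r v) Ω := by
  intro x hx
  obtain ⟨i, hi⟩ := mem_iUnion.1 (W.cov hx)
  have hn := ball_nhds_star W hi
  refine ContDiffAt.contDiffWithinAt ?_
  have h1 : wext ψ c r v =ᶠ[nhds x] fun y => 0 + (∑ j ∈ W.nb i, (v j - 0) * wphi ψ c r j y) /
      ∑ j ∈ W.nb i, wphi ψ c r j y :=
    Filter.mem_of_superset hn fun y hy => wext_eq W hψ v hy 0
  refine ContDiffAt.congr_of_eventuallyEq ?_ h1
  refine contDiffAt_const.add (ContDiffAt.div ?_ ?_ ?_)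
  · exact (ContDiff.sum fun j _ => contDiff_const.mul (wphi_contDiff hψ j)).contDiffAt
  · exact (ContDiff.sum fun j _ => wphi_contDiff hψ j).contDiffAt
  · have := wsum_one_le W hψ (W.sub_star i hi)
    linarith

/-- The extension is a convex combination of the values at the cubes nearby. -/
theorem wext_near (W : Whit Ω θ c r d a) (hψ : IsBump (del θ) K ψ) (v : ℕ → ℝ) {x : Eu n}
    (hx : x ∈ Ω) {b e : ℝ} (he : ∀ j, x ∈ qstar θ c r j → |v j - b| ≤ e) :
    |wext ψ c r v x - b| ≤ e := by
  obtain ⟨i, hi⟩ := mem_iUnion.1 (W.cov hx)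
  have hi' := W.sub_star i hi
  have h1 := wsum_one_le W hψ hi'
  rw [wext_eq W hψ v hi' b, add_sub_cancel_left, abs_div,
    abs_of_pos (by linarith : (0:ℝ) < ∑ j ∈ W.nb i, wphi ψ c r j x), div_le_iff₀ (by linarith), Finset.mul_sum]
  refine (Finset.abs_sum_le_sum_abs _ _).trans (Finset.sum_le_sum fun j _ => ?_)
  rw [abs_mul, abs_of_nonneg (wphi_nonneg hψ j x)]
  by_cases hj : x ∈ qstar θ c r j
  · exact mul_le_mul_of_nonneg_right (he j hj) (wphi_nonneg hψ j x)
  · rw [wphi_zero W hψ hj, mul_zero, mul_zero]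

theorem wext_le (W : Whit Ω θ c r d a) (hψ : IsBump (del θ) K ψ) (v : ℕ → ℝ) {i : ℕ} {x : Eu n}
    (hx : x ∈ Metric.closedBall (c i) (r i)) :
    |wext ψ c r v x| ≤ ∑ j ∈ W.nb i, |v j| := by
  have h := wext_near W hψ v (W.sub i hx) (b := 0) (e := ∑ j ∈ W.nb i, |v j|) fun j hj => ?_
  · rwa [sub_zero] at h
  · rw [sub_zero]
    exact Finset.single_le_sum (f := fun j => |v j|) (fun _ _ => abs_nonneg _)
      (W.mem_nb.2 ⟨x, hj, W.sub_star i hx⟩)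

theorem wext_grad (W : Whit Ω θ c r d a) (hψ : IsBump (del θ) K ψ) (v : ℕ → ℝ) {i : ℕ} {x : Eu n}
    (hx : x ∈ Metric.closedBall (c i) (r i)) :
    ‖grd (wext ψ c r v) x‖ ≤
      (1 + nbrBound n θ) * (3 * θ ^ 3 * K) / r i * ∑ j ∈ W.nb i, |v j - v i| := by
  refine (norm_grd_le _ _).trans ?_
  have hn := ball_nhds_star W hx
  have hx' := W.sub_star i hx
  have h1 := wsum_one_le W hψ hx'
  set D := ∑ j ∈ W.nb i, |v j - v i| with hD
  set κ := 3 * θ ^ 3 * K / r i with hκ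
  have hD0 : 0 ≤ D := Finset.sum_nonneg fun _ _ => abs_nonneg _
  have hκ0 : 0 ≤ κ := by
    have := W.th_pos; have := hψ.K_nonneg; have := W.pos i
    positivity
  have hph : ∀ j ∈ W.nb i, ‖fderiv ℝ (wphi ψ c r j) x‖ ≤ κ := by
    intro j hj
    refine (wphi_grad W hψ j x).trans ?_
    obtain ⟨y, hy1, hy2⟩ := W.mem_nb.1 hj
    have h2 := W.r_comp hy1 hy2
    rw [hκ, div_le_div_iff₀ (W.pos j) (W.pos i)]
    nlinarith [mul_le_mul_of_nonneg_left h2 hψ.K_nonneg]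
  set A : Eu n → ℝ := fun y => ∑ j ∈ W.nb i, (v j - v i) * wphi ψ c r j y with hA
  set B : Eu n → ℝ := fun y => ∑ j ∈ W.nb i, wphi ψ c r j y with hB
  have hdw : ∀ j, HasFDerivAt (wphi ψ c r j) (fderiv ℝ (wphi ψ c r j) x) x := fun j =>
    ((wphi_contDiff hψ j).differentiable one_ne_zero x).hasFDerivAt
  have hA' : HasFDerivAt A (∑ j ∈ W.nb i, (v j - v i) • fderiv ℝ (wphi ψ c r j) x) x :=
    HasFDerivAt.fun_sum fun j _ => (hdw j).const_mul _
  have hB' : HasFDerivAt B (∑ j ∈ W.nb i, fderiv ℝ (wphi ψ c r j) x) x :=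
    HasFDerivAt.fun_sum fun j _ => hdw j
  set A' := ∑ j ∈ W.nb i, (v j - v i) • fderiv ℝ (wphi ψ c r j) x
  set B' := ∑ j ∈ W.nb i, fderiv ℝ (wphi ψ c r j) x
  have hA1 : ‖A'‖ ≤ κ * D := by
    rw [hD, Finset.mul_sum]
    refine norm_sum_le_of_le _ fun j hj => ?_
    rw [norm_smul, Real.norm_eq_abs, mul_comm]
    exact mul_le_mul_of_nonneg_right (hph j hj) (abs_nonneg _)
  have hB1 : ‖B'‖ ≤ nbrBound n θ * κ := by
    refine (norm_sum_le_of_le _ hph).trans ?_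
    rw [Finset.sum_const, nsmul_eq_mul]
    exact mul_le_mul_of_nonneg_right (W.nb_card i) hκ0
  have hA0 : |A x| ≤ D := by
    refine (Finset.abs_sum_le_sum_abs _ _).trans (Finset.sum_le_sum fun j _ => ?_)
    rw [abs_mul, abs_of_nonneg (wphi_nonneg hψ j x)]
    exact mul_le_of_le_one_right (abs_nonneg _) (wphi_le_one hψ j x)
  have hBx : 1 ≤ B x := h1
  have hBi : (B x)⁻¹ ≤ 1 := inv_le_one_of_one_le₀ hBx
  have hBi0 : 0 ≤ (B x)⁻¹ := by positivity
  have hinv : HasFDerivAt (fun y => (B y)⁻¹) (-((B x ^ 2)⁻¹) • B') x :=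
    (hasDerivAt_inv (by linarith)).comp_hasFDerivAt x hB'
  have hq := (hA'.mul hinv).const_add (v i)
  have heq : wext ψ c r v =ᶠ[nhds x] fun y => v i + A y * (B y)⁻¹ :=
    Filter.mem_of_superset hn fun y hy => by
      show wext ψ c r v y = v i + A y * (B y)⁻¹
      rw [← div_eq_mul_inv]; exact wext_eq W hψ v hy (v i)
  rw [(hq.congr_of_eventuallyEq heq).fderiv]
  have hB2 : ‖-((B x ^ 2)⁻¹) • B'‖ ≤ nbrBound n θ * κ := by
    rw [norm_smul, norm_neg, norm_inv, norm_pow, Real.norm_eq_abs, abs_of_pos (by linarith)]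
    refine (mul_le_of_le_one_left (norm_nonneg _) (inv_le_one_of_one_le₀ (one_le_pow₀ hBx))).trans
      hB1
  have e1 : ‖A x • -((B x ^ 2)⁻¹) • B'‖ ≤ D * (nbrBound n θ * κ) := by
    rw [norm_smul, Real.norm_eq_abs]
    exact mul_le_mul hA0 hB2 (norm_nonneg _) hD0
  have e2 : ‖(B x)⁻¹ • A'‖ ≤ κ * D := by
    rw [norm_smul, Real.norm_eq_abs, abs_of_nonneg hBi0]
    exact (mul_le_of_le_one_left (norm_nonneg _) hBi).trans hA1
  refine (norm_add_le _ _).trans ((add_le_add e1 e2).trans (le_of_eq ?_))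
  rw [hκ]; ring

end ext

/-! ### The Whitney extension: integral estimates -/

theorem sum_abs_rpow_le {s : Finset ℕ} {N p : ℝ} (hp : 0 < p) (hN : (s.card : ℝ) ≤ N)
    (x : ℕ → ℝ) : (∑ j ∈ s, |x j|) ^ p ≤ N ^ p * ∑ j ∈ s, |x j| ^ p := by
  have hN0 : 0 ≤ N := (Nat.cast_nonneg _).trans hN
  have hM0 : 0 ≤ ∑ j ∈ s, |x j| ^ p :=
    Finset.sum_nonneg fun _ _ => Real.rpow_nonneg (abs_nonneg _) _
  set M := (∑ j ∈ s, |x j| ^ p) ^ (1 / p) with hM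
  have hMM : M ^ p = ∑ j ∈ s, |x j| ^ p := by
    rw [hM, ← Real.rpow_mul hM0, one_div_mul_cancel hp.ne', Real.rpow_one]
  have hM0' : 0 ≤ M := Real.rpow_nonneg hM0 _
  have h1 : ∀ j ∈ s, |x j| ≤ M := by
    intro j hj
    rw [← Real.rpow_le_rpow_iff (abs_nonneg _) hM0' hp, hMM]
    exact Finset.single_le_sum (f := fun j => |x j| ^ p)
      (fun _ _ => Real.rpow_nonneg (abs_nonneg _) _) hj
  have h2 : ∑ j ∈ s, |x j| ≤ N * M := by
    refine (Finset.sum_le_sum h1).trans ?_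
    rw [Finset.sum_const, nsmul_eq_mul]
    exact mul_le_mul_of_nonneg_right hN hM0'
  rw [← hMM, ← Real.mul_rpow hN0 hM0']
  exact Real.rpow_le_rpow (Finset.sum_nonneg fun _ _ => abs_nonneg _) h2 hp.le

section est

variable {Ω : Set (Eu n)} {θ : ℝ} {c : ℕ → Eu n} {r d : ℕ → ℝ} {a : ℕ → Eu n} {K : ℝ}
  {ψ : Eu n → ℝ}

theorem nbrBound_nonneg (W : Whit Ω θ c r d a) : 0 ≤ nbrBound n θ :=
  (Nat.cast_nonneg _).trans (W.nb_card 0)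

theorem sum_nb_eq (W : Whit Ω θ c r d a) (β : ℕ → ℝ≥0∞) (i : ℕ) :
    ∑ j ∈ W.nb i, β j = ∑' j, if j ∈ W.nb i then β j else 0 := by
  rw [tsum_eq_sum (s := W.nb i) fun j hj => if_neg hj]
  exact Finset.sum_congr rfl fun j hj => (if_pos hj).symm

theorem sum_nb_le (W : Whit Ω θ c r d a) (β : ℕ → ℝ≥0∞) :
    ∑' i, ∑ j ∈ W.nb i, β j ≤ ENNReal.ofReal (nbrBound n θ) * ∑' j, β j := by
  simp_rw [sum_nb_eq W β]
  rw [ENNReal.tsum_comm, ← ENNReal.tsum_mul_left]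
  refine ENNReal.tsum_le_tsum fun j => ?_
  have h1 : (∑' i, if j ∈ W.nb i then β j else 0) = ∑ i ∈ W.nb j, β j := by
    rw [sum_nb_eq W (fun _ => β j) j]
    exact tsum_congr fun i => by simp only [W.nb_comm (i := i) (j := j)]
  rw [h1, Finset.sum_const, nsmul_eq_mul]
  gcongr
  rw [← ENNReal.ofReal_natCast]
  exact ENNReal.ofReal_le_ofReal (W.nb_card j)

theorem lint_le_tsum (W : Whit Ω θ c r d a) (h : Eu n → ℝ≥0∞) :
    ∫⁻ x in Ω, h x ≤ ∑' i, ∫⁻ x in Metric.closedBall (c i) (r i), h x :=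
  (lintegral_mono_set W.cov).trans (lintegral_iUnion_le _ _)

theorem lint_const_le (W : Whit Ω θ c r d a) (i : ℕ) {h : Eu n → ℝ} {M : ℝ} (hM : 0 ≤ M)
    (hh : ∀ x ∈ Metric.closedBall (c i) (r i), h x ≤ M) :
    ∫⁻ x in Metric.closedBall (c i) (r i), ENNReal.ofReal (h x) ≤
      ENNReal.ofReal (M * (2 * r i) ^ n) := by
  refine (setLIntegral_mono' Metric.isClosed_closedBall.measurableSet
    (fun x hx => ENNReal.ofReal_le_ofReal (hh x hx))).trans ?_
  rw [setLIntegral_const, vol_closedBall _ (W.pos i).le, ENNReal.ofReal_mul hM]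

theorem smallCube_sub (W : Whit Ω θ c r d a) {ε : ℝ} {j : ℕ} (hj : 2 * (1 + θ) * r j < ε) :
    Metric.closedBall (c j) (r j) ⊆ Oeps Ω ε := by
  intro x hx
  refine ⟨W.sub j hx, ?_⟩
  rw [Metric.mem_closedBall] at hx
  have h1 : bdist Ω x ≤ dist x (a j) := Metric.infDist_le_dist_of_mem (W.fr j)
  have h2 := dist_triangle x (c j) (a j)
  have h3 := W.near j
  have h4 := W.dr j
  rw [dist_comm (c j)] at h2
  nlinarith

/-- The values of the extension: the boundary value at the nearest point for small cubes, zero for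
large ones. -/
def wval (ε θ : ℝ) (r : ℕ → ℝ) (a : ℕ → Eu n) (f : Eu n → ℝ) (j : ℕ) : ℝ :=
  open Classical in if 2 * (1 + θ) * r j < ε then f (a j) else 0

/-- The contribution `|v_j|^p |Q_j|` of the cube `Q_j` to the `L_p` norm. -/
def wmass (n : ℕ) (p : ℝ) (r v : ℕ → ℝ) (j : ℕ) : ℝ≥0∞ :=
  ENNReal.ofReal (|v j| ^ p * (2 * r j) ^ n)

theorem tsum_wmass_le (W : Whit Ω θ c r d a) {T : Eu n → Eu n}
    (hT : ∀ i, ∀ x ∈ interior (cube (c i) (r i)), T x = a i) {p ε : ℝ} (hp : 0 < p)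
    (f : Eu n → ℝ) :
    ∑' j, wmass n p r (wval ε θ r a f) j ≤
      ∫⁻ x in Oeps Ω ε, ENNReal.ofReal (|f (T x)| ^ p) := by
  classical
  refine ENNReal.summable.tsum_le_of_sum_le fun S => ?_
  have h1 : ∑ j ∈ S, wmass n p r (wval ε θ r a f) j =
      ∑ j ∈ S with 2 * (1 + θ) * r j < ε,
        ∫⁻ x in Metric.closedBall (c j) (r j), ENNReal.ofReal (|f (T x)| ^ p) := by
    rw [Finset.sum_filter]
    refine Finset.sum_congr rfl fun j _ => ?_
    split_ifs with h
    · rw [W.lint_comp hT (fun y => |f y| ^ p), wmass, wval, if_pos h,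
        ENNReal.ofReal_mul (Real.rpow_nonneg (abs_nonneg _) _)]
    · rw [wmass, wval, if_neg h, abs_zero, Real.zero_rpow hp.ne', zero_mul, ENNReal.ofReal_zero]
  rw [h1]
  exact W.sum_lint _ (fun i hi => smallCube_sub W (Finset.mem_filter.1 hi).2) _

theorem r_pow_le (W : Whit Ω θ c r d a) {i j : ℕ} (hj : j ∈ W.nb i) :
    r i ≤ 3 * θ ^ 3 * r j ∧ r j ≤ 3 * θ ^ 3 * r i := by
  obtain ⟨x, h1, h2⟩ := W.mem_nb.1 hj
  exact ⟨W.r_comp h1 h2, W.r_comp h2 h1⟩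

/-- The `L_p` bound of the extension. -/
theorem lint_wext (W : Whit Ω θ c r d a) (hψ : IsBump (del θ) K ψ) {p : ℝ} (hp : 0 < p)
    (v : ℕ → ℝ) :
    ∫⁻ x in Ω, ENNReal.ofReal (|wext ψ c r v x| ^ p) ≤
      ENNReal.ofReal (nbrBound n θ ^ p * (3 * θ ^ 3) ^ n * nbrBound n θ) *
        ∑' j, wmass n p r v j := by
  have hN := nbrBound_nonneg W
  have hθ := W.th_pos
  have hA : 0 ≤ nbrBound n θ ^ p * (3 * θ ^ 3) ^ n := by positivity
  refine (lint_le_tsum W _).trans ?_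
  have h1 : ∀ i, ∫⁻ x in Metric.closedBall (c i) (r i), ENNReal.ofReal (|wext ψ c r v x| ^ p) ≤
      ENNReal.ofReal (nbrBound n θ ^ p * (3 * θ ^ 3) ^ n) * ∑ j ∈ W.nb i, wmass n p r v j := by
    intro i
    have hs : 0 ≤ ∑ j ∈ W.nb i, |v j| ^ p :=
      Finset.sum_nonneg fun _ _ => Real.rpow_nonneg (abs_nonneg _) _
    refine (lint_const_le W i (M := nbrBound n θ ^ p * ∑ j ∈ W.nb i, |v j| ^ p)
      (by positivity) fun x hx => ?_).trans ?_
    · exact (Real.rpow_le_rpow (abs_nonneg _) (wext_le W hψ v hx) hp.le).trans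
        (sum_abs_rpow_le hp (W.nb_card i) v)
    · simp only [wmass]
      rw [← ENNReal.ofReal_sum_of_nonneg (fun j _ => mul_nonneg
        (Real.rpow_nonneg (abs_nonneg _) _) (pow_nonneg (by linarith [W.pos j]) _)),
        ← ENNReal.ofReal_mul hA]
      refine ENNReal.ofReal_le_ofReal ?_
      rw [mul_assoc (nbrBound n θ ^ p), mul_assoc (nbrBound n θ ^ p)]
      refine mul_le_mul_of_nonneg_left ?_ (by positivity)
      rw [Finset.sum_mul, Finset.mul_sum]
      refine Finset.sum_le_sum fun j hj => ?_
      have h2 : (2 * r i) ^ n ≤ (3 * θ ^ 3 * (2 * r j)) ^ n :=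
        pow_le_pow_left₀ (by linarith [W.pos i]) (by linarith [(r_pow_le W hj).1]) n
      rw [mul_pow (3 * θ ^ 3)] at h2
      calc _ ≤ |v j| ^ p * ((3 * θ ^ 3) ^ n * (2 * r j) ^ n) :=
            mul_le_mul_of_nonneg_left h2 (Real.rpow_nonneg (abs_nonneg _) _)
        _ = _ := by ring
  refine (ENNReal.tsum_le_tsum h1).trans ?_
  rw [ENNReal.tsum_mul_left, ENNReal.ofReal_mul hA, mul_assoc]
  exact mul_le_mul_right (sum_nb_le W _) _

/-- The energy of the values across neighbouring cubes, with the size of the first one. -/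
def wen (n : ℕ) (p : ℝ) (r v : ℕ → ℝ) (i j : ℕ) : ℝ := r i ^ ((n : ℝ) - p) * |v j - v i| ^ p

theorem wen_nonneg (W : Whit Ω θ c r d a) {p : ℝ} (v : ℕ → ℝ) (i j : ℕ) : 0 ≤ wen n p r v i j :=
  mul_nonneg (Real.rpow_nonneg (W.pos i).le _) (Real.rpow_nonneg (abs_nonneg _) _)

/-- The gradient of the extension is controlled by the energy of the values. -/
theorem lint_grd (W : Whit Ω θ c r d a) (hψ : IsBump (del θ) K ψ) {p : ℝ} (hp : 0 < p)
    (v : ℕ → ℝ) :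
    ∫⁻ x in Ω, ENNReal.ofReal (‖grd (wext ψ c r v) x‖ ^ p) ≤
      ENNReal.ofReal (((1 + nbrBound n θ) * (3 * θ ^ 3 * K)) ^ p * nbrBound n θ ^ p * 2 ^ n) *
        ∑' i, ∑ j ∈ W.nb i, ENNReal.ofReal (wen n p r v i j) := by
  have hN := nbrBound_nonneg W
  have hθ := W.th_pos
  have hK := hψ.K_nonneg
  rw [← ENNReal.tsum_mul_left]
  refine (lint_le_tsum W _).trans (ENNReal.tsum_le_tsum fun i => ?_)
  have hri := W.pos i
  have hs : 0 ≤ ∑ j ∈ W.nb i, |v j - v i| ^ p :=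
    Finset.sum_nonneg fun _ _ => Real.rpow_nonneg (abs_nonneg _) _
  refine (lint_const_le W i (M := ((1 + nbrBound n θ) * (3 * θ ^ 3 * K) / r i) ^ p *
    (nbrBound n θ ^ p * ∑ j ∈ W.nb i, |v j - v i| ^ p)) (by positivity) fun x hx => ?_).trans ?_
  · refine (Real.rpow_le_rpow (norm_nonneg _) (wext_grad W hψ v hx) hp.le).trans ?_
    rw [Real.mul_rpow (by positivity) (Finset.sum_nonneg fun _ _ => abs_nonneg _)]
    exact mul_le_mul_of_nonneg_left (sum_abs_rpow_le hp (W.nb_card i) fun j => v j - v i)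
      (by positivity)
  · rw [← ENNReal.ofReal_sum_of_nonneg (fun j _ => wen_nonneg W v i j),
      ← ENNReal.ofReal_mul (by positivity)]
    refine ENNReal.ofReal_le_ofReal (le_of_eq ?_)
    simp only [wen]
    rw [← Finset.mul_sum, Real.div_rpow (by positivity) hri.le, Real.rpow_sub hri,
      Real.rpow_natCast, mul_pow]
    field_simp

/-- The constant of the mixed terms in the energy estimate. -/
def mixC (n : ℕ) (p θ ε : ℝ) : ℝ := (3 * θ ^ 3) ^ n * (ε / (2 * (1 + θ))) ^ (-p)

/-- The energy along a choice of a smaller neighbour for every cube. If both cubes are small, the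
variational condition applies to a subcube of the larger one; if the larger cube is not small, its
size is bounded below by a multiple of `ε` and the `L_p` norm takes over. -/
theorem energy_select (W : Whit Ω θ c r d a) {p ε η α lam : ℝ} (hp : (n : ℝ) < p) (hε : 0 < ε)
    (hη : 22 * θ ^ 2 ≤ η) (hα : 0 < α) (hα1 : α ≤ 1) {f : Eu n → ℝ}
    (hV : VarCondOn Ω (Oeps Ω ε) α p η lam f) {σ : ℕ → ℕ} (hσ : ∀ i, σ i ∈ W.nb i)
    (hσr : ∀ i, r (σ i) ≤ r i) :
    ∑' i, ENNReal.ofReal (wen n p r (wval ε θ r a f) i (σ i)) ≤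
      ENNReal.ofReal (2 ^ (p - n) * lam) + ENNReal.ofReal (mixC n p θ ε * nbrBound n θ) *
        ∑' j, wmass n p r (wval ε θ r a f) j := by
  classical
  have hθ := W.one_lt
  have hp0 : 0 < p := (Nat.cast_nonneg n).trans_lt hp
  set v := wval ε θ r a f with hv
  have hmix : 0 ≤ mixC n p θ ε := by unfold mixC; positivity
  refine ENNReal.summable.tsum_le_of_sum_le fun S => ?_
  rw [← Finset.sum_filter_add_sum_filter_not S (fun i => 2 * (1 + θ) * r i < ε)]
  refine add_le_add ?_ ?_
  · set S' := S.filter (fun i => 2 * (1 + θ) * r i < ε) with hS'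
    rw [← ENNReal.ofReal_sum_of_nonneg (fun j _ => wen_nonneg W v _ _)]
    refine ENNReal.ofReal_le_ofReal ?_
    have hpair : ∀ i, ∃ (k : Eu n) (ρ : ℝ), 0 < ρ ∧ ρ ≤ r i ∧
        Metric.closedBall k ρ ⊆ Metric.ball (c i) (r i) ∧
        QVisible Ω (cube k ρ) (a (σ i)) ∧ QVisible Ω (cube k ρ) (a i) ∧
        dist (a (σ i)) k ≤ 22 * θ ^ 2 * ρ ∧ dist (a i) k ≤ 22 * θ ^ 2 * ρ := by
      intro i
      obtain ⟨x, h1, h2⟩ := W.mem_nb.1 (hσ i)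
      exact W.pair h1 h2 (hσr i)
    choose k ρ hρ hρr hsub hv1 hv2 hd1 hd2 using hpair
    let e := S'.equivFin.symm
    have hacc : ∀ i j, QVisible Ω (cube (k i) (ρ i)) (a j) → Accessible Ω α (a j) :=
      fun i j h => accessible_of_visible W.isOpen hα hα1 (hρ i) (W.fr j) h
    have hmem : ∀ i j, dist (a j) (k i) ≤ 22 * θ ^ 2 * ρ i → a j ∈ cube (k i) (η * ρ i) :=
      fun i j h => Metric.mem_closedBall.2
        (h.trans (mul_le_mul_of_nonneg_right hη (hρ i).le))
    have hbd := hV S'.card (fun t => k (e t)) (fun t => ρ (e t)) (fun t => hρ _)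
      (fun t => (hsub _).trans (Metric.ball_subset_closedBall.trans
        (smallCube_sub W (Finset.mem_filter.1 (e t).2).2)))
      (fun s t hst => (W.disj _ _ fun h => hst (e.injective (Subtype.ext h))).mono
        (hsub _) (hsub _))
      (fun t => a (σ (e t))) (fun t => a (e t))
      (fun t => ⟨hacc _ _ (hv1 _), hmem _ _ (hd1 _), hv1 _⟩)
      (fun t => ⟨hacc _ _ (hv2 _), hmem _ _ (hd2 _), hv2 _⟩)
    rw [e.sum_comp (fun i : S' => |f (a (σ i)) - f (a i)| ^ p / (2 * ρ i) ^ (p - (n : ℝ))),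
      Finset.sum_coe_sort S' (fun i => |f (a (σ i)) - f (a i)| ^ p / (2 * ρ i) ^ (p - (n : ℝ)))]
      at hbd
    refine le_trans ?_ (mul_le_mul_of_nonneg_left hbd (by positivity : (0:ℝ) ≤ 2 ^ (p - (n:ℝ))))
    rw [Finset.mul_sum]
    refine Finset.sum_le_sum fun i hi => ?_
    have hi' : 2 * (1 + θ) * r i < ε := (Finset.mem_filter.1 hi).2
    have hσi : 2 * (1 + θ) * r (σ i) < ε :=
      (mul_le_mul_of_nonneg_left (hσr i) (by linarith)).trans_lt hi'
    rw [wen, hv, wval, wval, if_pos hi', if_pos hσi, Real.mul_rpow (by norm_num) (hρ i).le,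
      ← neg_sub p (n : ℝ), Real.rpow_neg (W.pos i).le]
    have h3 : ρ i ^ (p - (n : ℝ)) ≤ r i ^ (p - (n : ℝ)) :=
      Real.rpow_le_rpow (hρ i).le (hρr i) (by linarith)
    have h4 : 0 < ρ i ^ (p - (n : ℝ)) := Real.rpow_pos_of_pos (hρ i) _
    have h5 : (0:ℝ) < 2 ^ (p - (n : ℝ)) := by positivity
    calc (r i ^ (p - (n : ℝ)))⁻¹ * |f (a (σ i)) - f (a i)| ^ p
        ≤ (ρ i ^ (p - (n : ℝ)))⁻¹ * |f (a (σ i)) - f (a i)| ^ p :=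
          mul_le_mul_of_nonneg_right (inv_anti₀ h4 h3) (Real.rpow_nonneg (abs_nonneg _) _)
      _ = _ := by field_simp
  · have h1 : ∀ i ∈ S.filter (fun i => ¬ 2 * (1 + θ) * r i < ε),
        ENNReal.ofReal (wen n p r v i (σ i)) ≤
          ENNReal.ofReal (mixC n p θ ε) * ∑ j ∈ W.nb i, wmass n p r v j := by
      intro i hi
      have hi' := (Finset.mem_filter.1 hi).2
      refine le_trans ?_ (mul_le_mul_right
        (Finset.single_le_sum (f := wmass n p r v) (fun _ _ => zero_le) (hσ i)) _)
      rw [wmass, ← ENNReal.ofReal_mul hmix]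
      refine ENNReal.ofReal_le_ofReal ?_
      have hvi : v i = 0 := by rw [hv, wval, if_neg hi']
      have hri := W.pos i
      have h2 : ε / (2 * (1 + θ)) ≤ r i := by
        rw [div_le_iff₀ (by linarith)]; linarith [not_lt.1 hi']
      have h3 : r i ^ (-p) ≤ (ε / (2 * (1 + θ))) ^ (-p) :=
        Real.rpow_le_rpow_of_nonpos (by positivity) h2 (by linarith)
      have h4 : r i ^ n ≤ (3 * θ ^ 3) ^ n * (2 * r (σ i)) ^ n := by
        rw [← mul_pow]
        refine pow_le_pow_left₀ hri.le ?_ n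
        have := (r_pow_le W (hσ i)).1
        nlinarith [mul_pos (pow_pos W.th_pos 3) (W.pos (σ i))]
      have h5 : r i ^ ((n : ℝ) - p) ≤
          (3 * θ ^ 3) ^ n * (2 * r (σ i)) ^ n * (ε / (2 * (1 + θ))) ^ (-p) := by
        rw [sub_eq_add_neg, Real.rpow_add hri, Real.rpow_natCast]
        exact mul_le_mul h4 h3 (Real.rpow_nonneg hri.le _) ((pow_nonneg hri.le n).trans h4)
      rw [wen, hvi, sub_zero]
      refine (mul_le_mul_of_nonneg_right h5 (Real.rpow_nonneg (abs_nonneg _) _)).trans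
        (le_of_eq ?_)
      rw [mixC]; ring
    refine (Finset.sum_le_sum h1).trans ((ENNReal.sum_le_tsum _).trans ?_)
    rw [ENNReal.tsum_mul_left, ENNReal.ofReal_mul hmix, mul_assoc]
    exact mul_le_mul_right (sum_nb_le W _) _

/-- The energy estimate for the Whitney extension. -/
theorem energy_le (W : Whit Ω θ c r d a) {p ε η α lam : ℝ} (hp : (n : ℝ) < p) (hε : 0 < ε)
    (hη : 22 * θ ^ 2 ≤ η) (hα : 0 < α) (hα1 : α ≤ 1) {f : Eu n → ℝ}
    (hV : VarCondOn Ω (Oeps Ω ε) α p η lam f) :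
    ∑' i, ∑ j ∈ W.nb i, ENNReal.ofReal (wen n p r (wval ε θ r a f) i j) ≤
      ENNReal.ofReal ((1 + (3 * θ ^ 3) ^ (p - n)) * nbrBound n θ) *
        (ENNReal.ofReal (2 ^ (p - n) * lam) + ENNReal.ofReal (mixC n p θ ε * nbrBound n θ) *
          ∑' j, wmass n p r (wval ε θ r a f) j) := by
  classical
  have hθ := W.one_lt
  set v := wval ε θ r a f with hv
  set M : ℝ := (3 * θ ^ 3) ^ (p - n) with hM
  have hM0 : 0 ≤ M := by positivity
  have hN := nbrBound_nonneg W
  -- `σ i` maximises the energy among the neighbours which are not larger than `Q_i`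
  have hmax : ∀ i, ∃ k, (k ∈ W.nb i ∧ r k ≤ r i) ∧
      ∀ j, j ∈ W.nb i → r j ≤ r i → wen n p r v i j ≤ wen n p r v i k := by
    intro i
    obtain ⟨k, hk, hk'⟩ := Finset.exists_max_image ((W.nb i).filter fun j => r j ≤ r i)
      (wen n p r v i) ⟨i, Finset.mem_filter.2 ⟨W.mem_nb.2 (W.nbr_self i), le_rfl⟩⟩
    exact ⟨k, Finset.mem_filter.1 hk, fun j h1 h2 => hk' j (Finset.mem_filter.2 ⟨h1, h2⟩)⟩
  choose σ hσ hσm using hmax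
  have hsel := energy_select W hp hε hη hα hα1 hV (fun i => (hσ i).1) (fun i => (hσ i).2)
  let h : ℕ → ℕ → ℝ≥0∞ := fun i j =>
    if j ∈ W.nb i ∧ r j ≤ r i then ENNReal.ofReal (wen n p r v i j) else 0
  have hh : ∑' i, ∑' j, h i j ≤ ENNReal.ofReal (nbrBound n θ) *
      ∑' i, ENNReal.ofReal (wen n p r v i (σ i)) := by
    rw [← ENNReal.tsum_mul_left]
    refine ENNReal.tsum_le_tsum fun i => ?_
    rw [tsum_eq_sum (s := W.nb i) fun j hj => if_neg fun h' => hj h'.1]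
    have h1 : ∀ j ∈ W.nb i, h i j ≤ ENNReal.ofReal (wen n p r v i (σ i)) := by
      intro j hj
      simp only [h]
      split_ifs with h'
      · exact ENNReal.ofReal_le_ofReal (hσm i j hj h'.2)
      · exact zero_le
    refine (Finset.sum_le_sum h1).trans ?_
    rw [Finset.sum_const, nsmul_eq_mul]
    gcongr
    rw [← ENNReal.ofReal_natCast]
    exact ENNReal.ofReal_le_ofReal (W.nb_card i)
  have hsplit : ∀ i, ∑ j ∈ W.nb i, ENNReal.ofReal (wen n p r v i j) ≤
      ∑' j, (h i j + ENNReal.ofReal M * h j i) := by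
    intro i
    refine le_trans (Finset.sum_le_sum fun j hj => ?_) (ENNReal.sum_le_tsum (W.nb i))
    rcases le_or_gt (r j) (r i) with hji | hij
    · refine le_trans (le_of_eq ?_) le_self_add
      simp only [h]
      rw [if_pos ⟨hj, hji⟩]
    · refine le_trans ?_ le_add_self
      simp only [h]
      rw [if_pos ⟨W.nb_comm.1 hj, hij.le⟩, ← ENNReal.ofReal_mul hM0]
      refine ENNReal.ofReal_le_ofReal ?_
      have hri := W.pos i
      have hrj := W.pos j
      have h1 : r i ^ ((n : ℝ) - p) ≤ M * r j ^ ((n : ℝ) - p) := by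
        rw [← neg_sub p (n : ℝ), Real.rpow_neg hri.le, Real.rpow_neg hrj.le, ← div_eq_mul_inv,
          inv_le_iff_one_le_mul₀ (Real.rpow_pos_of_pos hri _), div_mul_eq_mul_div,
          le_div_iff₀ (Real.rpow_pos_of_pos hrj _), one_mul, hM,
          ← Real.mul_rpow (by positivity) hri.le]
        exact Real.rpow_le_rpow hrj.le (r_pow_le W hj).2 (by linarith)
      rw [wen, wen, ← mul_assoc, abs_sub_comm (v i)]
      exact mul_le_mul_of_nonneg_right h1 (Real.rpow_nonneg (abs_nonneg _) _)
  refine (ENNReal.tsum_le_tsum hsplit).trans ?_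
  simp_rw [ENNReal.tsum_add, ENNReal.tsum_mul_left]
  rw [ENNReal.tsum_comm (f := fun i j => h j i), ← one_add_mul]
  have h1 : ENNReal.ofReal ((1 + M) * nbrBound n θ) =
      (1 + ENNReal.ofReal M) * ENNReal.ofReal (nbrBound n θ) := by
    rw [ENNReal.ofReal_mul (by positivity), ENNReal.ofReal_add zero_le_one hM0, ENNReal.ofReal_one]
  rw [h1, mul_assoc]
  exact mul_le_mul_right (hh.trans (mul_le_mul_right hsel _)) _

end est

/-! ### The trace of the Whitney extension -/

section tr

variable {Ω : Set (Eu n)} {θ : ℝ} {c : ℕ → Eu n} {r d : ℕ → ℝ} {a : ℕ → Eu n}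

/-- The distance of an accessible point `x` to the nearest point `a_j`, in terms of a point `u i` of
the enlarged cube on a sequence converging to `x`. -/
theorem dBar_star_le (W : Whit Ω θ c r d a) (hconn : IsConnected Ω) {α δ : ℝ} (hα : 0 < α)
    (hα1 : α ≤ 1) {x : Eu n} {u : ℕ → Eu n} (hu : ∀ k, u k ∈ Ω) (hux : Tendsto u atTop (nhds x))
    {i j : ℕ} (hi : ∀ k ≥ i, dSub Ω α (u k) (u i) ≤ δ) (hj : u i ∈ qstar θ c r j) :
    Accessible Ω α (a j) ∧
      dBar Ω α x (a j) ≤ δ + 6 * θ / α * bdist Ω (u i) ^ α := by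
  set ρ := d j / 2 with hρ
  have hd := W.d_pos j
  have hρ0 : 0 < ρ := by positivity
  have hr := W.r_le j
  have hrd := W.rd j
  have hθ := W.one_lt
  have hdl := W.del_le
  have hrj := W.pos j
  have hj' : dist (u i) (c j) ≤ (1 + del θ) * r j := hj
  have hvis : QVisible Ω (cube (u i) ρ) (a j) := by
    refine W.vis j (Metric.closedBall_subset_ball' ?_)
    linarith
  have hdist : ‖u i - a j‖ ≤ 6 * θ * ρ := by
    rw [← dist_eq_norm]
    have h1 := dist_triangle (u i) (c j) (a j)
    have h2 := W.near j
    rw [dist_comm (c j)] at h1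
    have h3 : d j ≤ θ * d j := by nlinarith
    have h4 : del θ * r j ≤ d j / 200 := hr
    rw [hρ]
    linarith
  have hρb : ρ ≤ bdist Ω (u i) := by
    have := W.bd_lower j hj
    linarith
  refine ⟨accessible_of_visible W.isOpen hα hα1 hρ0 (W.fr j) hvis, ?_⟩
  have hτ : ∀ k : ℕ, (1 / ((k : ℝ) + 1)) ∈ Ioc (0:ℝ) 1 := fun k =>
    ⟨by positivity, by rw [div_le_one (by positivity)]; linarith [Nat.cast_nonneg (α := ℝ) k]⟩
  set w : ℕ → Eu n := fun k => a j + (1 / ((k : ℝ) + 1)) • (u i - a j) with hw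
  have hwΩ : ∀ k, w k ∈ Ω := fun k => hvis _ (Metric.mem_closedBall_self hρ0.le) _ (hτ k)
  have hwt : Tendsto w atTop (nhds (a j)) := by
    have := ((tendsto_one_div_add_atTop_nhds_zero_nat (𝕜 := ℝ)).smul_const
      (u i - a j)).const_add (a j)
    simpa [hw] using this
  have hin : ∀ {w : ℕ → Eu n} {z : Eu n}, (∀ i, w i ∈ Ω) → Tendsto w atTop (nhds z) →
      Tendsto w atTop (nhds z ⊓ Filter.principal Ω) := fun hw ht =>
    tendsto_inf.2 ⟨ht, tendsto_principal.2 (Eventually.of_forall hw)⟩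
  have ht : Tendsto (fun k => (u k, w k)) atTop
      (((nhds x) ⊓ Filter.principal Ω) ×ˢ ((nhds (a j)) ⊓ Filter.principal Ω)) :=
    (hin hu hux).prodMk (hin hwΩ hwt)
  refine liminf_le_of_frequently_le (ht.frequently (Eventually.frequently ?_))
    (isBoundedUnder_of ⟨0, fun q => dSub_nonneg Ω α q.1 q.2⟩)
  filter_upwards [eventually_ge_atTop i] with k hk
  refine (dSub_triangle W.isOpen W.hf hconn hα1 (hu k) (hu i) (hwΩ k)).trans
    (add_le_add (hi k hk) ?_)
  have h1 := dSub_cone W.isOpen hα hα1 hρ0 (W.fr j) hvis (hτ k).1 (hτ k).2 le_rfl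
  rw [one_smul, add_sub_cancel, Real.one_rpow, dSub_comm] at h1
  refine h1.trans ?_
  have h2 : ρ ^ (α - 1) * ‖u i - a j‖ ≤ 6 * θ * ρ ^ α := by
    rw [Real.rpow_sub_one hρ0.ne', div_mul_eq_mul_div, div_le_iff₀ hρ0]
    calc _ ≤ ρ ^ α * (6 * θ * ρ) := mul_le_mul_of_nonneg_left hdist (by positivity)
      _ = _ := by ring
  have h3 : ρ ^ α ≤ bdist Ω (u i) ^ α := Real.rpow_le_rpow hρ0.le hρb hα.le
  have h4 : 1 - (1 / ((k : ℝ) + 1)) ^ α ≤ 1 := by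
    linarith [Real.rpow_nonneg (hτ k).1.le α]
  have h5 : ρ ^ (α - 1) * ‖u i - a j‖ / α ≤ 6 * θ / α * bdist Ω (u i) ^ α := by
    rw [div_mul_eq_mul_div]
    refine div_le_div_of_nonneg_right (h2.trans ?_) hα.le
    exact mul_le_mul_of_nonneg_left h3 (by linarith)
  exact (mul_le_of_le_one_right (by positivity) h4).trans h5

/-- The trace of the Whitney extension is the given function. -/
theorem wext_trace (W : Whit Ω θ c r d a) {K : ℝ} {ψ : Eu n → ℝ} (hψ : IsBump (del θ) K ψ)
    (hconn : IsConnected Ω) {α ε : ℝ} (hα : 0 < α) (hα1 : α ≤ 1) (hε : 0 < ε) {f : Eu n → ℝ}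
    (hf : ContWrtDBar Ω α f) : TraceEq Ω α (wext ψ c r (wval ε θ r a f)) f := by
  rintro x hx u ⟨hu, hux, huc⟩
  have hθ := W.one_lt
  have hb : Tendsto (fun i => bdist Ω (u i)) atTop (nhds 0) := by
    have h1 := ((bdist_continuous Ω).tendsto x).comp hux
    have h2 : bdist Ω x = 0 := Metric.infDist_zero_of_mem hx.1
    rwa [h2] at h1
  have hb2 : Tendsto (fun i => 6 * θ / α * bdist Ω (u i) ^ α) atTop (nhds 0) := by
    have h1 := (hb.rpow_const (Or.inr hα.le)).const_mul (6 * θ / α)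
    rwa [Real.zero_rpow hα.ne', mul_zero] at h1
  have hb3 : Tendsto (fun i => 2 * (1 + θ) * (θ * bdist Ω (u i))) atTop (nhds 0) := by
    have h1 := (hb.const_mul θ).const_mul (2 * (1 + θ))
    rwa [mul_zero, mul_zero] at h1
  rw [Metric.tendsto_atTop']
  intro e he
  obtain ⟨δ, hδ, hfδ⟩ := hf x hx (e / 2) (by positivity)
  obtain ⟨N, hN⟩ := huc (δ / 2) (by positivity)
  have hev := (eventually_ge_atTop N).and ((hb2.eventually (gt_mem_nhds (half_pos hδ))).and
    (hb3.eventually (gt_mem_nhds hε)))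
  obtain ⟨M, hM⟩ := eventually_atTop.1 hev
  refine ⟨M, fun i hi => ?_⟩
  obtain ⟨h1, h2, h3⟩ := hM i hi.le
  rw [Real.dist_eq]
  refine (wext_near W hψ _ (hu i) (e := e / 2) fun j hj => ?_).trans_lt (by linarith)
  have hsmall : 2 * (1 + θ) * r j < ε :=
    (mul_le_mul_of_nonneg_left (W.r_le_bd j hj) (by linarith)).trans_lt h3
  rw [wval, if_pos hsmall]
  obtain ⟨hacc, hd⟩ := dBar_star_le W hconn hα hα1 hu hux (δ := δ / 2) (fun k hk =>
    (le_add_of_nonneg_right (Real.rpow_nonneg (norm_nonneg _) _)).trans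
      (hN k (h1.trans hk) i h1).le) hj
  exact (hfδ _ hacc (by linarith)).le

end tr

/-! ### Equivalence of norms -/

theorem int_of_lint {μ : Measure (Eu n)} {h : Eu n → ℝ} (h0 : ∀ x, 0 ≤ h x)
    (hm : AEStronglyMeasurable h μ) {B : ℝ} (hB : 0 ≤ B)
    (hle : ∫⁻ x, ENNReal.ofReal (h x) ∂μ ≤ ENNReal.ofReal B) :
    Integrable h μ ∧ ∫ x, h x ∂μ ≤ B := by
  have hi : Integrable h μ := by
    refine ⟨hm, ?_⟩
    rw [hasFiniteIntegral_iff_ofReal (Eventually.of_forall h0)]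
    exact hle.trans_lt ENNReal.ofReal_lt_top
  refine ⟨hi, ?_⟩
  rw [← ofReal_integral_eq_lintegral_ofReal hi (Eventually.of_forall h0)] at hle
  exact (ENNReal.ofReal_le_ofReal_iff hB).1 hle

/-- The constant of the `L_p` bound of the extension. -/
def extA (n : ℕ) (p θ : ℝ) : ℝ := nbrBound n θ ^ p * (3 * θ ^ 3) ^ n * nbrBound n θ

/-- The constant of the gradient bound of the extension; `K` bounds the gradient of the bump. -/
def extB (n : ℕ) (p θ ε K : ℝ) : ℝ :=
  ((1 + nbrBound n θ) * (3 * θ ^ 3 * K)) ^ p * nbrBound n θ ^ p * 2 ^ n *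
    (((1 + (3 * θ ^ 3) ^ (p - n)) * nbrBound n θ) *
      (2 ^ (p - n) + mixC n p θ ε * nbrBound n θ))

theorem extension {Ω : Set (Eu n)} {θ : ℝ} {c : ℕ → Eu n} {r d : ℕ → ℝ} {a : ℕ → Eu n}
    (W : Whit Ω θ c r d a) {K : ℝ} {ψ : Eu n → ℝ} (hψ : IsBump (del θ) K ψ)
    (hconn : IsConnected Ω) {T : Eu n → Eu n}
    (hT : ∀ i, ∀ x ∈ interior (cube (c i) (r i)), T x = a i) {p ε η α lam : ℝ}
    (hp : (n : ℝ) < p) (hε : 0 < ε) (hη : 22 * θ ^ 2 ≤ η) (hα : 0 < α) (hα1 : α ≤ 1)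
    {f : Eu n → ℝ} (hlam : 0 ≤ lam) (hf : ContWrtDBar Ω α f)
    (hi : IntegrableOn (fun x => |f (T x)| ^ p) (Oeps Ω ε))
    (hV : VarCondOn Ω (Oeps Ω ε) α p η lam f) :
    ∃ F g, ContW1pRep Ω p F g ∧ TraceEq Ω α F f ∧
      (∫ z in Ω, |F z| ^ p) ≤ extA n p θ * ∫ x in Oeps Ω ε, |f (T x)| ^ p ∧
      (∫ z in Ω, ‖g z‖ ^ p) ≤ extB n p θ ε K * ((∫ x in Oeps Ω ε, |f (T x)| ^ p) + lam) := by
  have hθ := W.th_pos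
  have hp0 : 0 < p := (Nat.cast_nonneg n).trans_lt hp
  have hN := nbrBound_nonneg W
  have hK := hψ.K_nonneg
  set v := wval ε θ r a f with hv
  set F := wext ψ c r v with hF
  set I := ∫ x in Oeps Ω ε, |f (T x)| ^ p with hI
  have hI0 : 0 ≤ I := integral_nonneg fun _ => Real.rpow_nonneg (abs_nonneg _) _
  have hmass : ∑' j, wmass n p r v j ≤ ENNReal.ofReal I := by
    refine (tsum_wmass_le W hT hp0 f).trans (le_of_eq ?_)
    rw [hI, ofReal_integral_eq_lintegral_ofReal hi
      (Eventually.of_forall fun _ => Real.rpow_nonneg (abs_nonneg _) _)]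
  have hFd : ContDiffOn ℝ 1 F Ω := wext_contDiffOn W hψ v
  have hgc := grd_continuousOn W.isOpen hFd
  have hmix : 0 ≤ mixC n p θ ε := by unfold mixC; positivity
  have hms := W.isOpen.measurableSet
  have hA : 0 ≤ extA n p θ := by unfold extA; positivity
  have hB : 0 ≤ extB n p θ ε K := by unfold extB; positivity
  have e1 := int_of_lint (μ := volume.restrict Ω) (h := fun z => |F z| ^ p)
    (fun _ => Real.rpow_nonneg (abs_nonneg _) _)
    ((hFd.continuousOn.abs.rpow_const fun _ _ => Or.inr hp0.le).aestronglyMeasurable hms)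
    (B := extA n p θ * I) (by positivity) (by
      rw [ENNReal.ofReal_mul hA]
      exact (lint_wext W hψ hp0 v).trans (mul_le_mul_right hmass _))
  have e2 := int_of_lint (μ := volume.restrict Ω) (h := fun z => ‖grd F z‖ ^ p)
    (fun _ => Real.rpow_nonneg (norm_nonneg _) _)
    ((hgc.norm.rpow_const fun _ _ => Or.inr hp0.le).aestronglyMeasurable hms)
    (B := extB n p θ ε K * (I + lam)) (by positivity) (by
      refine (lint_grd W hψ hp0 v).trans ?_
      refine (mul_le_mul_right ((energy_le W hp hε hη hα hα1 hV).trans (mul_le_mul_right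
        (add_le_add le_rfl (mul_le_mul_right hmass _)) _)) _).trans ?_
      rw [← ENNReal.ofReal_mul (by positivity),
        ← ENNReal.ofReal_add (by positivity) (by positivity),
        ← ENNReal.ofReal_mul (by positivity), ← ENNReal.ofReal_mul (by positivity)]
      refine ENNReal.ofReal_le_ofReal ?_
      rw [extB, mul_assoc _ _ (I + lam), mul_assoc _ _ (I + lam)]
      refine mul_le_mul_of_nonneg_left (mul_le_mul_of_nonneg_left ?_ (by positivity))
        (by positivity)
      have h1 : (0:ℝ) ≤ 2 ^ (p - n) * I := by positivity
      have h2 : 0 ≤ mixC n p θ ε * nbrBound n θ * lam := by positivity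
      nlinarith)
  exact ⟨F, grd F, ⟨⟨hFd.continuousOn, weakGrad_of_contDiffOn W.isOpen hFd, e2.1⟩, e1.1⟩,
    wext_trace W hψ hconn hα hα1 hε hf, e1.2, e2.2⟩

theorem VarCondOn.mono {Ω S : Set (Eu n)} {α p η lam lam' : ℝ} {f : Eu n → ℝ}
    (h : VarCondOn Ω S α p η lam f) (hl : lam ≤ lam') : VarCondOn Ω S α p η lam' f :=
  fun m c r h1 h2 h3 x y h4 h5 => (h m c r h1 h2 h3 x y h4 h5).trans hl

/-- Taking `p`-th roots in a linear bound. -/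
theorem root_le {p A X Y Z : ℝ} (hp : 1 ≤ p) (hA : 0 ≤ A) (hX : 0 ≤ X) (hY : 0 ≤ Y) (hZ : 0 ≤ Z)
    (h : Z ≤ A * (X + Y)) :
    Z ^ (1 / p) ≤ A ^ (1 / p) * (X ^ (1 / p) + Y ^ (1 / p)) := by
  have hp0 : 0 < p := by linarith
  have h1 : Z ^ (1 / p) ≤ (A * (X + Y)) ^ (1 / p) := Real.rpow_le_rpow hZ h (by positivity)
  rw [Real.mul_rpow hA (by positivity)] at h1
  refine h1.trans (mul_le_mul_of_nonneg_left ?_ (by positivity))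
  exact Real.rpow_add_le_add_rpow hX hY (by positivity) ((div_le_one hp0).2 hp)
/-- Theorem 1.8, the variational criterion for `tr(W¹_p(Ω))`.
Let `Ω ⊆ ℝⁿ` be a domain satisfying condition `(A_α)`, `p ∈ (n,∞)`, `α = (p−n)/(p−1)`,
`ε > 0`, `θ > 1`, `η ≥ 22θ²`.  Let `𝒬` be a covering of `Ω` by non-overlapping cubes with
`(1/θ)·diam Q ≤ dist(Q,∂Ω) ≤ θ·diam Q`, let `a_Q ∈ ∂Ω` be nearest to `Q`, and let `T_𝒬`
equal `a_Q` on each `Q`.  A function `f : ∂_αΩ → ℝ` is the trace of a continuous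
`F ∈ W¹_p(Ω)` iff `f` is continuous w.r.t. `d̄_{α,clΩ}`, `f∘T_𝒬 ∈ L_p(O_ε(∂Ω))`, and the
variational condition holds for cubes contained in `O_ε(∂Ω)` with some `λ > 0`; moreover
`inf ‖F‖_{W¹_p(Ω)} ∼ ‖f∘T_𝒬‖_{L_p(O_ε(∂Ω))} + inf λ^{1/p}`, with constants of
equivalence depending only on `n`, `p`, `ε`, `θ` and `η`. -/
theorem statement1 (n : ℕ) (hn : 0 < n) (p ε θ η : ℝ)
    (hp : (n:ℝ) < p) (hε : 0 < ε) (hθ : 1 < θ) (hη : 22 * θ ^ 2 ≤ η) :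
    ∃ C : ℝ, 1 ≤ C ∧
      ∀ (Ω : Set (Eu n)), IsOpen Ω → IsConnected Ω →
        ∀ α : ℝ, α = (p - n)/(p - 1) → CondA Ω α →
          -- the covering `𝒬` by non-overlapping cubes of Whitney type
          ∀ (c : ℕ → Eu n) (r : ℕ → ℝ),
            (∀ i, 0 < r i) → (∀ i, cube (c i) (r i) ⊆ Ω) →
            (Ω ⊆ ⋃ i, cube (c i) (r i)) →
            (∀ i j, i ≠ j →
              Disjoint (interior (cube (c i) (r i))) (interior (cube (c j) (r j)))) →
            (∀ i, (1/θ) * (2 * r i) ≤ setDistS (cube (c i) (r i)) (frontier Ω) ∧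
              setDistS (cube (c i) (r i)) (frontier Ω) ≤ θ * (2 * r i)) →
            -- the nearest points `a_Q` and the map `T_𝒬`
            ∀ a : ℕ → Eu n,
              (∀ i, a i ∈ frontier Ω ∧ ∀ b ∈ frontier Ω,
                Metric.infDist (a i) (cube (c i) (r i)) ≤
                  Metric.infDist b (cube (c i) (r i))) →
              ∀ T : Eu n → Eu n,
                (∀ i, ∀ x ∈ interior (cube (c i) (r i)), T x = a i) →
                ∀ f : Eu n → ℝ,
                  -- the trace criterion
                  ((∃ F g, ContW1pRep Ω p F g ∧ TraceEq Ω α F f) ↔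
                    (ContWrtDBar Ω α f ∧
                      IntegrableOn (fun x => |f (T x)| ^ p) (Oeps Ω ε) volume ∧
                      ∃ lam : ℝ, 0 < lam ∧ VarCondOn Ω (Oeps Ω ε) α p η lam f)) ∧
                  -- `‖f∘T‖_{L_p(O_ε)} + inf λ^{1/p} ≤ C · inf ‖F‖_{W¹_p(Ω)}`
                  (∀ F g, ContW1pRep Ω p F g → TraceEq Ω α F f →
                    IntegrableOn (fun x => |f (T x)| ^ p) (Oeps Ω ε) volume ∧
                    ∃ lam : ℝ, 0 ≤ lam ∧ VarCondOn Ω (Oeps Ω ε) α p η lam f ∧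
                      (∫ x in Oeps Ω ε, |f (T x)| ^ p) ^ (1/p) + lam ^ (1/p) ≤
                        C * W1pNorm Ω p F g) ∧
                  -- `inf ‖F‖_{W¹_p(Ω)} ≤ C · (‖f∘T‖_{L_p(O_ε)} + inf λ^{1/p})`
                  (∀ lam : ℝ, 0 < lam → ContWrtDBar Ω α f →
                    IntegrableOn (fun x => |f (T x)| ^ p) (Oeps Ω ε) volume →
                    VarCondOn Ω (Oeps Ω ε) α p η lam f →
                    ∃ F g, ContW1pRep Ω p F g ∧ TraceEq Ω α F f ∧
                      W1pNorm Ω p F g ≤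
                        C * ((∫ x in Oeps Ω ε, |f (T x)| ^ p) ^ (1/p) + lam ^ (1/p))) := by
  have hn1 : (1 : ℝ) ≤ n := by exact_mod_cast hn
  have hp1 : 1 ≤ p := by linarith
  have hη1 : 1 ≤ η := by nlinarith
  have hδ : 0 < del θ := by unfold del; positivity
  obtain ⟨K, ψ, hψ⟩ := exists_bump n hδ
  set L := |lpC n p θ ε| with hL
  set V := |2 ^ p * oscC n p η * maxC n η (p / qq n p)| with hV
  set A := |extA n p θ| with hA
  set B := |extB n p θ ε K| with hB
  have hL0 : 0 ≤ L := abs_nonneg _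
  have hV0 : 0 ≤ V := abs_nonneg _
  have hA0 : 0 ≤ A := abs_nonneg _
  have hB0 : 0 ≤ B := abs_nonneg _
  refine ⟨1 + (L ^ (1 / p) + V ^ (1 / p)) + (A ^ (1 / p) + B ^ (1 / p)), ?_, ?_⟩
  · have : 0 ≤ (L ^ (1 / p) + V ^ (1 / p)) + (A ^ (1 / p) + B ^ (1 / p)) := by positivity
    linarith
  intro Ω hΩ hconn α hα _ c r hr hsub hcov hdisj hwh a ha T hT f
  have W := whit_of hΩ hθ hr hsub hcov hdisj hwh ha
  have hα0 : 0 < α := by rw [hα]; exact div_pos (by linarith) (by linarith)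
  have hα1 : α ≤ 1 := by
    rw [hα, div_le_one (by linarith)]; linarith
  have nec : ∀ F g, ContW1pRep Ω p F g → TraceEq Ω α F f →
      IntegrableOn (fun x => |f (T x)| ^ p) (Oeps Ω ε) volume ∧
      ∃ lam : ℝ, 0 ≤ lam ∧ VarCondOn Ω (Oeps Ω ε) α p η lam f ∧
        (∫ x in Oeps Ω ε, |f (T x)| ^ p) ^ (1/p) + lam ^ (1/p) ≤
          (1 + (L ^ (1 / p) + V ^ (1 / p)) + (A ^ (1 / p) + B ^ (1 / p))) *
            W1pNorm Ω p F g := by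
    intro F g hF hf
    set X := ∫ z in Ω, |F z| ^ p with hX
    set Y := ∫ z in Ω, ‖g z‖ ^ p with hY
    have hX0 : 0 ≤ X := integral_nonneg fun _ => Real.rpow_nonneg (abs_nonneg _) _
    have hY0 : 0 ≤ Y := integral_nonneg fun _ => Real.rpow_nonneg (norm_nonneg _) _
    obtain ⟨h1, h2⟩ := lp_trace hn W hT hp hε hα0 hα1 hF hf
    have h3 := varCond_of_trace hn (S := Oeps Ω ε) hp hΩ hη1 hα0 hα1 hF.1 hf
    refine ⟨h1, V * Y, by positivity,
      h3.mono (mul_le_mul_of_nonneg_right (le_abs_self _) hY0), ?_⟩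
    have h4 := root_le hp1 hL0 hX0 hY0
      (integral_nonneg fun _ => Real.rpow_nonneg (abs_nonneg _) _)
      (h2.trans (mul_le_mul_of_nonneg_right (le_abs_self _) (by positivity)))
    rw [Real.mul_rpow hV0 hY0]
    have hw : W1pNorm Ω p F g = X ^ (1 / p) + Y ^ (1 / p) := rfl
    have hX1 : 0 ≤ X ^ (1 / p) := by positivity
    have hY1 : 0 ≤ Y ^ (1 / p) := by positivity
    have hV1 : 0 ≤ V ^ (1 / p) := by positivity
    have h5 : 0 ≤ (1 + (A ^ (1 / p) + B ^ (1 / p))) * (X ^ (1 / p) + Y ^ (1 / p)) := by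
      positivity
    have h6 : 0 ≤ V ^ (1 / p) * X ^ (1 / p) := by positivity
    rw [hw]
    linarith
  have suf : ∀ lam : ℝ, 0 < lam → ContWrtDBar Ω α f →
      IntegrableOn (fun x => |f (T x)| ^ p) (Oeps Ω ε) volume →
      VarCondOn Ω (Oeps Ω ε) α p η lam f →
      ∃ F g, ContW1pRep Ω p F g ∧ TraceEq Ω α F f ∧
        W1pNorm Ω p F g ≤ (1 + (L ^ (1 / p) + V ^ (1 / p)) + (A ^ (1 / p) + B ^ (1 / p))) *
          ((∫ x in Oeps Ω ε, |f (T x)| ^ p) ^ (1/p) + lam ^ (1/p)) := by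
    intro lam hlam hf hi hvar
    obtain ⟨F, g, hF, htr, h1, h2⟩ :=
      extension W hψ hconn hT hp hε hη hα0 hα1 hlam.le hf hi hvar
    refine ⟨F, g, hF, htr, ?_⟩
    set I := ∫ x in Oeps Ω ε, |f (T x)| ^ p with hI
    have hI0 : 0 ≤ I := integral_nonneg fun _ => Real.rpow_nonneg (abs_nonneg _) _
    have h3 := root_le hp1 hA0 hI0 hlam.le
      (integral_nonneg fun _ => Real.rpow_nonneg (abs_nonneg _) _)
      (h1.trans ((mul_le_mul_of_nonneg_right (le_abs_self _) hI0).trans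
        (mul_le_mul_of_nonneg_left (by linarith : I ≤ I + lam) hA0)))
    have h4 := root_le hp1 hB0 hI0 hlam.le
      (integral_nonneg fun _ => Real.rpow_nonneg (norm_nonneg _) _)
      (h2.trans (mul_le_mul_of_nonneg_right (le_abs_self _) (by positivity)))
    have h5 : 0 ≤ (1 + (L ^ (1 / p) + V ^ (1 / p))) * (I ^ (1 / p) + lam ^ (1 / p)) := by
      positivity
    unfold W1pNorm
    linarith
  refine ⟨⟨?_, ?_⟩, nec, suf⟩
  · rintro ⟨F, g, hF, hf⟩
    obtain ⟨h1, lam, h2, h3, -⟩ := nec F g hF hf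
    exact ⟨W.contWrtDBar hn hconn hp hα hF.1 hf, h1, lam + 1, by linarith,
      h3.mono (by linarith)⟩
  · rintro ⟨h1, h2, lam, h3, h4⟩
    obtain ⟨F, g, hF, hf, -⟩ := suf lam h3 h1 h2 h4
    exact ⟨F, g, hF, hf⟩
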